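/- arXiv:math/9803067 — 3 statements merged into one kernel-verified Lean document; each statement's English description precedes it below -/
import Mathlib

section
/- 16·Re Li₅((1+i)/2) − (5/2)·Li₅(1/2) + (log⁵2)/60 − (5 π² log³2)/288 + (343 π⁴ log 2)/11520 = (2139/256)·ζ(5). (This is the ladder relation B̃₅ = (69/8)·λ(5), with λ(5) = (31/32)ζ(5), proved via the hypergeometric expansion of the generating function of Re{2^{n−1} Li_n((1+i)/2)}.) -/
/-!
For a constant `κ` put `Φ κ x = Li₅(f) + x Li₄(f) + x²/2 Li₃(f) + x³/6 Li₂(f)` with `f = κ e⁻ˣ`.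
The derivative of `Φ κ` collapses to `log (1 - f) x³ / 6`. If `x` is an integral linear combination
of `log s`, `log (1 + is)`, `log (1 - is)` and if `1 - f` is a product of powers of `s`, `1 ± is`,
`1 ± s` and the constants `1 ± i`, the derivative of `s ↦ Re Φ κ (x s)` is therefore a polynomial in
the logarithms of these quantities and in the derivatives of the first three.

There are twenty such terms (`table`, `d15`, `d19`) and rational coefficients for which the sum of
these derivatives involves no `log (1 ± s)` and is the derivative of the real part of an explicit
polynomial `Pc` in `log s`, `log (1 ± is)`; this is `sum_F'`, an identity of polynomials.
Consequently the combination of the terms minus `Re Pc` is constant on `(0, 1]`, and comparing the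
limit at `0` with the value at `1` gives `master`: a linear relation between `Re Li₅((1+i)/2)`,
`Li₅(1/2)`, values of `Li₅` at fourth roots of unity, and products of lower weight.

All arguments stay in the closed unit disc, where the series defining `Li` converges, except those
of `d15` and `d19`, which leave it at `s = 1/√3` and `s = 2 - √3`. From there on these two terms are
replaced by the terms `e15`, `e19` with the inverse argument, which have the same derivative up to
the inversion polynomial `Qinv` (`crossing`). At the crossing points the arguments are
`e^{-iπ/3}` and `e^{iπ/3}`, and in the difference only `Re Li₂`, `Im Li₃`, `Re Li₄` survive, which
are values of Bernoulli polynomials (`F_sub_F`).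

The products of lower weight are evaluated with Euler's reflection formula for `Li₂(1/2)`,
Landen's relation for `Li₃(1/2)` and `Re Li₃((1+i)/2)` (`landen`), and duplication and Bernoulli
polynomials for the values at roots of unity.
-/

open Complex

/-- The polylogarithm `Li n z = ∑_{k ≥ 1} z^k / k^n`. -/
noncomputable def Li (n : ℕ) (z : ℂ) : ℂ := ∑' k : ℕ, z ^ (k + 1) / ((k + 1 : ℕ) : ℂ) ^ n

/-- `ζ(5) = ∑_{k ≥ 1} 1/k⁵`. -/
noncomputable def zeta5 : ℝ := ∑' k : ℕ, (1 : ℝ) / ((k + 1 : ℕ) : ℝ) ^ 5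

/-! ### Polylogarithms in the closed unit disc -/

open Filter Topology Metric Set

lemma norm_Li_term_le {n : ℕ} (hn : 2 ≤ n) {z : ℂ} (hz : ‖z‖ ≤ 1) (k : ℕ) :
    ‖z ^ (k + 1) / ((k + 1 : ℕ) : ℂ) ^ n‖ ≤ 1 / ((k + 1 : ℕ) : ℝ) ^ 2 := by
  rw [norm_div, norm_pow, norm_pow, Complex.norm_natCast]
  have h1 : (1 : ℝ) ≤ ((k + 1 : ℕ) : ℝ) := by exact_mod_cast Nat.le_add_left 1 k
  gcongr
  exact pow_le_one₀ (norm_nonneg _) hz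

lemma summable_succ_sq : Summable fun k : ℕ => 1 / ((k + 1 : ℕ) : ℝ) ^ 2 :=
  (summable_nat_add_iff 1).2 (Real.summable_one_div_nat_pow.2 one_lt_two)

lemma summable_Li {n : ℕ} (hn : 2 ≤ n) {z : ℂ} (hz : ‖z‖ ≤ 1) :
    Summable fun k : ℕ => z ^ (k + 1) / ((k + 1 : ℕ) : ℂ) ^ n :=
  Summable.of_norm_bounded summable_succ_sq fun k => norm_Li_term_le hn hz k

lemma continuousOn_Li {n : ℕ} (hn : 2 ≤ n) : ContinuousOn (Li n) (closedBall 0 1) := by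
  refine continuousOn_tsum (fun k => by fun_prop) summable_succ_sq fun k z hz => ?_
  exact norm_Li_term_le hn (by simpa using hz) k

/-- On the closed disc the polylogarithm of order at least two is `O(z)`. -/
lemma norm_Li_le {n : ℕ} (hn : 2 ≤ n) {z : ℂ} (hz : ‖z‖ ≤ 1) : ‖Li n z‖ ≤ 2 * ‖z‖ := by
  have h0 : ∀ k : ℕ, ‖z ^ (k + 1) / ((k + 1 : ℕ) : ℂ) ^ n‖ ≤ ‖z‖ * (1 / ((k + 1 : ℕ) : ℝ) ^ 2) := by
    intro k
    have := norm_Li_term_le hn hz k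
    have h1 : (1 : ℝ) ≤ ((k + 1 : ℕ) : ℝ) := by exact_mod_cast Nat.le_add_left 1 k
    rw [norm_div, norm_pow, norm_pow, Complex.norm_natCast, pow_succ, mul_one_div]
    gcongr
    exact mul_le_of_le_one_left (norm_nonneg _) (pow_le_one₀ (norm_nonneg _) hz)
  have h2 : HasSum (fun k : ℕ => 1 / ((k + 1 : ℕ) : ℝ) ^ 2) (Real.pi ^ 2 / 6) := by
    have := (hasSum_nat_add_iff' 1).2 hasSum_zeta_two
    simpa using this
  have h3 : ‖Li n z‖ ≤ ‖z‖ * (Real.pi ^ 2 / 6) :=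
    tsum_of_norm_bounded (h2.mul_left ‖z‖) h0
  have : Real.pi ^ 2 / 6 ≤ 2 := by nlinarith [Real.pi_lt_d2, Real.pi_pos]
  nlinarith [norm_nonneg z]

/-- Inside the disc, `Li₁ z = -log (1 - z)`. -/
lemma Li_one {z : ℂ} (hz : ‖z‖ < 1) : Li 1 z = -log (1 - z) := by
  have := (hasSum_nat_add_iff' 1).2 (Complex.hasSum_taylorSeries_neg_log hz)
  simp only [Finset.range_one, Finset.sum_singleton, pow_zero, Nat.cast_zero, div_zero,
    sub_zero] at this
  rw [← this.tsum_eq, Li]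
  simp

lemma hasDerivAt_Li_tsum {n : ℕ} {z : ℂ} (hz : ‖z‖ < 1) :
    HasDerivAt (Li (n + 1)) (∑' k : ℕ, z ^ k / ((k + 1 : ℕ) : ℂ) ^ n) z := by
  obtain ⟨r, hr, hr1⟩ := exists_between hz
  have hr0 : 0 < r := (norm_nonneg z).trans_lt hr
  refine hasDerivAt_tsum_of_isPreconnected (u := fun k : ℕ => r ^ k)
    (summable_geometric_of_lt_one hr0.le hr1) (t := ball 0 r) isOpen_ball
    (convex_ball _ _).isPreconnected
    (g := fun (k : ℕ) (w : ℂ) => w ^ (k + 1) / ((k + 1 : ℕ) : ℂ) ^ (n + 1))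
    (g' := fun (k : ℕ) (w : ℂ) => w ^ k / ((k + 1 : ℕ) : ℂ) ^ n) ?_ ?_ (y₀ := 0) (by simpa) ?_
    (by simpa using hr)
  · intro k w _
    have h := (hasDerivAt_pow (k + 1) w).div_const (((k + 1 : ℕ) : ℂ) ^ (n + 1))
    refine h.congr_deriv ?_
    have : ((k + 1 : ℕ) : ℂ) ≠ 0 := Nat.cast_ne_zero.2 k.succ_ne_zero
    rw [Nat.add_sub_cancel, pow_succ ((k + 1 : ℕ) : ℂ) n]
    field_simp
  · intro k w hw
    have hw' : ‖w‖ < r := by simpa using hw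
    rw [norm_div, norm_pow, norm_pow, Complex.norm_natCast]
    have h1 : (1 : ℝ) ≤ ((k + 1 : ℕ) : ℝ) := by exact_mod_cast Nat.le_add_left 1 k
    refine (div_le_self (by positivity) (one_le_pow₀ h1)).trans ?_
    gcongr
  · simp

lemma hasDerivAt_Li {n : ℕ} {z : ℂ} (hz : ‖z‖ < 1) (hz0 : z ≠ 0) :
    HasDerivAt (Li (n + 1)) (Li n z / z) z := by
  convert hasDerivAt_Li_tsum hz using 1
  rw [Li, div_eq_iff hz0, ← tsum_mul_right]
  exact tsum_congr fun k => by ring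

lemma one_sub_mem_slitPlane {z : ℂ} (hz : ‖z‖ ≤ 1) (h1 : z ≠ 1) : 1 - z ∈ slitPlane := by
  rw [mem_slitPlane_iff]
  by_contra! h
  have hre : z.re = 1 := le_antisymm ((re_le_norm z).trans hz) (by simpa using h.1)
  exact h1 (Complex.ext hre (by simpa using h.2))

/-- The derivative of a function holomorphic in the disc extends to those boundary points at which
the function and its derivative extend continuously. -/
lemma hasDerivWithinAt_closedBall {F G : ℂ → ℂ} (hF : ContinuousOn F (closedBall 0 1))
    (hd : ∀ w : ℂ, ‖w‖ < 1 → w ≠ 0 → HasDerivAt F (G w) w) {z : ℂ} (h0 : z ≠ 0)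
    (hF0 : DifferentiableAt ℂ F 0)
    (hG : ContinuousWithinAt G (ball 0 1) z) :
    HasDerivWithinAt F (G z) (closedBall 0 1) z := by
  have hb : closure (ball (0 : ℂ) 1) = closedBall 0 1 := closure_ball _ one_ne_zero
  have h := hasFDerivWithinAt_closure_of_tendsto_fderiv (f := F) (s := ball (0 : ℂ) 1) (x := z)
    (f' := (ContinuousLinearMap.toSpanSingleton ℂ (G z)).restrictScalars ℝ) ?_
    (convex_ball _ _) isOpen_ball ?_ ?_
  · rw [hb] at h
    rw [hasDerivWithinAt_iff_hasFDerivWithinAt]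
    exact .of_isLittleO h.isLittleO
  · intro w hw
    rcases eq_or_ne w 0 with rfl | hw0
    · exact (hF0.restrictScalars ℝ).differentiableWithinAt
    · exact ((hd w (by simpa using hw) hw0).differentiableAt.restrictScalars ℝ).differentiableWithinAt
  · rw [hb]
    exact fun w hw => (hF w hw).mono ball_subset_closedBall
  · have hc : Continuous fun c : ℂ =>
        (ContinuousLinearMap.toSpanSingleton ℂ c).restrictScalars ℝ :=
      (ContinuousLinearMap.restrictScalarsL ℂ ℂ ℂ ℝ ℝ).continuous.comp
        (ContinuousLinearMap.toSpanSingletonCLE (𝕜 := ℂ) (E := ℂ)).continuous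
    refine ((hc.tendsto (G z)).comp hG).congr' ?_
    filter_upwards [self_mem_nhdsWithin, mem_nhdsWithin_of_mem_nhds (isOpen_ne.mem_nhds h0)]
      with w hw hw0
    exact ((hd w (by simpa using hw) hw0).hasFDerivAt.restrictScalars ℝ).fderiv.symm

lemma differentiableAt_Li_zero (n : ℕ) : DifferentiableAt ℂ (Li (n + 1)) 0 :=
  (hasDerivAt_Li_tsum (by simp)).differentiableAt

lemma hasDerivWithinAt_Li {n : ℕ} (hn : 2 ≤ n) {z : ℂ} (hz : ‖z‖ ≤ 1) (h0 : z ≠ 0) :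
    HasDerivWithinAt (Li (n + 1)) (Li n z / z) (closedBall 0 1) z :=
  hasDerivWithinAt_closedBall (G := fun z => Li n z / z) (continuousOn_Li (by lia))
    (fun w hw hw0 => hasDerivAt_Li hw hw0) h0 (differentiableAt_Li_zero _)
    ((((continuousOn_Li hn) z (by simpa using hz)).mono ball_subset_closedBall).div
      continuousWithinAt_id h0)

lemma hasDerivWithinAt_Li_two {z : ℂ} (hz : ‖z‖ ≤ 1) (h0 : z ≠ 0) (h1 : z ≠ 1) :
    HasDerivWithinAt (Li 2) (-log (1 - z) / z) (closedBall 0 1) z := by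
  refine hasDerivWithinAt_closedBall (G := fun z => -log (1 - z) / z) (continuousOn_Li le_rfl)
    (fun w hw hw0 => ?_) h0 (differentiableAt_Li_zero _) ?_
  · rw [← Li_one hw]
    exact hasDerivAt_Li hw hw0
  · refine ContinuousAt.continuousWithinAt ?_
    have := one_sub_mem_slitPlane hz h1
    have h2 : ContinuousAt (fun z : ℂ => log (1 - z)) z :=
      ContinuousAt.clog (by fun_prop) this
    exact h2.neg.div continuousAt_id h0

/-! ### The function `Φ` and the logarithmic letters -/

/-- The weight five function `Φ κ x`. Multiplying `Li₅₋ⱼ(κ e⁻ˣ)` by `xʲ / j!` makes all but the last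
term of its derivative cancel, see `hasDerivWithinAt_Phi`. -/
noncomputable def Phi (κ x : ℂ) : ℂ :=
  Li 5 (κ * exp (-x)) + Li 4 (κ * exp (-x)) * x + Li 3 (κ * exp (-x)) * x ^ 2 / 2
    + Li 2 (κ * exp (-x)) * x ^ 3 / 6

/-- The weight three analogue of `Phi`. -/
noncomputable def Phi3 (κ x : ℂ) : ℂ :=
  Li 3 (κ * exp (-x)) + Li 2 (κ * exp (-x)) * x

/-- The set of `x` for which the argument `κ e^{-x}` is in the closed disc. -/
def dom (κ : ℂ) : Set ℂ := {x | ‖κ * exp (-x)‖ ≤ 1}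

lemma mapsTo_dom (κ : ℂ) : MapsTo (fun x => κ * exp (-x)) (dom κ) (closedBall 0 1) :=
  fun x hx => by simpa [dom] using hx

lemma hasDerivAt_arg (κ x : ℂ) :
    HasDerivAt (fun x => κ * exp (-x)) (-(κ * exp (-x))) x := by
  have := ((hasDerivAt_id x).neg.cexp).const_mul κ
  refine this.congr_deriv ?_
  simp

lemma hasDerivWithinAt_Li_exp {n : ℕ} (hn : 2 ≤ n) {κ x : ℂ} (hκ : κ ≠ 0) (hx : x ∈ dom κ) :
    HasDerivWithinAt (fun x => Li (n + 1) (κ * exp (-x))) (-Li n (κ * exp (-x))) (dom κ) x := by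
  have h0 : κ * exp (-x) ≠ 0 := mul_ne_zero hκ (exp_ne_zero _)
  have := (hasDerivWithinAt_Li hn hx h0).comp x (hasDerivAt_arg κ x).hasDerivWithinAt
    (mapsTo_dom κ)
  refine this.congr_deriv ?_
  field_simp

lemma hasDerivWithinAt_Li_two_exp {κ x : ℂ} (hκ : κ ≠ 0) (hx : x ∈ dom κ)
    (h1 : κ * exp (-x) ≠ 1) :
    HasDerivWithinAt (fun x => Li 2 (κ * exp (-x))) (log (1 - κ * exp (-x))) (dom κ) x := by
  have h0 : κ * exp (-x) ≠ 0 := mul_ne_zero hκ (exp_ne_zero _)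
  have := (hasDerivWithinAt_Li_two hx h0 h1).comp x (hasDerivAt_arg κ x).hasDerivWithinAt
    (mapsTo_dom κ)
  refine this.congr_deriv ?_
  field_simp

lemma hasDerivWithinAt_Phi {κ x : ℂ} (hκ : κ ≠ 0) (hx : x ∈ dom κ) (h1 : κ * exp (-x) ≠ 1) :
    HasDerivWithinAt (Phi κ) (log (1 - κ * exp (-x)) * x ^ 3 / 6) (dom κ) x := by
  have d5 := hasDerivWithinAt_Li_exp (n := 4) (by norm_num) hκ hx
  have d4 := hasDerivWithinAt_Li_exp (n := 3) (by norm_num) hκ hx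
  have d3 := hasDerivWithinAt_Li_exp (n := 2) (by norm_num) hκ hx
  have d2 := hasDerivWithinAt_Li_two_exp hκ hx h1
  have i1 := hasDerivWithinAt_id x (dom κ)
  refine (((d5.add (d4.mul i1)).add ((d3.mul (i1.pow 2)).div_const 2)).add
    ((d2.mul (i1.pow 3)).div_const 6)).congr_deriv ?_
  simp only [id]
  norm_num
  ring

lemma hasDerivWithinAt_Phi3 {κ x : ℂ} (hκ : κ ≠ 0) (hx : x ∈ dom κ) (h1 : κ * exp (-x) ≠ 1) :
    HasDerivWithinAt (Phi3 κ) (log (1 - κ * exp (-x)) * x) (dom κ) x := by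
  have d3 := hasDerivWithinAt_Li_exp (n := 2) (by norm_num) hκ hx
  have d2 := hasDerivWithinAt_Li_two_exp hκ hx h1
  have i1 := hasDerivWithinAt_id x (dom κ)
  refine (d3.add (d2.mul i1)).congr_deriv ?_
  simp only [id]
  ring

lemma continuousOn_Li_exp {n : ℕ} (hn : 2 ≤ n) (κ : ℂ) :
    ContinuousOn (fun x => Li n (κ * exp (-x))) (dom κ) :=
  (continuousOn_Li hn).comp (by fun_prop) (mapsTo_dom κ)

lemma continuousOn_Phi (κ : ℂ) : ContinuousOn (Phi κ) (dom κ) := by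
  have d5 := continuousOn_Li_exp (n := 5) (by norm_num) κ
  have d4 := continuousOn_Li_exp (n := 4) (by norm_num) κ
  have d3 := continuousOn_Li_exp (n := 3) (by norm_num) κ
  have d2 := continuousOn_Li_exp (n := 2) (by norm_num) κ
  unfold Phi
  fun_prop

lemma continuousOn_Phi3 (κ : ℂ) : ContinuousOn (Phi3 κ) (dom κ) := by
  have d3 := continuousOn_Li_exp (n := 3) (by norm_num) κ
  have d2 := continuousOn_Li_exp (n := 2) (by norm_num) κ
  unfold Phi3
  fun_prop

lemma hasDerivWithinAt_curve {F : ℂ → ℂ} {κ d : ℂ} {x : ℝ → ℂ} {x' : ℂ} {S : Set ℝ} {s : ℝ}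
    (hF : HasDerivWithinAt F d (dom κ) (x s)) (hx : HasDerivWithinAt x x' S s)
    (hS : ∀ y ∈ S, x y ∈ dom κ) :
    HasDerivWithinAt (fun y => F (x y)) (d * x') S s := by
  have := hF.scomp s hx hS
  rwa [smul_eq_mul, mul_comm] at this

lemma log_eq_of_exp {w v : ℂ} (h : exp w = v) (h1 : |w.im| < Real.pi) : log v = w := by
  rw [← h, log_exp (by linarith [(abs_lt.1 h1).1]) (abs_lt.1 h1).2.le]

/-- `log s` as a complex number. -/
noncomputable def lL (s : ℝ) : ℂ := (Real.log s : ℂ)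

/-- `log (1 + i s)`, in terms of the real logarithm and `arctan`. -/
noncomputable def lA (s : ℝ) : ℂ := ((Real.log (1 + s ^ 2) / 2 : ℝ) : ℂ) + (Real.arctan s : ℂ) * I

/-- `log (1 - i s)`, in terms of the real logarithm and `arctan`. -/
noncomputable def lB (s : ℝ) : ℂ := ((Real.log (1 + s ^ 2) / 2 : ℝ) : ℂ) - (Real.arctan s : ℂ) * I

/-- `log (1 - s)`. -/
noncomputable def lM (s : ℝ) : ℂ := (Real.log (1 - s) : ℂ)

/-- `log (1 + s)`. -/
noncomputable def lN (s : ℝ) : ℂ := (Real.log (1 + s) : ℂ)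

/-- `log (1 + i)`. -/
noncomputable def wP : ℂ := ((Real.log 2 / 2 : ℝ) : ℂ) + ((Real.pi / 4 : ℝ) : ℂ) * I

/-- `log (1 - i)`. -/
noncomputable def wM : ℂ := ((Real.log 2 / 2 : ℝ) : ℂ) - ((Real.pi / 4 : ℝ) : ℂ) * I

lemma conj_lA (s : ℝ) : (starRingEnd ℂ) (lA s) = lB s := by
  simp only [lA, lB, map_add, map_mul, conj_ofReal, conj_I]; ring
lemma conj_lB (s : ℝ) : (starRingEnd ℂ) (lB s) = lA s := by
  simp only [lA, lB, map_sub, map_mul, conj_ofReal, conj_I]; ring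
lemma conj_lL (s : ℝ) : (starRingEnd ℂ) (lL s) = lL s := by simp [lL]
lemma conj_lM (s : ℝ) : (starRingEnd ℂ) (lM s) = lM s := by simp [lM]
lemma conj_lN (s : ℝ) : (starRingEnd ℂ) (lN s) = lN s := by simp [lN]
lemma conj_wP : (starRingEnd ℂ) wP = wM := by
  simp only [wP, wM, map_add, map_mul, conj_ofReal, conj_I]; ring
lemma conj_wM : (starRingEnd ℂ) wM = wP := by
  simp only [wP, wM, map_sub, map_mul, conj_ofReal, conj_I]; ring

lemma im_lA (s : ℝ) : (lA s).im = Real.arctan s := by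
  simp only [lA, add_im, ofReal_im, mul_im, ofReal_re, I_im, I_re]; ring
lemma im_lB (s : ℝ) : (lB s).im = -Real.arctan s := by
  simp only [lB, sub_im, ofReal_im, mul_im, ofReal_re, I_im, I_re]; ring
lemma re_lA (s : ℝ) : (lA s).re = Real.log (1 + s ^ 2) / 2 := by
  simp only [lA, add_re, ofReal_im, mul_re, ofReal_re, I_im, I_re]; ring
lemma re_lB (s : ℝ) : (lB s).re = Real.log (1 + s ^ 2) / 2 := by
  simp only [lB, sub_re, ofReal_im, mul_re, ofReal_re, I_im, I_re]; ring
lemma im_wP : wP.im = Real.pi / 4 := by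
  simp only [wP, add_im, ofReal_im, mul_im, ofReal_re, I_im, I_re]; ring
lemma im_wM : wM.im = -(Real.pi / 4) := by
  simp only [wM, sub_im, ofReal_im, mul_im, ofReal_re, I_im, I_re]; ring
lemma re_wP : wP.re = Real.log 2 / 2 := by
  simp only [wP, add_re, ofReal_im, mul_re, ofReal_re, I_im, I_re]; ring
lemma re_wM : wM.re = Real.log 2 / 2 := by
  simp only [wM, sub_re, ofReal_im, mul_re, ofReal_re, I_im, I_re]; ring

lemma exp_lA (s : ℝ) : exp (lA s) = 1 + I * s := by
  have h : (0 : ℝ) < 1 + s ^ 2 := by positivity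
  have h2 : Real.exp (Real.log (1 + s ^ 2) / 2) = √(1 + s ^ 2) := by
    rw [← Real.log_sqrt h.le, Real.exp_log (Real.sqrt_pos.2 h)]
  have h3 : √(1 + s ^ 2) ≠ 0 := (Real.sqrt_pos.2 h).ne'
  rw [lA, exp_add, exp_mul_I, ← ofReal_exp, ← ofReal_cos, ← ofReal_sin, h2, Real.cos_arctan,
    Real.sin_arctan]
  rw [mul_add, ← mul_assoc, ← ofReal_mul, ← ofReal_mul, mul_one_div_cancel h3,
    mul_div_cancel₀ _ h3]
  push_cast
  ring

lemma exp_lB (s : ℝ) : exp (lB s) = 1 - I * s := by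
  rw [← conj_lA, exp_conj, exp_lA]
  simp [sub_eq_add_neg]

lemma lA_one : lA 1 = wP := by
  norm_num [lA, wP, Real.arctan_one]

lemma lB_one : lB 1 = wM := by
  norm_num [lB, wM, Real.arctan_one]

lemma exp_wP : exp wP = 1 + I := by
  rw [← lA_one, exp_lA]; simp

lemma exp_wM : exp wM = 1 - I := by
  rw [← lB_one, exp_lB]; simp

lemma exp_lL {s : ℝ} (hs : 0 < s) : exp (lL s) = s := by
  rw [lL, ← ofReal_exp, Real.exp_log hs]

lemma exp_lM {s : ℝ} (hs : s < 1) : exp (lM s) = 1 - s := by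
  rw [lM, ← ofReal_exp, Real.exp_log (by linarith)]; simp

lemma exp_lN {s : ℝ} (hs : 0 < s) : exp (lN s) = 1 + s := by
  rw [lN, ← ofReal_exp, Real.exp_log (by linarith)]; simp

lemma one_add_I_mul_ne (s : ℝ) : (1 + I * s : ℂ) ≠ 0 := by
  rw [← exp_lA]; exact exp_ne_zero _

lemma one_sub_I_mul_ne (s : ℝ) : (1 - I * s : ℂ) ≠ 0 := by
  rw [← exp_lB]; exact exp_ne_zero _

lemma hasDerivAt_lL {s : ℝ} (hs : 0 < s) : HasDerivAt lL (1 / s) s := by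
  have := (Real.hasDerivAt_log hs.ne').ofReal_comp
  refine this.congr_deriv ?_
  simp

lemma hasDerivAt_lN {s : ℝ} (hs : 0 < s) : HasDerivAt lN (1 / (1 + s)) s := by
  have := (((hasDerivAt_id s).const_add 1).log (by simp; linarith)).ofReal_comp
  refine this.congr_deriv ?_
  simp

lemma hasDerivAt_lA (s : ℝ) : HasDerivAt lA (I / (1 + I * s)) s := by
  have h : (0 : ℝ) < 1 + s ^ 2 := by positivity
  have h1 := ((((hasDerivAt_pow 2 s).const_add 1).log h.ne').div_const 2).ofReal_comp
  have h2 := ((Real.hasDerivAt_arctan s).ofReal_comp).mul_const I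
  refine (h1.add h2).congr_deriv ?_
  have h3 := one_add_I_mul_ne s
  have h4 : (1 + s ^ 2 : ℂ) ≠ 0 := by exact_mod_cast h.ne'
  push_cast
  rw [eq_div_iff h3]
  field_simp
  linear_combination (s : ℂ) * I_sq

lemma hasDerivAt_lB (s : ℝ) : HasDerivAt lB (-I / (1 - I * s)) s := by
  have h : (0 : ℝ) < 1 + s ^ 2 := by positivity
  have h1 := ((((hasDerivAt_pow 2 s).const_add 1).log h.ne').div_const 2).ofReal_comp
  have h2 := ((Real.hasDerivAt_arctan s).ofReal_comp).mul_const I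
  refine (h1.sub h2).congr_deriv ?_
  have h3 := one_sub_I_mul_ne s
  have h4 : (1 + s ^ 2 : ℂ) ≠ 0 := by exact_mod_cast h.ne'
  push_cast
  rw [eq_div_iff h3]
  field_simp
  linear_combination (s : ℂ) * I_sq

/-- A logarithm of `s ^ a (1 + is) ^ b (1 - is) ^ c`; it plays the role of `x` in `Phi κ x`. -/
noncomputable def lam (a b c : ℤ) (s : ℝ) : ℂ := a * lL s + b * lA s + c * lB s

/-- The derivative of `lam`. -/
noncomputable def lam' (a b c : ℤ) (s : ℝ) : ℂ :=
  a * (1 / s) + b * (I / (1 + I * s)) + c * (-I / (1 - I * s))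

lemma hasDerivAt_lam (a b c : ℤ) {s : ℝ} (hs : 0 < s) :
    HasDerivAt (lam a b c) (lam' a b c s) s :=
  (((hasDerivAt_lL hs).const_mul _).add ((hasDerivAt_lA s).const_mul _)).add
    ((hasDerivAt_lB s).const_mul _)

/-- A logarithm of `s ^ p (1 + is) ^ q (1 - is) ^ r (1 - s) ^ m (1 + s) ^ n (1 + i) ^ o (1 - i) ^ o'`,
the form that `1 - κ e⁻ˣ` takes for the terms used below. -/
noncomputable def mu (p q r m n o o' : ℤ) (s : ℝ) : ℂ :=
  p * lL s + q * lA s + r * lB s + m * lM s + n * lN s + o * wP + o' * wM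

lemma exp_neg_lam (a b c : ℤ) {s : ℝ} (hs : 0 < s) :
    exp (-lam a b c s) = (s : ℂ) ^ (-a) * (1 + I * s) ^ (-b) * (1 - I * s) ^ (-c) := by
  rw [← exp_lA, ← exp_lB, ← exp_lL hs, ← exp_int_mul, ← exp_int_mul, ← exp_int_mul, ← exp_add,
    ← exp_add, lam]
  congr 1
  push_cast
  ring

lemma exp_mu (p q r m n o o' : ℤ) {s : ℝ} (hs : s ∈ Ioo (0 : ℝ) 1) :
    exp (mu p q r m n o o' s) = (s : ℂ) ^ p * (1 + I * s) ^ q * (1 - I * s) ^ r * (1 - s) ^ m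
      * (1 + s) ^ n * (1 + I) ^ o * (1 - I) ^ o' := by
  rw [← exp_lA, ← exp_lB, ← exp_lM hs.2, ← exp_lN hs.1, ← exp_lL hs.1, ← exp_wP, ← exp_wM]
  simp only [← exp_int_mul, ← exp_add]
  rfl

lemma im_mu (p q r m n o o' : ℤ) (s : ℝ) :
    (mu p q r m n o o' s).im = (q - r) * Real.arctan s + (o - o') * (Real.pi / 4) := by
  simp only [mu, lL, lM, lN, add_im, mul_im, im_lA, im_lB, im_wP, im_wM, ofReal_im, intCast_re,
    intCast_im]
  ring

lemma arctan_mem {s : ℝ} (hs : s ∈ Ioo (0 : ℝ) 1) :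
    0 < Real.arctan s ∧ Real.arctan s < Real.pi / 4 :=
  ⟨Real.arctan_pos.2 hs.1, by rw [← Real.arctan_one]; exact Real.arctan_strictMono hs.2⟩

lemma norm_exp_lam (κ : ℂ) (a b c : ℤ) {s : ℝ} (hs : 0 < s) :
    ‖κ * exp (-lam a b c s)‖ ^ 2 = normSq κ * (s ^ 2) ^ (-a) * (1 + s ^ 2) ^ (-(b + c)) := by
  have h1 : normSq (1 + I * s) = 1 + s ^ 2 := by simp [normSq_apply]; ring
  have h2 : normSq (1 - I * s) = 1 + s ^ 2 := by simp [normSq_apply]; ring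
  have h : (1 + s ^ 2 : ℝ) ≠ 0 := by positivity
  rw [exp_neg_lam a b c hs, ← normSq_eq_norm_sq, normSq_mul, normSq_mul, normSq_mul,
    map_zpow₀, map_zpow₀, map_zpow₀, h1, h2, normSq_ofReal, neg_add, zpow_add₀ h, ← sq]
  ring

lemma mem_dom_lam {κ : ℂ} {a b c : ℤ} {s : ℝ} (hs : 0 < s)
    (h : normSq κ * (s ^ 2) ^ (-a) * (1 + s ^ 2) ^ (-(b + c)) ≤ 1) : lam a b c s ∈ dom κ := by
  rw [← norm_exp_lam κ a b c hs] at h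
  exact (sq_le_one_iff₀ (norm_nonneg _)).1 h

/-- In the derivative of `Φ`, the logarithm `log (1 - κ e⁻ˣ)` may be replaced by any `m` with the
right exponential and `|Im m| < π`. -/
lemma hasDerivWithinAt_term {κ : ℂ} {a b c : ℤ} (m : ℂ) {S : Set ℝ} {s : ℝ}
    (hκ : κ ≠ 0) (hs : 0 < s) (hsS : s ∈ S) (hS : ∀ x ∈ S, lam a b c x ∈ dom κ)
    (hμ : exp m = 1 - κ * exp (-lam a b c s)) (hi : |m.im| < Real.pi) :
    HasDerivWithinAt (fun x => (Phi κ (lam a b c x)).re)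
      ((m * lam a b c s ^ 3 * lam' a b c s / 6).re) S s := by
  have h1 : κ * exp (-lam a b c s) ≠ 1 := by
    intro h
    rw [h, sub_self] at hμ
    exact exp_ne_zero _ hμ
  have := hasDerivWithinAt_curve (hasDerivWithinAt_Phi hκ (hS s hsS) h1)
    (hasDerivAt_lam a b c hs).hasDerivWithinAt hS
  rw [log_eq_of_exp hμ hi] at this
  have h2 := (reCLM.hasFDerivAt.comp_hasDerivWithinAt s this)
  refine h2.congr_deriv ?_
  simp only [reCLM_apply]
  congr 1
  ring

/-! ### The terms of the combination -/


/-- A term of the combination. It enters with coefficient `C`, the argument of its polylogarithms is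
`κ s ^ (-a) (1 + is) ^ (-b) (1 - is) ^ (-c)`, and one minus this argument is the product of
`s`, `1 + is`, `1 - is`, `1 - s`, `1 + s`, `1 + i`, `1 - i` to the powers `p`, `q`, `r`, `m`, `n`, `o`,
`o'` (the relation is imposed in `Datum.Valid`). -/
structure Datum where
  C : ℝ
  κ : ℂ
  (a b c p q r m n o o' : ℤ)

namespace Datum

/-- The variable of `Φ`: the argument of the polylogarithms is `κ e⁻ˣ`. -/
noncomputable def x (d : Datum) : ℝ → ℂ := lam d.a d.b d.c

/-- The derivative of `x`. -/
noncomputable def x' (d : Datum) : ℝ → ℂ := lam' d.a d.b d.c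

/-- The logarithm of `1 - κ e⁻ˣ`. -/
noncomputable def y (d : Datum) : ℝ → ℂ := mu d.p d.q d.r d.m d.n d.o d.o'

/-- The term itself, without its coefficient. -/
noncomputable def F (d : Datum) (s : ℝ) : ℝ := (Phi d.κ (d.x s)).re

/-- The derivative of `F`, wherever the argument stays in the closed unit disc. -/
noncomputable def F' (d : Datum) (s : ℝ) : ℝ := (d.y s * d.x s ^ 3 * d.x' s / 6).re

/-- The two products describing the term add up to one, and `y` is the principal logarithm of the
second one. -/
structure Valid (d : Datum) : Prop where
  ne : d.κ ≠ 0
  compl : ∀ s ∈ Ioo (0 : ℝ) 1, exp (d.y s) = 1 - d.κ * exp (-d.x s)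
  im : ∀ s ∈ Ioo (0 : ℝ) 1, |(d.y s).im| < Real.pi

lemma valid_of (d : Datum) (ne : d.κ ≠ 0)
    (h : ∀ z : ℂ, z ≠ 0 → 1 + I * z ≠ 0 → 1 - I * z ≠ 0 →
      z ^ d.p * (1 + I * z) ^ d.q * (1 - I * z) ^ d.r * (1 - z) ^ d.m * (1 + z) ^ d.n
        * (1 + I) ^ d.o * (1 - I) ^ d.o'
        = 1 - d.κ * (z ^ (-d.a) * (1 + I * z) ^ (-d.b) * (1 - I * z) ^ (-d.c)))
    (im : ∀ θ : ℝ, 0 < θ → θ < Real.pi / 4 →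
      |(d.q - d.r) * θ + (d.o - d.o') * (Real.pi / 4)| < Real.pi) : d.Valid where
  ne := ne
  compl s hs := by
    rw [y, x, exp_mu _ _ _ _ _ _ _ hs, exp_neg_lam _ _ _ hs.1]
    exact h s (ofReal_ne_zero.2 hs.1.ne') (one_add_I_mul_ne s) (one_sub_I_mul_ne s)
  im s hs := by
    rw [y, im_mu]
    exact im _ (arctan_mem hs).1 (arctan_mem hs).2

lemma Valid.hasDerivWithinAt {d : Datum} (h : d.Valid) {S : Set ℝ} {s : ℝ}
    (hs : s ∈ Ioo (0 : ℝ) 1) (hsS : s ∈ S) (hS : ∀ x ∈ S, d.x x ∈ dom d.κ) :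
    HasDerivWithinAt d.F (d.F' s) S s :=
  hasDerivWithinAt_term _ h.ne hs.1 hsS hS (h.compl s hs) (h.im s hs)

lemma continuousOn_F (d : Datum) {S : Set ℝ} (h0 : S ⊆ Ioi 0) (hS : ∀ x ∈ S, d.x x ∈ dom d.κ) :
    ContinuousOn d.F S := by
  have h : ContinuousOn d.x S := fun s hs =>
    (hasDerivAt_lam d.a d.b d.c (h0 hs)).continuousAt.continuousWithinAt
  exact continuous_re.comp_continuousOn ((continuousOn_Phi d.κ).comp h hS)

end Datum

/-- The eighteen terms whose arguments stay in the closed unit disc for `0 < s ≤ 1`. -/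
noncomputable def table : List Datum := [
  ⟨8, 1, 0, 1, 0, 1, -1, 0, 0, 0, 1, -1⟩,
  ⟨8, (1/2), 0, -1, 0, 0, 0, 1, 0, 0, -1, -1⟩,
  ⟨-16, ((1-I)/2), 0, -1, 0, 0, 0, 0, 1, 0, 0, -1⟩,
  ⟨-16, ((1+I)/2), 0, -1, 0, 0, 0, 0, 0, 1, -1, 0⟩,
  ⟨-1/4, 1, 0, 1, 1, 2, -1, -1, 0, 0, 0, 0⟩,
  ⟨1, (1/2), 0, -1, -1, 0, 0, 0, 1, 1, -1, -1⟩,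
  ⟨-1/8, 1, -2, 0, 0, 0, 0, 0, 1, 1, 0, 0⟩,
  ⟨1/16, -1, -2, 0, 0, 0, 1, 1, 0, 0, 0, 0⟩,
  ⟨1/16, 1, 0, 2, -2, 1, -2, 0, 0, 0, 3, 1⟩,
  ⟨-1/8, -1, 0, 2, -2, 0, -2, 0, 1, 1, 1, 1⟩,
  ⟨8, -I, -1, 0, 1, 0, 0, -1, 0, 0, 0, 0⟩,
  ⟨-16, 1-I, -1, 0, 1, 0, 0, -1, 1, 0, 0, 0⟩,
  ⟨-16, -1-I, -1, 0, 1, 0, 0, -1, 0, 1, 0, 0⟩,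
  ⟨2, -I, -1, -1, 1, 0, 0, -1, 1, 1, 0, 0⟩,
  ⟨2, -2*I, -1, 0, 2, 0, 0, -2, 1, 1, 0, 0⟩,
  ⟨-1/16, 4, -2, 2, 2, 0, -2, -2, 2, 2, 0, 0⟩,
  ⟨-1/4, 1, -2, 1, 1, 0, -1, -1, 0, 0, 0, 0⟩,
  ⟨1, 2, -2, 1, 1, 0, -1, -1, 1, 1, 0, 0⟩]

/-- Argument `-2is / (1 - is)`, of modulus at most one only for `s ≤ 1/√3`. -/
noncomputable def d15 : Datum := ⟨8, -2*I, -1, 0, 1, 0, 1, -1, 0, 0, 0, 0⟩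
/-- Argument `-4is / (1 - is)²`, of modulus at most one only for `s ≤ 2 - √3`. -/
noncomputable def d19 : Datum := ⟨-1/2, -4*I, -1, 0, 2, 0, 2, -2, 0, 0, 0, 0⟩
/-- The term whose argument is inverse to that of `d15`. -/
noncomputable def e15 : Datum := ⟨8, I/2, 1, 0, -1, -1, 1, 0, 0, 0, -2, 0⟩
/-- The term whose argument is inverse to that of `d19`. -/
noncomputable def e19 : Datum := ⟨-1/2, I/4, 1, 0, -2, -1, 2, 0, 0, 0, -3, -1⟩

set_option maxHeartbeats 4000000 in
lemma valid_table : ∀ d ∈ d15 :: d19 :: e15 :: e19 :: table, d.Valid := by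
  have hI := I_sq
  have h4 : (1 + I : ℂ) ≠ 0 := by simpa using one_add_I_mul_ne 1
  have h5 : (1 - I : ℂ) ≠ 0 := by simpa using one_sub_I_mul_ne 1
  simp only [table, d15, d19, e15, e19, List.forall_mem_cons, List.not_mem_nil, false_imp_iff,
    implies_true, and_true]
  refine ⟨?_, ?_, ?_, ?_, ?_, ?_, ?_, ?_, ?_, ?_, ?_, ?_, ?_, ?_, ?_, ?_, ?_, ?_, ?_, ?_, ?_,
    ?_⟩
  all_goals
    refine Datum.valid_of _ ?_ (fun z h3 h1 h2 => ?_) fun θ h1 h2 => ?_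
    · simp [Complex.ext_iff]
    · simp only [zpow_neg, one_mul, neg_neg, neg_zero, zpow_ofNat]
      generalize hA : 1 + I * z = a at *
      generalize hB : 1 - I * z = b at *
      generalize hC : 1 + I = c at *
      generalize hD : 1 - I = d at *
      try field_simp
      grind
    · have := Real.pi_pos
      push_cast
      rw [abs_lt]
      constructor <;> linarith

lemma dom_of {d : Datum} {s : ℝ} (hs : 0 < s)
    (h : ∀ x : ℝ, 0 < x → x = s ^ 2 →
      normSq d.κ * x ^ (-d.a) * (1 + x) ^ (-(d.b + d.c)) ≤ 1) :
    d.x s ∈ dom d.κ :=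
  mem_dom_lam hs (h _ (pow_pos hs 2) rfl)

set_option maxHeartbeats 1000000 in
lemma dom_table : ∀ d ∈ table, ∀ s ∈ Ioc (0 : ℝ) 1, d.x s ∈ dom d.κ := by
  intro d hd s hs
  refine dom_of hs.1 fun x h0 h1 => ?_
  replace h1 : x ≤ 1 := h1 ▸ pow_le_one₀ hs.1.le hs.2
  have h2 : 0 < 1 + x := by linarith
  have h3 : 16 * x ^ 2 ≤ (1 + x) ^ 4 := by
    nlinarith [mul_nonneg (sq_nonneg (x - 1)) (by positivity : (0 : ℝ) ≤ x ^ 2 + 6 * x + 1)]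
  revert d
  simp only [table, List.forall_mem_cons, List.not_mem_nil, false_imp_iff,
    implies_true, and_true]
  refine ⟨?_, ?_, ?_, ?_, ?_, ?_, ?_, ?_, ?_, ?_, ?_, ?_, ?_, ?_, ?_, ?_, ?_, ?_⟩
  all_goals
    norm_num [normSq_apply, zpow_neg]
    try field_simp
    first | done | exact abs_le.2 ⟨by linarith, h1⟩ | nlinarith

/-! ### Crossing the unit circle, and the differential identity -/

/-- The primitive of `(k - x) x³ / 6`. With `k = log (-κ)`, the product of `(k - x) x³ / 6` and
`dx/ds` is the derivative of the term with argument `f = κ e⁻ˣ` minus that of the term with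
argument `1 / f`, because `log (1 - 1 / f) = log (1 - f) - log (-f)` and `log (-f) = k - x`. -/
noncomputable def Qinv (k x : ℂ) : ℂ := -x ^ 5 / 30 + k * x ^ 4 / 24

lemma Datum.hasDerivAt_x (d : Datum) {s : ℝ} (hs : 0 < s) : HasDerivAt d.x (d.x' s) s :=
  hasDerivAt_lam _ _ _ hs

lemma hasDerivAt_re {f : ℝ → ℂ} {f' : ℂ} {s : ℝ} (h : HasDerivAt f f' s) :
    HasDerivAt (fun s => (f s).re) f'.re s :=
  reCLM.hasFDerivAt.comp_hasDerivAt s h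

/-- Primitives of `g` on the two sides of `c` glue to a primitive on the whole interval after the
second one is shifted by a constant. -/
lemma glue {F₁ F₂ g : ℝ → ℝ} {c : ℝ} (hc : c ∈ Ioo (0 : ℝ) 1)
    (h₁ : ∀ s ∈ Ioc 0 c, HasDerivWithinAt F₁ (g s) (Ioc 0 c) s)
    (h₂ : ∀ s ∈ Ico c 1, HasDerivWithinAt F₂ (g s) (Icc c 1) s)
    (hF₂ : ContinuousOn F₂ (Icc c 1)) :
    ∃ F : ℝ → ℝ, (∀ s ∈ Ioo (0 : ℝ) 1, HasDerivAt F (g s) s) ∧ ContinuousOn F (Ioc 0 1) ∧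
      (∀ s ∈ Ioc 0 c, F s = F₁ s) ∧ F 1 = F₂ 1 + (F₁ c - F₂ c) := by
  set F : ℝ → ℝ := fun s => if s ≤ c then F₁ s else F₂ s + (F₁ c - F₂ c) with hF
  have e₁ : ∀ s ≤ c, F s = F₁ s := fun s hs => if_pos hs
  have e₂ : ∀ s, c ≤ s → F s = F₂ s + (F₁ c - F₂ c) := by
    intro s hs
    rcases hs.eq_or_lt with rfl | hs
    · simp [hF]
    · exact if_neg hs.not_ge
  have d₁ : ∀ s ∈ Ioc 0 c, HasDerivWithinAt F (g s) (Ioc 0 c) s := fun s hs =>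
    (h₁ s hs).congr (fun x hx => e₁ x hx.2) (e₁ s hs.2)
  have d₂ : ∀ s ∈ Ico c 1, HasDerivWithinAt F (g s) (Icc c 1) s := fun s hs =>
    ((h₂ s hs).add_const (F₁ c - F₂ c)).congr (fun x hx => e₂ x hx.1) (e₂ s hs.1)
  have dF : ∀ s ∈ Ioo (0 : ℝ) 1, HasDerivAt F (g s) s := by
    intro s hs
    rcases lt_trichotomy s c with h | h | h
    · exact (d₁ s ⟨hs.1, h.le⟩).hasDerivAt (Ioc_mem_nhds hs.1 h)
    · have h3 := (d₁ s ⟨hs.1, h.le⟩).union (d₂ s ⟨h.ge, hs.2⟩)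
      refine h3.hasDerivAt ?_
      rw [Ioc_union_Icc_eq_Ioc hc.1 hc.2.le]
      exact Ioc_mem_nhds hs.1 hs.2
    · exact (d₂ s ⟨h.le, hs.2⟩).hasDerivAt (Icc_mem_nhds h hs.2)
  refine ⟨F, dF, ?_, fun s hs => e₁ s hs.2, e₂ 1 hc.2.le⟩
  intro s hs
  rcases hs.2.eq_or_lt with rfl | h
  · have h4 : ContinuousWithinAt F (Icc c 1) 1 :=
      ((hF₂ 1 ⟨hc.2.le, le_rfl⟩).add continuousWithinAt_const).congr
        (fun x hx => e₂ x hx.1) (e₂ 1 hc.2.le)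
    refine h4.mono_of_mem_nhdsWithin ?_
    filter_upwards [self_mem_nhdsWithin, mem_nhdsWithin_of_mem_nhds (Ioi_mem_nhds hc.2)]
      with x hx hx'
    exact ⟨le_of_lt hx', hx.2⟩
  · exact (dF s ⟨hs.1, h⟩).continuousAt.continuousWithinAt

/-- A term `d` whose argument leaves the unit disc at `c` can be continued beyond `c` by the term `e`
with the inverse argument together with the inversion polynomial. -/
lemma crossing (d e : Datum) (k : ℂ) {c : ℝ} (hc : c ∈ Ioo (0 : ℝ) 1) (hd : d.Valid)
    (he : e.Valid) (hx : ∀ s, e.x s = -d.x s) (hx' : ∀ s, e.x' s = -d.x' s)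
    (hy : ∀ s, e.y s = d.y s + d.x s - k) (ld : ∀ s ∈ Ioc 0 c, d.x s ∈ dom d.κ)
    (le : ∀ s ∈ Icc c 1, e.x s ∈ dom e.κ) :
    ∃ F : ℝ → ℝ, (∀ s ∈ Ioo (0 : ℝ) 1, HasDerivAt F (d.F' s) s) ∧ ContinuousOn F (Ioc 0 1) ∧
      (∀ s ∈ Ioc 0 c, F s = d.F s) ∧
      F 1 = e.F 1 + (Qinv k (d.x 1)).re + (d.F c - (e.F c + (Qinv k (d.x c)).re)) := by
  refine glue (F₁ := d.F) (F₂ := fun s => e.F s + (Qinv k (d.x s)).re) hc ?_ ?_ ?_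
  · exact fun s hs => hd.hasDerivWithinAt ⟨hs.1, hs.2.trans_lt hc.2⟩ hs ld
  · intro s hs
    have hs0 : 0 < s := hc.1.trans_le hs.1
    have h1 := he.hasDerivWithinAt (S := Icc c 1) ⟨hs0, hs.2⟩ ⟨hs.1, hs.2.le⟩ le
    have hX := d.hasDerivAt_x hs0
    have h2 : HasDerivAt (fun s => Qinv k (d.x s))
        ((-d.x s ^ 4 / 6 + k * d.x s ^ 3 / 6) * d.x' s) s := by
      refine (((hX.pow 5).neg.div_const 30).add (((hX.pow 4).const_mul k).div_const 24)).congr_deriv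
        ?_
      norm_num
      ring
    refine (h1.add (hasDerivAt_re h2).hasDerivWithinAt).congr_deriv ?_
    rw [Datum.F', Datum.F', ← add_re, hx, hx', hy]
    congr 1
    ring
  · have h0 : Icc c 1 ⊆ Ioi (0 : ℝ) := fun s hs => hc.1.trans_le hs.1
    refine (e.continuousOn_F h0 le).add ?_
    intro s hs
    have := (d.hasDerivAt_x (h0 hs)).continuousAt
    unfold Qinv
    exact (continuous_re.continuousAt.comp (by fun_prop)).continuousWithinAt

lemma c15_mem : (√3)⁻¹ ∈ Ioo (0 : ℝ) 1 := by
  have : (1 : ℝ) < √3 := by rw [Real.lt_sqrt] <;> norm_num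
  exact ⟨by positivity, inv_lt_one_of_one_lt₀ this⟩

lemma c19_mem : 2 - √3 ∈ Ioo (0 : ℝ) 1 := by
  have h1 : (1 : ℝ) < √3 := by rw [Real.lt_sqrt] <;> norm_num
  have h2 : √3 < (2 : ℝ) := by rw [Real.sqrt_lt'] <;> norm_num
  constructor <;> linarith

lemma crossing15 : ∃ F : ℝ → ℝ, (∀ s ∈ Ioo (0 : ℝ) 1, HasDerivAt F (d15.F' s) s) ∧
    ContinuousOn F (Ioc 0 1) ∧ (∀ s ∈ Ioc 0 (√3)⁻¹, F s = d15.F s) ∧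
    F 1 = e15.F 1 + (Qinv (2 * wP) (d15.x 1)).re
      + (d15.F (√3)⁻¹ - (e15.F (√3)⁻¹ + (Qinv (2 * wP) (d15.x (√3)⁻¹)).re)) := by
  have h3 : ((√3)⁻¹ : ℝ) ^ 2 = 1 / 3 := by rw [inv_pow, Real.sq_sqrt] <;> norm_num
  have h0 := c15_mem.1
  refine crossing d15 e15 _ c15_mem (valid_table _ (by simp)) (valid_table _ (by simp)) ?_ ?_ ?_
    ?_ ?_
  · intro s; simp [Datum.x, d15, e15, lam]; ring
  · intro s; simp [Datum.x', d15, e15, lam']; ring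
  · intro s; simp [Datum.x, Datum.y, d15, e15, lam, mu]; ring
  · intro s hs
    refine dom_of hs.1 fun x hx hxs => ?_
    have h2 : 0 < 1 + x := by linarith
    have h4 : s ^ 2 ≤ 1 / 3 := by rw [← h3]; exact pow_le_pow_left₀ hs.1.le hs.2 2
    norm_num [d15, normSq_apply]
    rw [← div_eq_mul_inv, div_le_one h2]
    linarith
  · intro s hs
    refine dom_of (h0.trans_le hs.1) fun x hx hxs => ?_
    have h4 : 1 / 3 ≤ s ^ 2 := by rw [← h3]; exact pow_le_pow_left₀ h0.le hs.1 2
    norm_num [e15, normSq_apply, zpow_neg]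
    field_simp
    linarith

lemma crossing19 : ∃ F : ℝ → ℝ, (∀ s ∈ Ioo (0 : ℝ) 1, HasDerivAt F (d19.F' s) s) ∧
    ContinuousOn F (Ioc 0 1) ∧ (∀ s ∈ Ioc 0 (2 - √3), F s = d19.F s) ∧
    F 1 = e19.F 1 + (Qinv (3 * wP + wM) (d19.x 1)).re
      + (d19.F (2 - √3) - (e19.F (2 - √3) + (Qinv (3 * wP + wM) (d19.x (2 - √3))).re)) := by
  have h3 : (√3 : ℝ) ^ 2 = 3 := Real.sq_sqrt (by norm_num)
  have hc := c19_mem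
  refine crossing d19 e19 _ c19_mem (valid_table _ (by simp)) (valid_table _ (by simp)) ?_ ?_ ?_
    ?_ ?_
  · intro s; simp [Datum.x, d19, e19, lam]; ring
  · intro s; simp [Datum.x', d19, e19, lam']; ring
  · intro s; simp [Datum.x, Datum.y, d19, e19, lam, mu]; ring
  · intro s hs
    refine dom_of hs.1 fun x hx hxs => ?_
    have h2 : 0 < 1 + x := by linarith
    -- `1 - 4 s + s²` vanishes at `2 ± √3`
    have h4 : 4 * s ≤ 1 + s ^ 2 := by
      nlinarith [mul_nonneg (sub_nonneg.2 hs.2) (by linarith [hs.2, hc.2] : 0 ≤ 2 + √3 - s)]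
    norm_num [d19, normSq_apply, zpow_neg]
    field_simp
    rw [hxs]
    nlinarith [hs.1]
  · intro s hs
    have hs0 := hc.1.trans_le hs.1
    refine dom_of hs0 fun x hx hxs => ?_
    have h4 : 1 + s ^ 2 ≤ 4 * s := by
      nlinarith [mul_nonneg (sub_nonneg.2 hs.1) (by linarith [hs.2, hc.2] : 0 ≤ 2 + √3 - s)]
    norm_num [e19, normSq_apply, zpow_neg]
    field_simp
    rw [hxs]
    nlinarith [hs0]

/-- The polynomial in `l = log s`, `A = log (1 + is)`, `B = log (1 - is)` whose real part has the same
derivative as the combination of terms, see `sum_F'`. -/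
noncomputable def Pc (l A B : ℂ) : ℂ :=
  -37 / 60 * (A ^ 5 + B ^ 5) + (A ^ 4 * B + A * B ^ 4) / 4 + (A ^ 3 * B ^ 2 + A ^ 2 * B ^ 3) / 2
  + l * (3 / 4 * (A ^ 4 + B ^ 4) - (A ^ 3 * B + A * B ^ 3) + A ^ 2 * B ^ 2 / 2)
  + (wP + wM) * ((A ^ 4 + B ^ 4) / 8 - (A ^ 3 * B + A * B ^ 3) / 6 - A ^ 2 * B ^ 2 / 4)
  + (wP - wM) / 6 * (A ^ 4 - B ^ 4)

/-- The derivative of `Pc` along a curve with velocity `(l', A', B')`. -/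
noncomputable def Pc' (l A B l' A' B' : ℂ) : ℂ :=
  -37 / 60 * (5 * A ^ 4 * A' + 5 * B ^ 4 * B')
  + (4 * A ^ 3 * B * A' + A ^ 4 * B' + A' * B ^ 4 + 4 * A * B ^ 3 * B') / 4
  + (3 * A ^ 2 * B ^ 2 * A' + 2 * A ^ 3 * B * B' + 2 * A * B ^ 3 * A' + 3 * A ^ 2 * B ^ 2 * B') / 2
  + l' * (3 / 4 * (A ^ 4 + B ^ 4) - (A ^ 3 * B + A * B ^ 3) + A ^ 2 * B ^ 2 / 2)
  + l * (3 * (A ^ 3 * A' + B ^ 3 * B')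
      - (3 * A ^ 2 * B * A' + A ^ 3 * B' + A' * B ^ 3 + 3 * A * B ^ 2 * B')
      + (A * B ^ 2 * A' + A ^ 2 * B * B'))
  + (wP + wM) * ((A ^ 3 * A' + B ^ 3 * B') / 2
      - (3 * A ^ 2 * B * A' + A ^ 3 * B' + A' * B ^ 3 + 3 * A * B ^ 2 * B') / 6
      - (A * B ^ 2 * A' + A ^ 2 * B * B') / 2)
  + (wP - wM) / 6 * (4 * A ^ 3 * A' - 4 * B ^ 3 * B')

lemma hasDerivAt_Pc {l A B : ℝ → ℂ} {l' A' B' : ℂ} {s : ℝ} (hl : HasDerivAt l l' s)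
    (hA : HasDerivAt A A' s) (hB : HasDerivAt B B' s) :
    HasDerivAt (fun s => Pc (l s) (A s) (B s)) (Pc' (l s) (A s) (B s) l' A' B') s := by
  have h := (((((((hA.pow 5).add (hB.pow 5)).const_mul (-37 / 60 : ℂ)).add
    ((((hA.pow 4).mul hB).add (hA.mul (hB.pow 4))).div_const 4)).add
    ((((hA.pow 3).mul (hB.pow 2)).add ((hA.pow 2).mul (hB.pow 3))).div_const 2)).add
    (hl.mul (((((hA.pow 4).add (hB.pow 4)).const_mul (3 / 4 : ℂ)).sub
      (((hA.pow 3).mul hB).add (hA.mul (hB.pow 3)))).add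
      (((hA.pow 2).mul (hB.pow 2)).div_const 2)))).add
    ((((((hA.pow 4).add (hB.pow 4)).div_const 8).sub
      ((((hA.pow 3).mul hB).add (hA.mul (hB.pow 3))).div_const 6)).sub
      (((hA.pow 2).mul (hB.pow 2)).div_const 4)).const_mul (wP + wM))).add
    (((hA.pow 4).sub (hB.pow 4)).const_mul ((wP - wM) / 6))
  refine h.congr_deriv ?_
  simp only [Pc', Pi.pow_apply, Pi.mul_apply, Pi.add_apply, Pi.sub_apply]
  norm_num
  ring

set_option maxHeartbeats 4000000 in
/-- All contributions of `log (1 ± s)` cancel, and what remains is exact. After real parts are written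
as means with complex conjugates, this is an identity of polynomials in the letters and the
derivatives of `log s`, `log (1 ± is)`. -/
lemma sum_F' {s : ℝ} :
    (table.map fun d => d.C * d.F' s).sum + 8 * d15.F' s - d19.F' s / 2
      = (Pc' (lL s) (lA s) (lB s) (1 / s) (I / (1 + I * s)) (-I / (1 - I * s))).re := by
  have hr : ∀ z : ℂ, (z.re : ℂ) = (z + (starRingEnd ℂ) z) / 2 := re_eq_add_conj
  rw [← ofReal_inj]
  simp only [table, d15, d19, List.map_cons, List.map_nil, List.sum_cons, List.sum_nil,
    Datum.F', Datum.x, Datum.y, Datum.x', lam, lam', mu, ofReal_add, ofReal_sub, ofReal_mul,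
    ofReal_div, hr, Pc', map_add, map_sub, map_mul, map_div₀, map_pow, map_neg, map_one, conj_lA,
    conj_lB, conj_lL, conj_lM, conj_lN, conj_wP, conj_wM, conj_I, conj_ofReal, map_ofNat,
    map_intCast, sub_neg_eq_add, neg_neg, neg_mul, ← sub_eq_add_neg, ofReal_neg]
  generalize I / (1 + I * s) = a
  generalize -I / (1 - I * s) = b
  generalize (1 / s : ℂ) = l
  push_cast
  ring

/-! ### The conserved quantity -/

lemma value_at_one {W : ℝ → ℝ} {L : ℝ} (hc : ContinuousOn W (Ioc 0 1))
    (hd : ∀ s ∈ Ioo (0 : ℝ) 1, HasDerivAt W 0 s) (hl : Tendsto W (𝓝[>] 0) (𝓝 L)) : W 1 = L := by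
  refine tendsto_nhds_unique (tendsto_const_nhds.congr' ?_) hl
  filter_upwards [Ioo_mem_nhdsGT (zero_lt_one' ℝ)] with s hs
  obtain ⟨c, _, h⟩ := exists_hasDerivAt_eq_slope W (fun _ => 0) hs.2
    (hc.mono fun x hx => ⟨hs.1.trans_le hx.1, hx.2⟩) fun x hx => hd x ⟨hs.1.trans hx.1, hx.2⟩
  have h1 : (1 : ℝ) - s ≠ 0 := by linarith [hs.2]
  rw [eq_div_iff h1] at h
  linarith

lemma hasDerivAt_sum_F {s : ℝ} {l : List Datum} (h : ∀ d ∈ l, HasDerivAt d.F (d.F' s) s) :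
    HasDerivAt (fun s => (l.map fun d => d.C * d.F s).sum) (l.map fun d => d.C * d.F' s).sum s := by
  induction l with
  | nil => simpa using hasDerivAt_const s (0 : ℝ)
  | cons d l ih =>
    simp only [List.map_cons, List.sum_cons]
    exact ((h d (by simp)).const_mul d.C).add (ih fun e he => h e (by simp [he]))

lemma continuousOn_sum_F {S : Set ℝ} {l : List Datum} (h : ∀ d ∈ l, ContinuousOn d.F S) :
    ContinuousOn (fun s => (l.map fun d => d.C * d.F s).sum) S := by
  induction l with
  | nil => simpa using continuousOn_const
  | cons d l ih =>
    simp only [List.map_cons, List.sum_cons]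
    exact ((h d (by simp)).const_mul d.C).add (ih fun e he => h e (by simp [he]))

lemma tendsto_sum_F {f : Filter ℝ} {L : Datum → ℝ} {l : List Datum}
    (h : ∀ d ∈ l, Tendsto d.F f (𝓝 (L d))) :
    Tendsto (fun s => (l.map fun d => d.C * d.F s).sum) f (𝓝 (l.map fun d => d.C * L d).sum) := by
  induction l with
  | nil => simpa using tendsto_const_nhds
  | cons d l ih =>
    simp only [List.map_cons, List.sum_cons]
    exact ((h d (by simp)).const_mul d.C).add (ih fun e he => h e (by simp [he]))

lemma lA_zero : lA 0 = 0 := by simp [lA]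
lemma lB_zero : lB 0 = 0 := by simp [lB]

lemma tendsto_lA : Tendsto lA (𝓝[>] 0) (𝓝 0) := by
  have := (hasDerivAt_lA 0).continuousAt.tendsto.mono_left (nhdsWithin_le_nhds (s := Ioi 0))
  rwa [lA_zero] at this

lemma tendsto_lB : Tendsto lB (𝓝[>] 0) (𝓝 0) := by
  have := (hasDerivAt_lB 0).continuousAt.tendsto.mono_left (nhdsWithin_le_nhds (s := Ioi 0))
  rwa [lB_zero] at this

lemma tendsto_lL_mul {f : ℝ → ℂ} {f' : ℂ} (h : HasDerivAt f f' 0) (h0 : f 0 = 0) :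
    Tendsto (fun s => lL s * f s) (𝓝[>] 0) (𝓝 0) := by
  have h1 := h.isBigO_sub.mono (nhdsWithin_le_nhds (s := Ioi 0))
  simp only [h0, sub_zero] at h1
  have h2 : (fun s => lL s * f s) =O[𝓝[>] 0] fun s : ℝ => Real.log s * s :=
    (Asymptotics.isBigO_of_le _ fun s => by simp [lL]).mul h1
  refine h2.trans_tendsto ?_
  simpa using tendsto_log_mul_rpow_nhdsGT_zero zero_lt_one

lemma tendsto_Pc : Tendsto (fun s => Pc (lL s) (lA s) (lB s)) (𝓝[>] 0) (𝓝 0) := by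
  have hA := tendsto_lL_mul (hasDerivAt_lA 0) lA_zero
  have hB := tendsto_lL_mul (hasDerivAt_lB 0) lB_zero
  have h := (tendsto_lA.prodMk_nhds tendsto_lB).prodMk_nhds (hA.prodMk_nhds hB)
  -- every monomial of `Pc` containing `l` is a multiple of `l A` or `l B`
  let G : (ℂ × ℂ) × (ℂ × ℂ) → ℂ := fun q => Pc 0 q.1.1 q.1.2
    + 3 / 4 * (q.2.1 * q.1.1 ^ 3 + q.2.2 * q.1.2 ^ 3)
    - (q.2.1 * q.1.1 ^ 2 * q.1.2 + q.2.2 * q.1.2 ^ 2 * q.1.1)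
    + q.2.1 * q.1.1 * q.1.2 ^ 2 / 2
  have hG : Continuous G := by
    simp only [G, Pc]
    fun_prop
  refine ((hG.tendsto' ((0, 0), (0, 0)) 0 (by simp [G, Pc])).comp h).congr fun s => ?_
  simp only [G, Pc, Function.comp]
  ring

lemma tendsto_lL : Tendsto (fun s => (lL s).re) (𝓝[>] 0) atBot := by
  simpa [lL] using Real.tendsto_log_nhdsGT_zero

lemma isClosed_dom (κ : ℂ) : IsClosed (dom κ) :=
  isClosed_le (by fun_prop) continuous_const

/-- Limit at `0` of a term whose argument does not involve `log s`. -/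
lemma Datum.tendsto_F_zero {d : Datum} (ha : d.a = 0) (hS : ∀ s ∈ Ioc 0 1, d.x s ∈ dom d.κ) :
    Tendsto d.F (𝓝[>] 0) (𝓝 (Li 5 d.κ).re) := by
  have hx : Tendsto d.x (𝓝[>] 0) (𝓝 0) := by
    have := (tendsto_lA.const_mul (d.b : ℂ)).add (tendsto_lB.const_mul (d.c : ℂ))
    simp only [mul_zero, add_zero] at this
    refine this.congr fun s => ?_
    simp [Datum.x, lam, ha]
  have hev : ∀ᶠ s in 𝓝[>] 0, d.x s ∈ dom d.κ := by
    filter_upwards [Ioc_mem_nhdsGT (zero_lt_one' ℝ)] with s hs using hS s hs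
  have h0 : (0 : ℂ) ∈ dom d.κ := (isClosed_dom _).mem_of_tendsto hx hev
  have h1 := (continuousOn_Phi d.κ 0 h0).tendsto.comp
    (tendsto_nhdsWithin_iff.2 ⟨hx, hev⟩)
  have h2 : Phi d.κ 0 = Li 5 d.κ := by simp [Phi]
  rw [h2] at h1
  exact (continuous_re.tendsto _).comp h1

/-- Polylogarithms of order at least two are `O(z)` at `0`, hence absorb powers of the logarithm
of their argument. -/
lemma tendsto_Li_mul (κ : ℂ) {x : ℝ → ℂ} {y : ℝ} (hxr : Tendsto (fun s => (x s).re) (𝓝[>] 0) atTop)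
    (hxi : Tendsto (fun s => (x s).im) (𝓝[>] 0) (𝓝 y)) {n : ℕ} (hn2 : 2 ≤ n) (k : ℕ) :
    Tendsto (fun s => Li n (κ * exp (-x s)) * x s ^ k) (𝓝[>] 0) (𝓝 0) := by
  have hn : ∀ s, ‖κ * exp (-x s)‖ = ‖κ‖ * Real.exp (-(x s).re) := by
    intro s; rw [norm_mul, norm_exp, neg_re]
  have hk : ∀ k : ℕ, Tendsto (fun s => (x s).re ^ k * Real.exp (-(x s).re)) (𝓝[>] 0) (𝓝 0) :=
    fun k => (Real.tendsto_pow_mul_exp_neg_atTop_nhds_zero k).comp hxr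
  have h1 : ∀ᶠ s in 𝓝[>] 0, ‖κ * exp (-x s)‖ ≤ 1 := by
    have := (hk 0).const_mul ‖κ‖
    simp only [pow_zero, one_mul, mul_zero] at this
    filter_upwards [this.eventually (ge_mem_nhds one_pos)] with s hs
    rwa [hn]
  have h2 : ∀ᶠ s in 𝓝[>] 0, ‖x s‖ ≤ 2 * (x s).re := by
    filter_upwards [hxr.eventually_ge_atTop (|y| + 1),
      hxi.abs.eventually (ge_mem_nhds (lt_add_one |y|))] with s h3 h4
    have := norm_le_abs_re_add_abs_im (x s)
    rw [abs_of_nonneg (by linarith [abs_nonneg y])] at this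
    linarith
  have h5 := (hk k).const_mul (2 * ‖κ‖ * 2 ^ k)
  rw [mul_zero] at h5
  refine squeeze_zero_norm' ?_ h5
  filter_upwards [h1, h2] with s h6 h7
  rw [norm_mul, norm_pow]
  calc _ ≤ (2 * ‖κ * exp (-x s)‖) * (2 * (x s).re) ^ k := by
        gcongr
        exact norm_Li_le hn2 h6
    _ = _ := by rw [hn]; ring

/-- Limit at `0` of a term whose argument vanishes there. -/
lemma Datum.tendsto_F_of_neg {d : Datum} (ha : d.a < 0) : Tendsto d.F (𝓝[>] 0) (𝓝 0) := by
  have hY : Tendsto (fun s => (d.b : ℂ) * lA s + d.c * lB s) (𝓝[>] 0) (𝓝 0) := by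
    simpa using (tendsto_lA.const_mul (d.b : ℂ)).add (tendsto_lB.const_mul (d.c : ℂ))
  have hre : ∀ s, (d.x s).re = d.a * (lL s).re + ((d.b : ℂ) * lA s + d.c * lB s).re := by
    intro s; simp [Datum.x, lam]; ring
  have him : ∀ s, (d.x s).im = ((d.b : ℂ) * lA s + d.c * lB s).im := by
    intro s; simp [Datum.x, lam, lL]
  have hxr : Tendsto (fun s => (d.x s).re) (𝓝[>] 0) atTop := by
    simp only [hre]
    exact (tendsto_lL.const_mul_atBot_of_neg (by exact_mod_cast ha)).atTop_add
      ((continuous_re.tendsto 0).comp hY)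
  have hxi : Tendsto (fun s => (d.x s).im) (𝓝[>] 0) (𝓝 0) := by
    simp only [him]
    exact (continuous_im.tendsto 0).comp hY
  have hT := fun (n k : ℕ) (hn : 2 ≤ n) => tendsto_Li_mul d.κ hxr hxi hn k
  have h8 := (((hT 5 0 (by norm_num)).add (hT 4 1 (by norm_num))).add
    ((hT 3 2 (by norm_num)).div_const 2)).add ((hT 2 3 (by norm_num)).div_const 6)
  simp only [zero_div, add_zero] at h8
  refine ((continuous_re.tendsto 0).comp h8).congr fun s => ?_
  simp [Datum.F, Phi]

lemma table_a {d : Datum} (h : d ∈ table) : d.a = 0 ∨ d.a < 0 := by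
  simp only [table, List.mem_cons, List.not_mem_nil, or_false] at h
  rcases h with h | h | h | h | h | h | h | h | h | h | h | h | h | h | h | h | h | h <;>
    simp [h]

/-- The limit at `0` of a term. -/
noncomputable def Datum.lim (d : Datum) : ℝ := if d.a = 0 then (Li 5 d.κ).re else 0

/-- The combination of the terms minus `Re Pc` is constant on `(0, 1]`: its value at `1` equals its
limit at `0`. The terms `d15`, `d19` tend to zero at `0`; at `1` they are replaced by `e15`, `e19` plus
the inversion polynomials and the jumps at the crossing points. -/
theorem master :
    (table.map fun d => d.C * d.F 1).sum
      + 8 * (e15.F 1 + (Qinv (2 * wP) (d15.x 1)).re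
        + (d15.F (√3)⁻¹ - (e15.F (√3)⁻¹ + (Qinv (2 * wP) (d15.x (√3)⁻¹)).re)))
      - (e19.F 1 + (Qinv (3 * wP + wM) (d19.x 1)).re
        + (d19.F (2 - √3) - (e19.F (2 - √3) + (Qinv (3 * wP + wM) (d19.x (2 - √3))).re))) / 2
      - (Pc 0 wP wM).re
      = (table.map fun d => d.C * d.lim).sum := by
  obtain ⟨F, hF, cF, lF, vF⟩ := crossing15
  obtain ⟨G, hG, cG, lG, vG⟩ := crossing19
  have pos : Ioc (0 : ℝ) 1 ⊆ Ioi 0 := fun s hs => hs.1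
  have key := value_at_one
    (W := fun s => (table.map fun d => d.C * d.F s).sum + 8 * F s - G s / 2
      - (Pc (lL s) (lA s) (lB s)).re)
    (L := (table.map fun d => d.C * d.lim).sum + 8 * 0 - 0 / 2 - 0) ?_ ?_ ?_
  · have hl : lL 1 = 0 := by simp [lL]
    simp only [vF, vG, hl, lA_one, lB_one] at key
    linarith
  · refine (((continuousOn_sum_F fun d hd => d.continuousOn_F pos (dom_table d hd)).add
      (cF.const_mul 8)).sub (cG.div_const 2)).sub ?_
    intro s hs
    exact (hasDerivAt_re (hasDerivAt_Pc (hasDerivAt_lL hs.1) (hasDerivAt_lA s)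
      (hasDerivAt_lB s))).continuousAt.continuousWithinAt
  · intro s hs
    refine ((((hasDerivAt_sum_F fun d hd => ?_).add ((hF s hs).const_mul 8)).sub
      ((hG s hs).div_const 2)).sub (hasDerivAt_re (hasDerivAt_Pc (hasDerivAt_lL hs.1)
      (hasDerivAt_lA s) (hasDerivAt_lB s)))).congr_deriv ?_
    · exact ((valid_table d (by simp [hd])).hasDerivWithinAt (S := Ioc 0 1) hs ⟨hs.1, hs.2.le⟩
        (dom_table d hd)).hasDerivAt (Ioc_mem_nhds hs.1 hs.2)
    · rw [sum_F', sub_self]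
  · refine (((tendsto_sum_F fun d hd => ?_).add (Tendsto.const_mul 8 ?_)).sub
      (Tendsto.div_const ?_ 2)).sub ((continuous_re.tendsto' 0 0 rfl).comp tendsto_Pc)
    · rcases table_a hd with ha | ha
      · rw [Datum.lim, if_pos ha]
        exact Datum.tendsto_F_zero ha (dom_table d hd)
      · rw [Datum.lim, if_neg ha.ne]
        exact Datum.tendsto_F_of_neg ha
    · refine (Datum.tendsto_F_of_neg (d := d15) (by norm_num [d15])).congr' ?_
      filter_upwards [Ioc_mem_nhdsGT c15_mem.1] with s hs using (lF s hs).symm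
    · refine (Datum.tendsto_F_of_neg (d := d19) (by norm_num [d19])).congr' ?_
      filter_upwards [Ioc_mem_nhdsGT c19_mem.1] with s hs using (lG s hs).symm

/-! ### Landen's relation -/

/-- Landen's three-term relation for the trilogarithm, at the arguments `1 / (1 + v)`,
`v / (1 + v)` and `-v` with `v = η s`, evaluated at `s = 1`. The constants `cᵢ` do not affect the
arguments but only shift the logarithms multiplying `Li₂`; `c₁ = c₂ - c₃` makes the sum of the
derivatives exact. -/
lemma landen {A A' : ℝ → ℂ} {η ε c₁ c₂ c₃ : ℂ} (hη : exp ε = η) (hε : ε.re = 0)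
    (hc : c₁ = c₂ - c₃) (dA : ∀ s, 0 ≤ s → HasDerivAt A (A' s) s) (A0 : A 0 = 0)
    (eA : ∀ s ∈ Ioc (0 : ℝ) 1, exp (A s) = 1 + η * s)
    (hn : ∀ s ∈ Ioc (0 : ℝ) 1, 1 ≤ ‖1 + η * s‖)
    (iA : ∀ s ∈ Ioo (0 : ℝ) 1, |(A s).im| < Real.pi)
    (iLA : ∀ s ∈ Ioo (0 : ℝ) 1, |ε.im - (A s).im| < Real.pi) :
    (Phi3 (exp c₁) (A 1 + c₁) + Phi3 (exp c₂) (A 1 - ε + c₂) + Phi3 (-exp c₃) (-ε + c₃)).re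
      - (ε * A 1 ^ 2 - 2 / 3 * A 1 ^ 3 + c₁ * ε * A 1 - (c₁ + c₂) * A 1 ^ 2 / 2).re
      = (Phi3 (exp c₁) c₁).re := by
  set L : ℝ → ℂ := fun s => lL s + ε with hL
  have dL : ∀ s : ℝ, 0 < s → HasDerivAt L (1 / s) s := fun s hs => (hasDerivAt_lL hs).add_const ε
  have eL : ∀ s : ℝ, 0 < s → exp (L s) = η * s := by
    intro s hs; rw [hL]; simp only [exp_add, exp_lL hs, hη]; ring
  set x₁ : ℝ → ℂ := fun s => A s + c₁ with hx₁
  set x₂ : ℝ → ℂ := fun s => A s - L s + c₂ with hx₂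
  set x₃ : ℝ → ℂ := fun s => -L s + c₃ with hx₃
  have f₁ : ∀ s, exp c₁ * exp (-x₁ s) = exp (-A s) := by
    intro s; rw [← exp_add]; congr 1; simp only [hx₁]; ring
  have f₂ : ∀ s, exp c₂ * exp (-x₂ s) = exp (L s) * exp (-A s) := by
    intro s; rw [← exp_add, ← exp_add]; congr 1; simp only [hx₂]; ring
  have f₃ : ∀ s, -exp c₃ * exp (-x₃ s) = -exp (L s) := by
    intro s; rw [neg_mul, ← exp_add]; congr 2; simp only [hx₃]; ring
  have nη : ‖η‖ = 1 := by rw [← hη, norm_exp, hε, Real.exp_zero]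
  have nv : ∀ s ∈ Ioc (0 : ℝ) 1, ‖η * s‖ ≤ 1 := by
    intro s hs
    rw [norm_mul, nη, one_mul, norm_real, Real.norm_of_nonneg hs.1.le]
    exact hs.2
  have m₁ : ∀ s ∈ Ioc (0 : ℝ) 1, x₁ s ∈ dom (exp c₁) := by
    intro s hs
    rw [dom, mem_ofPred, f₁, exp_neg, eA s hs, norm_inv]
    exact inv_le_one_of_one_le₀ (hn s hs)
  have m₂ : ∀ s ∈ Ioc (0 : ℝ) 1, x₂ s ∈ dom (exp c₂) := by
    intro s hs
    rw [dom, mem_ofPred, f₂, exp_neg, eA s hs, eL s hs.1, norm_mul, norm_inv]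
    exact mul_le_one₀ (nv s hs) (by positivity) (inv_le_one_of_one_le₀ (hn s hs))
  have m₃ : ∀ s ∈ Ioc (0 : ℝ) 1, x₃ s ∈ dom (-exp c₃) := by
    intro s hs
    rw [dom, mem_ofPred, f₃, eL s hs.1, norm_neg]
    exact nv s hs
  have d₁ : ∀ s : ℝ, 0 < s → HasDerivAt x₁ (A' s) s := fun s hs => (dA s hs.le).add_const c₁
  have d₂ : ∀ s : ℝ, 0 < s → HasDerivAt x₂ (A' s - 1 / s) s := fun s hs =>
    ((dA s hs.le).sub (dL s hs)).add_const c₂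
  have d₃ : ∀ s : ℝ, 0 < s → HasDerivAt x₃ (-(1 / s)) s := fun s hs => (dL s hs).neg.add_const c₃
  have term : ∀ {κ μ : ℂ} {x : ℝ → ℂ} {x' : ℂ} {s : ℝ}, κ ≠ 0 → s ∈ Ioo (0 : ℝ) 1 →
      (∀ s ∈ Ioc (0 : ℝ) 1, x s ∈ dom κ) → HasDerivAt x x' s →
      exp μ = 1 - κ * exp (-x s) → |μ.im| < Real.pi →
      HasDerivAt (fun s => Phi3 κ (x s)) (μ * x s * x') s := by
    intro κ μ x x' s hκ hs hm hx he hi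
    have h1 : κ * exp (-x s) ≠ 1 := fun h => exp_ne_zero μ (by rw [he, h, sub_self])
    have := hasDerivWithinAt_curve (hasDerivWithinAt_Phi3 hκ (hm s ⟨hs.1, hs.2.le⟩) h1)
      hx.hasDerivWithinAt hm
    rw [log_eq_of_exp he hi] at this
    exact this.hasDerivAt (Ioc_mem_nhds hs.1 hs.2)
  have cont : ∀ {κ : ℂ} {x x' : ℝ → ℂ}, (∀ s ∈ Ioc (0 : ℝ) 1, x s ∈ dom κ) →
      (∀ s, 0 < s → HasDerivAt x (x' s) s) → ContinuousOn (fun s => Phi3 κ (x s)) (Ioc 0 1) := by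
    intro κ x x' hm hx
    exact (continuousOn_Phi3 κ).comp
      (fun s hs => (hx s hs.1).continuousAt.continuousWithinAt) hm
  set P : ℝ → ℂ := fun s => L s * A s ^ 2 - 2 / 3 * A s ^ 3 + c₁ * (L s * A s)
    - (c₁ + c₂) * A s ^ 2 / 2 with hP
  have dP : ∀ s : ℝ, 0 < s → HasDerivAt P (2 * L s * A s * A' s + A s ^ 2 * (1 / s)
      - 2 * A s ^ 2 * A' s + c₁ * (L s * A' s + A s * (1 / s)) - (c₁ + c₂) * A s * A' s) s := by
    intro s hs
    have hA := dA s hs.le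
    have hl := dL s hs
    refine ((((hl.mul (hA.pow 2)).sub ((hA.pow 3).const_mul (2 / 3))).add
      ((hl.mul hA).const_mul c₁)).sub (((hA.pow 2).const_mul (c₁ + c₂)).div_const 2)).congr_deriv ?_
    norm_num
    ring
  have tA : Tendsto A (𝓝[>] 0) (𝓝 0) := by
    have := (dA 0 le_rfl).continuousAt.tendsto.mono_left (nhdsWithin_le_nhds (s := Ioi 0))
    rwa [A0] at this
  have tLA : Tendsto (fun s => L s * A s) (𝓝[>] 0) (𝓝 0) := by
    have := (tendsto_lL_mul (dA 0 le_rfl) A0).add (tA.const_mul ε)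
    simp only [mul_zero, add_zero] at this
    exact this.congr fun s => by simp only [hL]; ring
  have tP : Tendsto P (𝓝[>] 0) (𝓝 0) := by
    have := ((((tLA.mul tA).sub ((tA.pow 3).const_mul (2 / 3))).add (tLA.const_mul c₁)).sub
      (((tA.pow 2).const_mul (c₁ + c₂)).div_const 2))
    norm_num at this
    exact this.congr fun s => by simp only [hP]; ring
  have tAr : Tendsto (fun s => (A s).re) (𝓝[>] 0) (𝓝 0) := (continuous_re.tendsto 0).comp tA
  have tAi : Tendsto (fun s => (A s).im) (𝓝[>] 0) (𝓝 0) := (continuous_im.tendsto 0).comp tA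
  have tLr : Tendsto (fun s => -(lL s).re) (𝓝[>] 0) atTop := tendsto_neg_atBot_atTop.comp tendsto_lL
  have tphi : ∀ (κ : ℂ) {x : ℝ → ℂ} {y : ℝ}, Tendsto (fun s => (x s).re) (𝓝[>] 0) atTop →
      Tendsto (fun s => (x s).im) (𝓝[>] 0) (𝓝 y) →
      Tendsto (fun s => Phi3 κ (x s)) (𝓝[>] 0) (𝓝 0) := by
    intro κ x y hr hi
    have := (tendsto_Li_mul κ hr hi (n := 3) (by norm_num) 0).add
      (tendsto_Li_mul κ hr hi (n := 2) (by norm_num) 1)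
    simpa [Phi3] using this
  have t₂ : Tendsto (fun s => Phi3 (exp c₂) (x₂ s)) (𝓝[>] 0) (𝓝 0) := by
    refine tphi _ (y := -ε.im + c₂.im) ?_ ?_
    · refine (tLr.atTop_add (tAr.add_const (c₂.re - ε.re))).congr fun s => ?_
      simp [hx₂, hL]; ring
    · have := tAi.add_const (-ε.im + c₂.im)
      rw [zero_add] at this
      refine this.congr fun s => ?_
      simp [hx₂, hL, lL]; ring
  have t₃ : Tendsto (fun s => Phi3 (-exp c₃) (x₃ s)) (𝓝[>] 0) (𝓝 0) := by
    refine tphi _ (y := -ε.im + c₃.im) ?_ ?_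
    · refine (tLr.atTop_add (tendsto_const_nhds (x := c₃.re - ε.re))).congr fun s => ?_
      simp [hx₃, hL]; ring
    · refine tendsto_const_nhds.congr fun s => ?_
      simp [hx₃, hL, lL]
  have t₁ : Tendsto (fun s => Phi3 (exp c₁) (x₁ s)) (𝓝[>] 0) (𝓝 (Phi3 (exp c₁) c₁)) := by
    have hx : Tendsto x₁ (𝓝[>] 0) (𝓝 c₁) := by simpa using tA.add_const c₁
    have hev : ∀ᶠ s in 𝓝[>] 0, x₁ s ∈ dom (exp c₁) := by
      filter_upwards [Ioc_mem_nhdsGT (zero_lt_one' ℝ)] with s hs using m₁ s hs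
    have h0 : c₁ ∈ dom (exp c₁) := (isClosed_dom _).mem_of_tendsto hx hev
    exact (continuousOn_Phi3 _ c₁ h0).tendsto.comp (tendsto_nhdsWithin_iff.2 ⟨hx, hev⟩)
  have key := value_at_one
    (W := fun s => (Phi3 (exp c₁) (x₁ s) + Phi3 (exp c₂) (x₂ s) + Phi3 (-exp c₃) (x₃ s) - P s).re)
    (L := (Phi3 (exp c₁) c₁ + 0 + 0 - 0).re) ?_ ?_ ?_
  · have h1 : L 1 = ε := by simp [hL, lL]
    have h2 : x₂ 1 = A 1 - ε + c₂ := by simp only [hx₂, h1]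
    have h3 : x₃ 1 = -ε + c₃ := by simp only [hx₃, h1]
    have h4 : P 1 = ε * A 1 ^ 2 - 2 / 3 * A 1 ^ 3 + c₁ * ε * A 1 - (c₁ + c₂) * A 1 ^ 2 / 2 := by
      simp only [hP, h1]; ring
    have h5 : x₁ 1 = A 1 + c₁ := rfl
    simp only [h2, h3, h4, h5, add_zero, sub_zero] at key
    rw [← key, sub_re (_ + _ + _)]
  · refine continuous_re.comp_continuousOn ((((cont m₁ d₁).add (cont m₂ d₂)).add
      (cont m₃ d₃)).sub ?_)
    exact fun s hs => (dP s hs.1).continuousAt.continuousWithinAt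
  · intro s hs
    have hs' : s ∈ Ioc (0 : ℝ) 1 := ⟨hs.1, hs.2.le⟩
    have hne : (1 + η * s) ≠ 0 := by rw [← eA s hs']; exact exp_ne_zero _
    have iL : (L s).im = ε.im := by simp [hL, lL]
    have h1 := term (μ := L s - A s) (exp_ne_zero c₁) hs m₁ (d₁ s hs.1)
      (by rw [f₁, exp_sub, exp_neg, eA s hs', eL s hs.1]; field_simp; ring)
      (by rw [sub_im, iL]; exact iLA s hs)
    have h2 := term (μ := -A s) (exp_ne_zero c₂) hs m₂ (d₂ s hs.1)
      (by rw [f₂, exp_neg, eA s hs', eL s hs.1]; field_simp; ring)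
      (by rw [neg_im, abs_neg]; exact iA s hs)
    have h3 := term (μ := A s) (neg_ne_zero.2 (exp_ne_zero c₃)) hs m₃ (d₃ s hs.1)
      (by rw [f₃, eA s hs', eL s hs.1]; ring) (iA s hs)
    refine (hasDerivAt_re (((h1.add h2).add h3).sub (dP s hs.1))).congr_deriv ?_
    rw [← zero_re]
    congr 1
    simp only [hx₁, hx₂, hx₃, hc]
    ring
  · exact (continuous_re.tendsto _).comp (((t₁.add t₂).add t₃).sub tP)

/-! ### Conjugation, duplication and Bernoulli polynomials -/

lemma Li_zero (n : ℕ) : Li n 0 = 0 := by simp [Li]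

lemma Li_conj (n : ℕ) (z : ℂ) : Li n ((starRingEnd ℂ) z) = (starRingEnd ℂ) (Li n z) := by
  simp only [Li, conj_tsum, map_div₀, map_pow, conj_natCast]

lemma Li_ofReal_im (n : ℕ) (x : ℝ) : (Li n x).im = 0 := by
  rw [← conj_eq_iff_im, ← Li_conj, conj_ofReal]

lemma Li_one_im (n : ℕ) : (Li n 1).im = 0 := by simpa using Li_ofReal_im n 1
lemma Li_neg_one_im (n : ℕ) : (Li n (-1)).im = 0 := by simpa using Li_ofReal_im n (-1)
lemma Li_half_im (n : ℕ) : (Li n (1 / 2)).im = 0 := by simpa using Li_ofReal_im n (1 / 2)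

/-- The duplication formula. -/
lemma Li_dup {n : ℕ} (hn : 2 ≤ n) {z : ℂ} (hz : ‖z‖ ≤ 1) :
    2 ^ n * (Li n z + Li n (-z)) = 2 * Li n (z ^ 2) := by
  have h1 := (summable_Li hn hz).hasSum
  have h2 := (summable_Li hn (z := -z) (by simpa)).hasSum
  have h3 := (summable_Li hn (z := z ^ 2) (by
    rw [norm_pow]; exact pow_le_one₀ (norm_nonneg _) hz)).hasSum
  have h4 := (h1.add h2).mul_left (2 ^ n)
  -- only the even powers survive, and these have odd index in the summation
  have h5 : HasSum (fun k : ℕ => 2 ^ n * (z ^ (k + 1) / ((k + 1 : ℕ) : ℂ) ^ n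
      + (-z) ^ (k + 1) / ((k + 1 : ℕ) : ℂ) ^ n)) (0 + 2 * Li n (z ^ 2)) := by
    refine HasSum.even_add_odd ?_ ?_
    · refine hasSum_zero.congr_fun fun k => ?_
      rw [Odd.neg_pow (by exact odd_two_mul_add_one k)]
      ring
    · refine (h3.mul_left 2).congr_fun fun k => ?_
      have hk : ((k + 1 : ℕ) : ℂ) ≠ 0 := by exact_mod_cast k.succ_ne_zero
      rw [Even.neg_pow (by exact ⟨k + 1, by ring⟩), ← pow_mul]
      have : ((2 * k + 1 + 1 : ℕ) : ℂ) = 2 * ((k + 1 : ℕ) : ℂ) := by push_cast; ring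
      rw [this, mul_pow, show 2 * k + 1 + 1 = 2 * (k + 1) by ring]
      field_simp
      ring
  rw [← zero_add (2 * Li n (z ^ 2))]
  exact h4.unique h5

lemma Li_exp_re {n : ℕ} (hn : 2 ≤ n) {x S : ℝ}
    (h : HasSum (fun k : ℕ => 1 / (k : ℝ) ^ n * Real.cos (2 * Real.pi * k * x)) S) :
    (Li n (exp ((2 * Real.pi * x : ℝ) * I))).re = S := by
  have h1 := (hasSum_nat_add_iff' 1).2 h
  simp only [Finset.range_one, Finset.sum_singleton, Nat.cast_zero, zero_pow (by lia : n ≠ 0),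
    div_zero, zero_mul, sub_zero] at h1
  have h2 := reCLM.hasSum (summable_Li hn (norm_exp_ofReal_mul_I (2 * Real.pi * x)).le).hasSum
  refine h2.unique (h1.congr_fun fun k => ?_)
  simp only [reCLM_apply]
  rw [← exp_nat_mul, ← ofReal_natCast, ← ofReal_pow, div_ofReal_re, ← mul_assoc, ← ofReal_mul,
    exp_ofReal_mul_I_re]
  ring_nf

lemma Li_exp_im {n : ℕ} (hn : 2 ≤ n) {x S : ℝ}
    (h : HasSum (fun k : ℕ => 1 / (k : ℝ) ^ n * Real.sin (2 * Real.pi * k * x)) S) :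
    (Li n (exp ((2 * Real.pi * x : ℝ) * I))).im = S := by
  have h1 := (hasSum_nat_add_iff' 1).2 h
  simp only [Finset.range_one, Finset.sum_singleton, Nat.cast_zero, zero_pow (by lia : n ≠ 0),
    div_zero, zero_mul, sub_zero] at h1
  have h2 := imCLM.hasSum (summable_Li hn (norm_exp_ofReal_mul_I (2 * Real.pi * x)).le).hasSum
  refine h2.unique (h1.congr_fun fun k => ?_)
  simp only [imCLM_apply]
  rw [← exp_nat_mul, ← ofReal_natCast, ← ofReal_pow, div_ofReal_im, ← mul_assoc, ← ofReal_mul,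
    exp_ofReal_mul_I_im]
  ring_nf

lemma bernoulli_three : bernoulli 3 = 0 := bernoulli_eq_zero_of_odd (by decide) (by norm_num)

lemma bernoulli_four : bernoulli 4 = -1 / 30 := by
  rw [bernoulli_eq_bernoulli'_of_ne_one (by decide), bernoulli'_four]

lemma bernoulli_eval_two (x : ℝ) :
    ((Polynomial.bernoulli 2).map (algebraMap ℚ ℝ)).eval x = x ^ 2 - x + 1 / 6 := by
  simp [Polynomial.bernoulli, Finset.sum_range_succ, bernoulli_one, bernoulli_two]
  ring

lemma bernoulli_eval_three (x : ℝ) :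
    ((Polynomial.bernoulli 3).map (algebraMap ℚ ℝ)).eval x = x ^ 3 - 3 / 2 * x ^ 2 + x / 2 := by
  simp [Polynomial.bernoulli, Finset.sum_range_succ, bernoulli_one, bernoulli_two,
    bernoulli_three]
  ring

lemma bernoulli_eval_four (x : ℝ) :
    ((Polynomial.bernoulli 4).map (algebraMap ℚ ℝ)).eval x
      = x ^ 4 - 2 * x ^ 3 + x ^ 2 - 1 / 30 := by
  simp [Polynomial.bernoulli, Finset.sum_range_succ, bernoulli_one, bernoulli_two,
    bernoulli_three, bernoulli_four, Nat.choose]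
  ring

lemma Li_two_re {x : ℝ} (hx : x ∈ Icc (0 : ℝ) 1) :
    (Li 2 (exp ((2 * Real.pi * x : ℝ) * I))).re = Real.pi ^ 2 * (x ^ 2 - x + 1 / 6) := by
  rw [Li_exp_re le_rfl (hasSum_one_div_nat_pow_mul_cos (k := 1) one_ne_zero hx), mul_one,
    bernoulli_eval_two]
  norm_num only [Nat.factorial]
  ring

lemma Li_four_re {x : ℝ} (hx : x ∈ Icc (0 : ℝ) 1) :
    (Li 4 (exp ((2 * Real.pi * x : ℝ) * I))).re
      = -Real.pi ^ 4 / 3 * (x ^ 4 - 2 * x ^ 3 + x ^ 2 - 1 / 30) := by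
  rw [Li_exp_re (by norm_num) (hasSum_one_div_nat_pow_mul_cos (k := 2) two_ne_zero hx)]
  norm_num only [bernoulli_eval_four, Nat.factorial]
  ring

lemma Li_three_im {x : ℝ} (hx : x ∈ Icc (0 : ℝ) 1) :
    (Li 3 (exp ((2 * Real.pi * x : ℝ) * I))).im
      = 2 / 3 * Real.pi ^ 3 * (x ^ 3 - 3 / 2 * x ^ 2 + x / 2) := by
  rw [Li_exp_im (by norm_num) (hasSum_one_div_nat_pow_mul_sin (k := 1) one_ne_zero hx)]
  norm_num only [bernoulli_eval_three, Nat.factorial]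
  ring

/-! ### Special values -/

lemma Li_one_re_two : (Li 2 1).re = Real.pi ^ 2 / 6 := by
  have := Li_two_re (x := 0) (by norm_num)
  norm_num at this
  rw [this]; ring

lemma Li_one_re_four : (Li 4 1).re = Real.pi ^ 4 / 90 := by
  have := Li_four_re (x := 0) (by norm_num)
  norm_num at this
  rw [this]; ring

lemma Li_one_re_five : (Li 5 1).re = zeta5 := by
  have : Li 5 1 = (zeta5 : ℂ) := by
    rw [Li, zeta5, ofReal_tsum]
    push_cast
    simp
  rw [this, ofReal_re]

lemma Li_neg_one_re {n : ℕ} (hn : 2 ≤ n) :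
    2 ^ n * ((Li n 1).re + (Li n (-1)).re) = 2 * (Li n 1).re := by
  have h := Li_dup hn (z := 1) (by simp)
  rw [one_pow, ← re_add_im (Li n 1), ← re_add_im (Li n (-1)), Li_one_im, Li_neg_one_im] at h
  simp only [ofReal_zero, zero_mul, add_zero] at h
  exact_mod_cast h

lemma Li_neg_I (n : ℕ) : Li n (-I) = (starRingEnd ℂ) (Li n I) := by
  rw [← Li_conj, conj_I]

lemma Li_I_re {n : ℕ} (hn : 2 ≤ n) : 2 ^ n * (Li n I).re = (Li n (-1)).re := by
  have h := Li_dup hn (z := I) (by simp)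
  rw [I_sq, Li_neg_I, add_conj, ← re_add_im (Li n (-1)), Li_neg_one_im] at h
  simp only [ofReal_zero, zero_mul, add_zero] at h
  have : (2 : ℝ) ^ n * (2 * (Li n I).re) = 2 * (Li n (-1)).re := by exact_mod_cast h
  linarith

lemma Li_I_im_three : (Li 3 I).im = Real.pi ^ 3 / 32 := by
  have := Li_three_im (x := 1 / 4) (by norm_num)
  have h : exp ((2 * Real.pi * (1 / 4) : ℝ) * I) = I := by
    refine Eq.trans ?_ exp_pi_div_two_mul_I
    congr 2; push_cast; ring
  rw [h] at this
  rw [this]; ring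

/-- `e^{iπ/3}`. The arguments of `d15` and `d19` leave the unit disc at its conjugate, those of `e15`
and `e19` enter it here. -/
noncomputable def rho : ℂ := exp ((Real.pi / 3 : ℝ) * I)

lemma rho_eq : exp ((2 * Real.pi * (1 / 6) : ℝ) * I) = rho := by
  rw [rho]; congr 3; ring

lemma Li_rho_two : (Li 2 rho).re = Real.pi ^ 2 / 36 := by
  have := Li_two_re (x := 1 / 6) (by norm_num)
  rw [rho_eq] at this
  rw [this]; ring

lemma Li_rho_four : (Li 4 rho).re = 91 * Real.pi ^ 4 / 19440 := by
  have := Li_four_re (x := 1 / 6) (by norm_num)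
  rw [rho_eq] at this
  rw [this]; ring

lemma Li_rho_three : (Li 3 rho).im = 5 * Real.pi ^ 3 / 162 := by
  have := Li_three_im (x := 1 / 6) (by norm_num)
  rw [rho_eq] at this
  rw [this]; ring

lemma Li_conj_half (n : ℕ) : Li n ((1 - I) / 2) = (starRingEnd ℂ) (Li n ((1 + I) / 2)) := by
  rw [← Li_conj, map_div₀, map_add, map_one, conj_I, map_ofNat, sub_eq_add_neg]

lemma inv_one_add_I : (1 + I)⁻¹ = (1 - I) / 2 := by
  rw [inv_eq_iff_eq_inv, eq_comm, inv_eq_iff_eq_inv, eq_comm]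
  apply inv_eq_of_mul_eq_one_right
  linear_combination -I_sq / 2

lemma inv_one_sub_I : (1 - I)⁻¹ = (1 + I) / 2 := by
  apply inv_eq_of_mul_eq_one_right
  linear_combination -I_sq / 2

lemma hasDerivAt_lN_zero : HasDerivAt lN 1 0 := by
  have := (((hasDerivAt_id (0 : ℝ)).const_add 1).log (by simp)).ofReal_comp
  refine this.congr_deriv ?_
  simp

lemma lN_zero : lN 0 = 0 := by simp [lN]

lemma hasDerivAt_Li_two_real {x : ℝ} (h0 : 0 < x) (h1 : x < 1) :
    HasDerivAt (fun x : ℝ => (Li 2 x).re) (-Real.log (1 - x) / x) x := by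
  have hx : ‖(x : ℂ)‖ < 1 := by rwa [norm_real, Real.norm_of_nonneg h0.le]
  have := (hasDerivAt_Li (n := 1) hx (ofReal_ne_zero.2 h0.ne')).real_of_complex
  refine this.congr_deriv ?_
  rw [Li_one hx, ← ofReal_one, ← ofReal_sub, ← ofReal_log (by linarith), ← ofReal_neg,
    ← ofReal_div, ofReal_re]

lemma continuousOn_Li_two_real : ContinuousOn (fun x : ℝ => (Li 2 x).re) (Icc 0 1) := by
  refine continuous_re.comp_continuousOn ((continuousOn_Li le_rfl).comp
    continuous_ofReal.continuousOn fun x hx => ?_)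
  rw [mem_closedBall_zero_iff, norm_real, Real.norm_of_nonneg hx.1]
  exact hx.2

/-- Euler's reflection formula at `1 / 2`. -/
lemma Li_half_two : (Li 2 (1 / 2)).re = Real.pi ^ 2 / 12 - Real.log 2 ^ 2 / 2 := by
  have c₁ : ContinuousOn (fun s : ℝ => (Li 2 ((s / 2 : ℝ) : ℂ)).re) (Icc 0 1) :=
    continuousOn_Li_two_real.comp (by fun_prop)
      fun s hs => ⟨by linarith [hs.1], by linarith [hs.2]⟩
  have c₂ : ContinuousOn (fun s : ℝ => (Li 2 ((1 - s / 2 : ℝ) : ℂ)).re) (Icc 0 1) :=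
    continuousOn_Li_two_real.comp (by fun_prop)
      fun s hs => ⟨by linarith [hs.2], by linarith [hs.1]⟩
  have key := value_at_one (L := (Li 2 ((0 / 2 : ℝ) : ℂ)).re + (Li 2 ((1 - 0 / 2 : ℝ) : ℂ)).re + 0)
    (W := fun s => (Li 2 ((s / 2 : ℝ) : ℂ)).re + (Li 2 ((1 - s / 2 : ℝ) : ℂ)).re
      + Real.log (s / 2) * Real.log (1 - s / 2)) ?_ ?_ ?_
  · norm_num [Li_zero, Li_one_re_two] at key
    norm_num
    rw [show (1 / 2 : ℝ) = 2⁻¹ by norm_num, Real.log_inv] at key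
    linarith
  · refine ((c₁.add c₂).mono Ioc_subset_Icc_self).add (ContinuousOn.mul ?_ ?_)
    · exact ContinuousOn.log (by fun_prop) fun s hs => by linarith [hs.1]
    · exact ContinuousOn.log (by fun_prop) fun s hs => by linarith [hs.2]
  · intro s hs
    have e₁ : HasDerivAt (fun s : ℝ => s / 2) (1 / 2) s := (hasDerivAt_id s).div_const 2
    have e₂ : HasDerivAt (fun s : ℝ => 1 - s / 2) (-(1 / 2)) s := e₁.const_sub 1
    have h0 : s / 2 ≠ 0 := by linarith [hs.1]
    have h1 : 1 - s / 2 ≠ 0 := by linarith [hs.2]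
    have d₁ := (hasDerivAt_Li_two_real (x := s / 2) (by linarith [hs.1])
      (by linarith [hs.2])).comp s e₁
    have d₂ := (hasDerivAt_Li_two_real (x := 1 - s / 2) (by linarith [hs.2])
      (by linarith [hs.1])).comp s e₂
    refine ((d₁.add d₂).add ((e₁.log h0).mul (e₂.log h1))).congr_deriv ?_
    rw [sub_sub_cancel]
    field_simp
    ring
  · refine Tendsto.add ?_ ?_
    · refine ((c₁.add c₂) 0 (by simp)).tendsto.mono_left ?_
      rw [← nhdsWithin_Ioc_eq_nhdsGT (zero_lt_one' ℝ)]
      exact nhdsWithin_mono _ Ioc_subset_Icc_self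
    · have e₂ : HasDerivAt (fun s : ℝ => Real.log (1 - s / 2)) (-(1 / 2) / (1 - 0 / 2)) 0 :=
        (((hasDerivAt_id (0 : ℝ)).div_const 2).const_sub 1).log (by norm_num)
      have h1 := tendsto_lL_mul e₂.ofReal_comp (by simp)
      have h2 : Tendsto (fun s : ℝ => Real.log 2 * Real.log (1 - s / 2)) (𝓝[>] 0) (𝓝 0) := by
        have := (e₂.continuousAt.tendsto.const_mul (Real.log 2)).mono_left
          (nhdsWithin_le_nhds (s := Ioi 0))
        simpa using this
      have h3 := ((continuous_re.tendsto 0).comp h1).sub h2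
      rw [zero_re, sub_zero] at h3
      refine h3.congr' ?_
      filter_upwards [self_mem_nhdsWithin] with s hs
      rw [Real.log_div (ne_of_gt hs) two_ne_zero]
      simp only [Function.comp, lL, ← ofReal_mul, ofReal_re]
      ring

lemma exp_lN' {s : ℝ} (hs : 0 < s) : exp (lN s) = 1 + 1 * s := by rw [exp_lN hs, one_mul]

/-- Landen's relation at `v = 1`. -/
lemma Li_half_three : (Li 3 (1 / 2)).re
    = 7 / 8 * (Li 3 1).re - Real.pi ^ 2 * Real.log 2 / 12 + Real.log 2 ^ 3 / 6 := by
  have h := landen (A := lN) (A' := fun s => if s = 0 then 1 else 1 / (1 + s)) (η := 1) (ε := 0)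
    (c₁ := 0) (c₂ := 0) (c₃ := 0) exp_zero rfl (by simp) ?_ lN_zero (fun s hs => exp_lN' hs.1) ?_
    ?_ ?_
  · have e1 : exp (-lN 1) = 1 / 2 := by rw [exp_neg, exp_lN one_pos]; norm_num
    have e2 : lN 1 = (Real.log 2 : ℂ) := by norm_num [lN]
    have hm := Li_neg_one_re (n := 3) (by norm_num)
    simp only [Phi3, add_zero, sub_zero, neg_zero, exp_zero, one_mul, zero_mul, mul_one, mul_zero,
      e1, add_re, sub_re, zero_sub, neg_re] at h
    simp only [e2, re_mul_ofReal, ← ofReal_pow, ← ofReal_ofNat, ← ofReal_div, ← ofReal_mul,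
      ofReal_re] at h
    norm_num at h hm ⊢
    have h2 := Li_half_two
    norm_num at h2
    rw [h2] at h
    linarith
  · intro s hs
    rcases hs.eq_or_lt with rfl | hs
    · simpa using hasDerivAt_lN_zero
    · have := hasDerivAt_lN hs
      rwa [if_neg hs.ne']
  · intro s hs
    rw [one_mul, ← ofReal_one, ← ofReal_add, norm_real, Real.norm_of_nonneg (by linarith [hs.1])]
    linarith [hs.1]
  · intro s hs; simp [lN, Real.pi_pos]
  · intro s hs; simp [lN, Real.pi_pos]

lemma exp_half_pi : exp ((Real.pi / 2 : ℝ) * I) = I := by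
  refine Eq.trans ?_ exp_pi_div_two_mul_I
  push_cast; rfl

/-- Landen's relation at `v = i`. -/
lemma Li_z_three : (Li 3 ((1 + I) / 2)).re
    = 35 / 64 * (Li 3 1).re - 5 * Real.pi ^ 2 * Real.log 2 / 192 + Real.log 2 ^ 3 / 48 := by
  have hpi := Real.pi_pos
  have h := landen (A := lA) (A' := fun s => I / (1 + I * s)) (η := I)
    (ε := (Real.pi / 2 : ℝ) * I) (c₁ := -wP) (c₂ := -wM) (c₃ := (Real.pi / 2 : ℝ) * I) ?_ ?_ ?_
    (fun s _ => hasDerivAt_lA s) lA_zero (fun s _ => exp_lA s) ?_ ?_ ?_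
  · have a1 : wP - (Real.pi / 2 : ℝ) * I + -wM = 0 := by
      simp only [wP, wM]; push_cast; ring
    have e1 : exp (-wP) = (1 - I) / 2 := by rw [exp_neg, exp_wP, inv_one_add_I]
    have e2 : exp (-wM) = (1 + I) / 2 := by rw [exp_neg, exp_wM, inv_one_sub_I]
    have e3 := exp_half_pi
    have hm := Li_neg_one_re (n := 3) (by norm_num)
    have hi := Li_I_re (n := 3) (by norm_num)
    have e4 : (1 - I) / 2 * exp wP = 1 := by rw [← e1, ← exp_add]; simp
    simp only [Phi3, lA_one, a1, add_neg_cancel, neg_add_cancel, neg_neg, e4, neg_zero, exp_zero,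
      mul_one, mul_zero, add_zero, e1, e2, e3, Li_conj_half, Li_neg_I] at h
    simp only [add_re, sub_re, mul_re, neg_re, conj_re, pow_succ, pow_zero, one_mul, mul_im, re_wP,
      im_wP, re_wM, im_wM, neg_im, add_im, ofReal_re, ofReal_im, I_re, I_im, Li_one_im,
      Li_one_re_two, div_ofNat_re, div_ofNat_im, re_ofNat, im_ofNat] at h
    norm_num at h hm hi ⊢
    linarith
  · exact exp_half_pi
  · simp
  · simp only [wP, wM]; push_cast; ring
  · intro s hs
    rw [← re_add_im (1 + I * s)]
    refine le_trans ?_ (abs_re_le_norm _)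
    simp
  · intro s hs
    have := arctan_mem hs
    rw [im_lA, abs_lt]
    constructor <;> linarith
  · intro s hs
    have := arctan_mem hs
    rw [im_lA, abs_lt]
    simp
    constructor <;> linarith

/-! ### Evaluation at the end point and at the crossing points -/

/-- `Re Φ κ x` in real coordinates: `f` is the argument `κ e⁻ˣ` of the polylogarithms and
`x = u + iv`. -/
noncomputable def PhiR (f : ℂ) (u v : ℝ) : ℝ :=
  (Li 5 f).re + ((Li 4 f).re * u - (Li 4 f).im * v)
  + ((Li 3 f).re * (u ^ 2 - v ^ 2) - (Li 3 f).im * (2 * u * v)) / 2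
  + ((Li 2 f).re * (u ^ 3 - 3 * u * v ^ 2) - (Li 2 f).im * (3 * u ^ 2 * v - v ^ 3)) / 6

lemma F_eq {d : Datum} {s u v : ℝ} {f : ℂ} (hf : d.κ * exp (-d.x s) = f) (hu : (d.x s).re = u)
    (hv : (d.x s).im = v) : d.F s = PhiR f u v := by
  have hx : d.x s = u + v * I := by rw [← hu, ← hv, re_add_im]
  rw [Datum.F, Phi, hf, hx, PhiR]
  simp [pow_succ]
  ring

lemma F_one {d : Datum} {f : ℂ} (hf : d.κ * ((1 + I) ^ (-d.b) * (1 - I) ^ (-d.c)) = f) :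
    d.F 1 = PhiR f ((d.b + d.c) * (Real.log 2 / 2)) ((d.b - d.c) * (Real.pi / 4)) := by
  refine F_eq ?_ ?_ ?_
  · rw [Datum.x, exp_neg_lam _ _ _ one_pos, ← hf]
    simp
  · simp [Datum.x, lam, lA_one, lB_one, re_wP, re_wM, lL]
    ring
  · simp [Datum.x, lam, lA_one, lB_one, im_wP, im_wM, lL]
    ring

/-- At a crossing point both arguments lie on the unit circle, at `e^{∓iπ/3}`; in the difference
the polylogarithms of `e^{iπ/3}` that are not elementary cancel. -/
lemma F_sub_F {d e : Datum} {s t : ℝ} (hd : d.x s = t - (Real.pi / 6 : ℝ) * I)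
    (he : e.x s = -d.x s) (kd : d.κ = -I * exp t) (ke : e.κ = I * exp (-t)) :
    d.F s - e.F s = 91 * Real.pi ^ 4 / 9720 * t - 5 * Real.pi ^ 4 / 486 * t
      + Real.pi ^ 2 / 108 * (t ^ 3 - t * Real.pi ^ 2 / 12) := by
  have e6 : I * exp (-((Real.pi / 6 : ℝ) * I)) = rho := by
    calc _ = exp ((Real.pi / 2 : ℝ) * I) * exp (-((Real.pi / 6 : ℝ) * I)) := by rw [exp_half_pi]
      _ = _ := by rw [← exp_add, rho]; congr 1; push_cast; ring
  have f2 : e.κ * exp (-e.x s) = rho := by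
    rw [he, hd, neg_neg, ke, ← e6, mul_assoc, ← exp_add]
    congr 2; ring
  have f1 : d.κ * exp (-d.x s) = (starRingEnd ℂ) rho := by
    rw [hd, kd, ← e6, map_mul, conj_I, ← exp_conj, mul_assoc, ← exp_add]
    congr 2
    simp only [map_neg, map_mul, conj_ofReal, conj_I]
    ring
  rw [F_eq f1 (u := t) (v := -(Real.pi / 6)) (by simp [hd]) (by simp [hd]),
    F_eq f2 (u := -t) (v := Real.pi / 6) (by simp [he, hd]) (by simp [he, hd])]
  simp only [PhiR, Li_conj, conj_re, conj_im, Li_rho_two, Li_rho_three, Li_rho_four]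
  ring

lemma x15 : d15.x (√3)⁻¹ = (Real.log 2 : ℝ) - (Real.pi / 6 : ℝ) * I := by
  have h3 : ((√3)⁻¹ : ℝ) ^ 2 = 1 / 3 := by rw [inv_pow, Real.sq_sqrt] <;> norm_num
  apply Complex.ext
  · simp only [d15, Datum.x, lam, lL, add_re, sub_re, mul_re, ofReal_re, ofReal_im, I_re, I_im,
      re_lB, im_lB, intCast_re, intCast_im, Real.log_inv, Real.log_sqrt (by norm_num : (0 : ℝ) ≤ 3),
      h3]
    rw [show (1 + 1 / 3 : ℝ) = 2 ^ 2 / 3 by norm_num, Real.log_div (by norm_num) (by norm_num),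
      Real.log_pow]
    push_cast
    ring
  · simp only [d15, Datum.x, lam, lL, add_im, sub_im, mul_im, ofReal_re, ofReal_im, I_re, I_im,
      re_lB, im_lB, intCast_re, intCast_im, Real.arctan_inv_sqrt_three]
    push_cast
    ring

lemma arctan_two_sub : Real.arctan (2 - √3) = Real.pi / 12 := by
  have h3 : (√3 : ℝ) ^ 2 = 3 := Real.sq_sqrt (by norm_num)
  have hc := c19_mem
  have := Real.two_mul_arctan (x := 2 - √3) (by linarith [hc.1]) hc.2
  have e : 2 * (2 - √3) / (1 - (2 - √3) ^ 2) = (√3)⁻¹ := by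
    have h0 : √3 ≠ 0 := by positivity
    have h1 : 1 - (2 - √3) ^ 2 ≠ 0 := by nlinarith [hc.1, hc.2]
    field_simp
    linear_combination -h3
  rw [e, Real.arctan_inv_sqrt_three] at this
  linarith

lemma x19 : d19.x (2 - √3) = (2 * Real.log 2 : ℝ) - (Real.pi / 6 : ℝ) * I := by
  have h3 : (√3 : ℝ) ^ 2 = 3 := Real.sq_sqrt (by norm_num)
  have hc := c19_mem
  apply Complex.ext
  · have : Real.log (1 + (2 - √3) ^ 2) = 2 * Real.log 2 + Real.log (2 - √3) := by
      rw [show 1 + (2 - √3) ^ 2 = 2 ^ 2 * (2 - √3) by linear_combination h3,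
        Real.log_mul (by norm_num) hc.1.ne', Real.log_pow]
      push_cast; ring
    simp only [d19, Datum.x, lam, lL, add_re, sub_re, mul_re, ofReal_re, ofReal_im, I_re, I_im,
      re_lB, im_lB, intCast_re, intCast_im, this]
    push_cast
    ring
  · simp only [d19, Datum.x, lam, lL, add_im, sub_im, mul_im, ofReal_re, ofReal_im, I_re, I_im,
      re_lB, im_lB, intCast_re, intCast_im, arctan_two_sub]
    push_cast
    ring

lemma cross15 : d15.F (√3)⁻¹ - e15.F (√3)⁻¹ = 91 * Real.pi ^ 4 / 9720 * Real.log 2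
    - 5 * Real.pi ^ 4 / 486 * Real.log 2
      + Real.pi ^ 2 / 108 * (Real.log 2 ^ 3 - Real.log 2 * Real.pi ^ 2 / 12) := by
  have h : exp (Real.log 2 : ℝ) = 2 := by
    rw [← ofReal_exp, Real.exp_log two_pos]; norm_num
  refine F_sub_F x15 ?_ ?_ ?_
  · simp [Datum.x, d15, e15, lam]; ring
  · rw [h]; simp [d15]; ring
  · rw [exp_neg, h]; simp [e15]; ring

lemma cross19 : d19.F (2 - √3) - e19.F (2 - √3) = 91 * Real.pi ^ 4 / 9720 * (2 * Real.log 2)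
    - 5 * Real.pi ^ 4 / 486 * (2 * Real.log 2)
      + Real.pi ^ 2 / 108 * ((2 * Real.log 2) ^ 3 - (2 * Real.log 2) * Real.pi ^ 2 / 12) := by
  have h : exp (2 * Real.log 2 : ℝ) = 4 := by
    rw [← ofReal_exp, mul_comm, Real.exp_mul, Real.exp_log two_pos]; norm_num
  refine F_sub_F x19 ?_ ?_ ?_
  · simp [Datum.x, d19, e19, lam]; ring
  · rw [h]; simp [d19]; ring
  · rw [exp_neg, h]; simp [e19]; ring

/-- In the value at `1`, `Li₄` survives only at `1`, and `Li₂` only at `1` and `1 / 2`. -/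
lemma table_one : (table.map fun d => d.C * d.F 1).sum + 8 * e15.F 1 - e19.F 1 / 2
    = 32 * (Li 5 ((1 + I) / 2)).re - (Li 5 (1 / 2)).re - 421 / 16 * (Li 5 1).re
      - 32 * (Li 5 I).re + (Li 5 (-1)).re / 8 + 15 / 8 * Real.log 2 * (Li 4 1).re
      + (4 * Real.log 2 ^ 2 - Real.pi ^ 2) * ((Li 3 ((1 + I) / 2)).re - (Li 3 I).re)
      + (9 / 16 * Real.pi ^ 2 - 17 / 8 * Real.log 2 ^ 2) * (Li 3 1).re
      + (Real.pi ^ 2 / 16 - Real.log 2 ^ 2 / 2) * (Li 3 (1 / 2)).re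
      - Real.pi ^ 2 / 32 * (Li 3 (-1)).re + 4 * Real.log 2 * Real.pi * (Li 3 I).im
      + (Real.log 2 ^ 3 - Real.log 2 * Real.pi ^ 2) / 4 * (Li 2 1).re
      - Real.log 2 * Real.pi ^ 2 / 16 * (Li 2 (1 / 2)).re := by
  have hI := I_sq
  have h4 : (1 + I : ℂ) ≠ 0 := by simpa using one_add_I_mul_ne 1
  have h5 : (1 - I : ℂ) ≠ 0 := by simpa using one_sub_I_mul_ne 1
  simp only [table, List.map_cons, List.map_nil, List.sum_cons, List.sum_nil]
  rw [F_one (f := (1 - I) / 2), F_one (f := (1 + I) / 2), F_one (f := 1), F_one (f := I),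
    F_one (f := 1 / 2), F_one (f := 1), F_one (f := 1), F_one (f := -1), F_one (f := -1),
    F_one (f := 1), F_one (f := (1 - I) / 2), F_one (f := 1), F_one (f := -I), F_one (f := 1),
    F_one (f := 1), F_one (f := 1), F_one (f := 1 / 2), F_one (f := 1),
    F_one (d := e15) (f := (1 + I) / 2), F_one (d := e19) (f := 1 / 2)]
  on_goal 1 =>
    simp only [e15, e19, PhiR, Li_conj_half, Li_neg_I, conj_re, conj_im, Li_one_im, Li_neg_one_im,
      Li_half_im]
    push_cast
    ring
  all_goals
    dsimp only [e15, e19]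
    simp only [zpow_neg, one_mul, neg_neg, neg_zero, zpow_ofNat]
    generalize hC : 1 + I = c at *
    generalize hD : 1 - I = d at *
    try field_simp
    try grind

lemma table_lim : (table.map fun d => d.C * d.lim).sum = -32 * (Li 5 ((1 + I) / 2)).re
    + 9 * (Li 5 (1 / 2)).re + 125 / 16 * (Li 5 1).re - (Li 5 (-1)).re / 8 := by
  simp only [table, Datum.lim, List.map_cons, List.map_nil, List.sum_cons, List.sum_nil,
    Li_conj_half, conj_re]
  norm_num
  ring

lemma Qinv_re (k x : ℂ) : (Qinv k x).re
    = -(x.re ^ 5 - 10 * x.re ^ 3 * x.im ^ 2 + 5 * x.re * x.im ^ 4) / 30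
      + (k.re * (x.re ^ 4 - 6 * x.re ^ 2 * x.im ^ 2 + x.im ^ 4)
        - k.im * (4 * x.re ^ 3 * x.im - 4 * x.re * x.im ^ 3)) / 24 := by
  simp only [Qinv, pow_succ, pow_zero, one_mul, add_re, neg_re, mul_re, mul_im, div_ofNat_re]
  ring

lemma Pc_re : (Pc 0 wP wM).re = -37 / 30 * (wP.re ^ 5 - 10 * wP.re ^ 3 * wP.im ^ 2
      + 5 * wP.re * wP.im ^ 4)
    + (wP.re ^ 2 + wP.im ^ 2) * (wP.re ^ 3 - 3 * wP.re * wP.im ^ 2) / 2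
    + (wP.re ^ 2 + wP.im ^ 2) ^ 2 * wP.re
    + wP.re * ((wP.re ^ 4 - 6 * wP.re ^ 2 * wP.im ^ 2 + wP.im ^ 4) / 2
      - 2 * (wP.re ^ 2 + wP.im ^ 2) * (wP.re ^ 2 - wP.im ^ 2) / 3
      - (wP.re ^ 2 + wP.im ^ 2) ^ 2 / 2)
    - 2 / 3 * wP.im * (4 * wP.re ^ 3 * wP.im - 4 * wP.re * wP.im ^ 3) := by
  have h : wM = (starRingEnd ℂ) wP := conj_wP.symm
  rw [Pc, h]
  generalize wP = w
  simp only [pow_succ, pow_zero, one_mul, add_re, sub_re, mul_re, mul_im, add_im, sub_im,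
    div_ofNat_re, div_ofNat_im, conj_re, conj_im, neg_re, neg_im, re_ofNat, im_ofNat, zero_re,
    zero_im]
  ring

theorem li5_ladder_B :
    16 * (Li 5 ((1 + I) / 2)).re - (5 / 2) * (Li 5 (1 / 2)).re
      + Real.log 2 ^ 5 / 60 - 5 * Real.pi ^ 2 * Real.log 2 ^ 3 / 288
      + 343 * Real.pi ^ 4 * Real.log 2 / 11520 = (2139 / 256) * zeta5 := by
  have q1 : d15.x 1 = wM := by simp [d15, Datum.x, lam, lL, lB_one]
  have q2 : d19.x 1 = 2 * wM := by simp [d19, Datum.x, lam, lL, lB_one]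
  have k1 := Li_neg_one_re (n := 3) (by norm_num)
  have k2 := Li_neg_one_re (n := 5) (by norm_num)
  have k3 := Li_I_re (n := 3) (by norm_num)
  have k4 := Li_I_re (n := 5) (by norm_num)
  have l1 : (Li 3 (-1)).re = -3 / 4 * (Li 3 1).re := by linarith
  have l2 : (Li 5 (-1)).re = -15 / 16 * (Li 5 1).re := by linarith
  have l3 : (Li 3 I).re = -3 / 32 * (Li 3 1).re := by linarith
  have l4 : (Li 5 I).re = -15 / 512 * (Li 5 1).re := by linarith
  have h := master
  have h1 := table_one
  have h2 := cross15
  have h3 := cross19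
  have h4 := table_lim
  rw [l1, l2, l3, l4, Li_z_three, Li_half_three, Li_half_two, Li_I_im_three, Li_one_re_two,
    Li_one_re_four, Li_one_re_five] at h1
  rw [l2, Li_one_re_five] at h4
  rw [h4, q1, q2, x15, x19] at h
  simp only [Qinv_re, Pc_re, add_re, sub_re, mul_re, mul_im, add_im, sub_im, re_ofNat, im_ofNat,
    ofReal_re, ofReal_im, I_re, I_im, re_wP, re_wM, im_wP, im_wM] at h
  linear_combination h / 4 - h1 / 4 - 2 * h2 + h3 / 8
end

section
/- (16/81)·Re Li₅(i/√8) − 32·Re Li₅(−i/√2) − (7/9)·Li₅(1/2) + (log⁵2)/432 − (π² log³2)/648 + (π⁴ log 2)/972 = (403/2592)·ζ(5). (This is the ladder relation C̃₅ = (13/81)·λ(5), with λ(5) = (31/32)ζ(5).) -/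
/-!
The relation is the value at `x = 1/2` of a one-variable functional equation for `Li₅`: the case
`y = x` of Kummer's two-variable equation, whose twelve arguments are all of the form
`± xᵃ (1 - x)ᵇ`.

Write `X = log x` and `Y = log (1 - x)`. Each argument is `± exp (a X + b Y)`, so differentiating
`Liₙ₊₁` of it gives `Liₙ` of it times `a/x - b/(1 - x)`. Hence the combinations `G n i j`, where
the terms have order `n + 1` and carry the extra weights `aⁱ bʲ`, are closed under
differentiation (`G_deriv`). For `i + j = 4` the combination of order one is a combination of
logarithms, and those of `1 + x`, `2 - x`, `1 - 2x` and `1 - x + x²` all cancel, leaving only `X`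
and `Y` (`G_zero`). Integrating four times, with the constants read off as `x → 0⁺` (`G_lim`,
`G_step`), gives `G 4 0 0` on `(0, 1/2)` as a polynomial in `X`, `Y`, `π²` and `ζ(5)` (`G_eq`).

Both sides are continuous at `x = 1/2`, where the arguments become `-1/8`, `±1/2`, `1/4`, `±1` and
`-2` (`G_half`, `G_half_terms`). Inversion (`Q_inv`) trades `-2` for `-1/2`, and duplication
(`p_dup`) trades `1/4` for `±1/2` and `-1` for `1`. Finally `Re Li₅(iy) = Li₅(-y²)/32`
(`Li_imag_re`), again by duplication, turns `-1/8` and `-1/2` into the imaginary arguments of the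
statement.

The argument `-x/(1 - x)²` leaves the disc of convergence, so `Li` at negative arguments is
replaced by its continuation `Q` to the whole negative axis.
-/

open Complex

namespace Ladder
open Filter Topology Set

/-! ### The polylogarithm on the real line -/

/-- The real polylogarithm `∑_{k ≥ 1} u^k / k^n`; it is used only for `|u| ≤ 1`. -/
noncomputable def p (n : ℕ) (u : ℝ) : ℝ := ∑' k : ℕ, u ^ (k + 1) / ((k + 1 : ℕ) : ℝ) ^ n

lemma summable_inv {n : ℕ} (hn : 2 ≤ n) : Summable fun k : ℕ => 1 / ((k + 1 : ℕ) : ℝ) ^ n :=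
  (summable_nat_add_iff 1).2 (Real.summable_one_div_nat_pow.2 hn)

lemma Li_term_le {n : ℕ} {z : ℂ} (hz : ‖z‖ ≤ 1) (k : ℕ) :
    ‖z ^ (k + 1) / ((k + 1 : ℕ) : ℂ) ^ n‖ ≤ 1 / ((k + 1 : ℕ) : ℝ) ^ n := by
  rw [norm_div, norm_pow, norm_pow, Complex.norm_natCast]
  gcongr
  exact pow_le_one₀ (norm_nonneg _) hz

lemma Li_summable {n : ℕ} (hn : 2 ≤ n) {z : ℂ} (hz : ‖z‖ ≤ 1) :
    Summable fun k : ℕ => z ^ (k + 1) / ((k + 1 : ℕ) : ℂ) ^ n :=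
  Summable.of_norm_bounded (summable_inv hn) (Li_term_le hz)

lemma Li_ofReal (n : ℕ) (u : ℝ) : Li n (u : ℂ) = (p n u : ℂ) := by
  simp [Li, p, Complex.ofReal_tsum]

/-- Duplication: the terms of odd order cancel in `Liₙ(z) + Liₙ(-z)`. -/
lemma Li_dup {n : ℕ} (hn : 2 ≤ n) {z : ℂ} (hz : ‖z‖ ≤ 1) :
    Li n z + Li n (-z) = 2 / 2 ^ n * Li n (z ^ 2) := by
  have h1 := Li_summable hn hz
  have h2 := Li_summable hn (z := -z) (by rwa [norm_neg])
  have h3 := h1.add h2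
  have hz2 : ‖z ^ 2‖ ≤ 1 := by rw [norm_pow]; exact pow_le_one₀ (norm_nonneg _) hz
  unfold Li
  rw [← h1.tsum_add h2, ← tsum_mul_left, ← tsum_even_add_odd]
  · have e0 : ∀ k : ℕ, z ^ (2 * k + 1) / ((2 * k + 1 : ℕ) : ℂ) ^ n
        + (-z) ^ (2 * k + 1) / ((2 * k + 1 : ℕ) : ℂ) ^ n = 0 := by
      intro k
      rw [Odd.neg_pow ⟨k, rfl⟩]; ring
    simp only [e0, tsum_zero, zero_add]
    refine tsum_congr fun k => ?_
    have : (2 * k + 1 + 1) = 2 * (k + 1) := by ring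
    rw [this, Even.neg_pow ⟨k + 1, by ring⟩, Nat.cast_mul, mul_pow, ← pow_mul]
    push_cast
    have : ((k : ℂ) + 1) ≠ 0 := by exact_mod_cast Nat.succ_ne_zero k
    field_simp
    norm_num
  · exact h3.comp_injective (fun a b h => by simpa using h)
  · exact h3.comp_injective (fun a b h => by simpa using h)

lemma p_dup {n : ℕ} (hn : 2 ≤ n) {u : ℝ} (hu : |u| ≤ 1) :
    p n u + p n (-u) = 2 / 2 ^ n * p n (u ^ 2) := by
  have := Li_dup hn (z := (u : ℂ)) (by simpa using hu)
  rw [← Complex.ofReal_neg, ← Complex.ofReal_pow, Li_ofReal, Li_ofReal, Li_ofReal] at this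
  apply Complex.ofReal_injective
  push_cast
  exact this

lemma p_zero {n : ℕ} : p n 0 = 0 := by simp [p]

lemma p_neg_one {n : ℕ} (hn : 2 ≤ n) : p n (-1) = (2 / 2 ^ n - 1) * p n 1 := by
  have := p_dup hn (u := 1) (by simp)
  norm_num at this ⊢
  linarith

lemma p_two_one : p 2 1 = Real.pi ^ 2 / 6 := by
  have := ((hasSum_nat_add_iff' 1).2 hasSum_zeta_two).tsum_eq
  simpa [p] using this

lemma p_four_one : p 4 1 = Real.pi ^ 4 / 90 := by
  have := ((hasSum_nat_add_iff' 1).2 hasSum_zeta_four).tsum_eq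
  simpa [p] using this

lemma p_five_one : p 5 1 = zeta5 := by simp [p, zeta5]

lemma p_one {u : ℝ} (hu : |u| < 1) : p 1 u = -Real.log (1 - u) := by
  have := (Real.hasSum_pow_div_log_of_abs_lt_one hu).tsum_eq
  simpa [p] using this

lemma p_continuousOn {n : ℕ} (hn : 2 ≤ n) : ContinuousOn (p n) (Icc (-1) 1) := by
  unfold p
  refine continuousOn_tsum (fun k => by fun_prop) (summable_inv hn) fun k x hx => ?_
  have := Li_term_le (n := n) (z := (x : ℂ)) (by simpa using abs_le.2 hx) k
  exact_mod_cast this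

/-- `Liₙ₊₁' = Liₙ(u) / u`, by termwise differentiation. -/
lemma p_hasDerivAt (n : ℕ) {u : ℝ} (hu : |u| < 1) (h0 : u ≠ 0) :
    HasDerivAt (p (n + 1)) (p n u / u) u := by
  obtain ⟨r, hr1, hr2⟩ := exists_between hu
  have hr0 : 0 ≤ r := (abs_nonneg u).trans hr1.le
  have key := hasDerivAt_tsum_of_isPreconnected
    (g := fun (k : ℕ) (y : ℝ) => y ^ (k + 1) / ((k + 1 : ℕ) : ℝ) ^ (n + 1))
    (g' := fun (k : ℕ) (y : ℝ) => y ^ k / ((k + 1 : ℕ) : ℝ) ^ n)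
    (u := fun k => r ^ k) (t := Ioo (-r) r) (y₀ := u) (y := u)
    (summable_geometric_of_lt_one hr0 hr2) isOpen_Ioo isPreconnected_Ioo
    (fun k y _ => by
      have := (hasDerivAt_pow (k + 1) y).div_const (((k + 1 : ℕ) : ℝ) ^ (n + 1))
      refine this.congr_deriv ?_
      have : ((k + 1 : ℕ) : ℝ) ≠ 0 := by positivity
      rw [Nat.add_sub_cancel, pow_succ]
      field_simp)
    (fun k y hy => by
      rw [norm_div, norm_pow, norm_pow, Real.norm_natCast]
      have h1 : (1 : ℝ) ≤ ((k + 1 : ℕ) : ℝ) ^ n :=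
        one_le_pow₀ (by exact_mod_cast Nat.le_add_left 1 k)
      have h2 : ‖y‖ ^ k ≤ r ^ k := pow_le_pow_left₀ (norm_nonneg _) (abs_lt.2 hy).le k
      exact (div_le_self (by positivity) h1).trans h2)
    (abs_lt.1 hr1)
    (by
      refine Summable.of_norm_bounded (summable_geometric_of_lt_one (abs_nonneg u) hu)
        (fun k => ?_)
      rw [norm_div, norm_pow, norm_pow, Real.norm_natCast, Real.norm_eq_abs]
      have h1 : (1 : ℝ) ≤ ((k + 1 : ℕ) : ℝ) ^ (n + 1) :=
        one_le_pow₀ (by exact_mod_cast Nat.le_add_left 1 k)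
      exact (div_le_self (by positivity) h1).trans
        (pow_le_pow_of_le_one (abs_nonneg u) hu.le (Nat.le_succ k)))
    (abs_lt.1 hr1)
  have e : p n u / u = ∑' k : ℕ, u ^ k / ((k + 1 : ℕ) : ℝ) ^ n := by
    unfold p
    rw [← tsum_div_const]
    refine tsum_congr fun k => ?_
    rw [pow_succ]; field_simp
  rw [e]
  exact key

/-- A function with zero derivative on an open preconnected set equals its limit along any filter
containing that set. -/
lemma eq_of_deriv_zero {s : Set ℝ} (hs : IsOpen s) (hs' : IsPreconnected s) {f : ℝ → ℝ}
    (hf : ∀ x ∈ s, HasDerivAt f 0 x) {l : Filter ℝ} [l.NeBot] (hl : s ∈ l) {c : ℝ}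
    (hc : Tendsto f l (𝓝 c)) {x : ℝ} (hx : x ∈ s) : f x = c := by
  have h : ∀ y ∈ s, f y = f x := fun y hy =>
    hs.is_const_of_deriv_eq_zero hs' (fun z hz => (hf z hz).differentiableAt.differentiableWithinAt)
      (fun z hz => (hf z hz).deriv) hy hx
  have : Tendsto f l (𝓝 (f x)) :=
    tendsto_const_nhds.congr' (by filter_upwards [hl] with y hy using (h y hy).symm)
  exact tendsto_nhds_unique this hc

/-! ### Polylogarithms of `±eˢ` and inversion -/

/-- `R n s = Liₙ₊₁(eˢ)`; it is used only for `s ≤ 0`. -/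
noncomputable def R (n : ℕ) (s : ℝ) : ℝ := p (n + 1) (Real.exp s)

/-- The continuation of `s ↦ Liₙ₊₁(-eˢ)` from `s ≤ 0` to all of `ℝ`, built by repeated
integration from `Li₁(-eˢ) = -log (1 + eˢ)`. The argument `-eˢ` avoids the branch point `1`, so
there is no singularity at `s = 0`. -/
noncomputable def Q : ℕ → ℝ → ℝ
  | 0 => fun s => -Real.log (1 + Real.exp s)
  | n + 1 => fun s => p (n + 2) (-1) + ∫ t in (0 : ℝ)..s, Q n t

lemma Q_continuous (n : ℕ) : Continuous (Q n) := by
  induction n with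
  | zero =>
    refine (Continuous.log (by fun_prop) fun s => ?_).neg
    positivity
  | succ n ih =>
    exact continuous_const.add
      (intervalIntegral.continuous_primitive (fun a b => ih.intervalIntegrable a b) 0)

lemma Q_hasDerivAt (n : ℕ) (s : ℝ) : HasDerivAt (Q (n + 1)) (Q n s) s :=
  (intervalIntegral.integral_hasDerivAt_right ((Q_continuous n).intervalIntegrable _ _)
    (Q_continuous n).stronglyMeasurable.stronglyMeasurableAtFilter
    (Q_continuous n).continuousAt).const_add _

lemma Q_zero (n : ℕ) : Q (n + 1) 0 = p (n + 2) (-1) := by simp [Q]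

lemma R_hasDerivAt (n : ℕ) {s : ℝ} (hs : s < 0) : HasDerivAt (R (n + 1)) (R n s) s := by
  have h := (p_hasDerivAt (n + 1) (u := Real.exp s)
    (by rw [abs_of_pos (Real.exp_pos s)]; simpa using hs) (Real.exp_pos s).ne').comp s
      (Real.hasDerivAt_exp s)
  rw [div_mul_cancel₀ _ (Real.exp_pos s).ne'] at h
  exact h

lemma pm_hasDerivAt (n : ℕ) {s : ℝ} (hs : s < 0) :
    HasDerivAt (fun s => p (n + 2) (-Real.exp s)) (p (n + 1) (-Real.exp s)) s := by
  have h := (p_hasDerivAt (n + 1) (u := -Real.exp s)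
    (by rw [abs_neg, abs_of_pos (Real.exp_pos s)]; simpa using hs)
    (neg_ne_zero.2 (Real.exp_pos s).ne')).comp s (Real.hasDerivAt_exp s).neg
  rw [div_mul_cancel₀ _ (neg_ne_zero.2 (Real.exp_pos s).ne')] at h
  exact h

lemma pm_continuousOn (n : ℕ) :
    ContinuousOn (fun s => p (n + 2) (-Real.exp s)) (Iic 0) := by
  refine (p_continuousOn (Nat.le_add_left 2 n)).comp (by fun_prop) fun s hs => ?_
  have h1 := Real.exp_pos s
  have h2 : Real.exp s ≤ 1 := by simpa using hs
  constructor <;> linarith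

lemma R_continuousOn (n : ℕ) : ContinuousOn (R (n + 1)) (Iic 0) := by
  refine (p_continuousOn (Nat.le_add_left 2 n)).comp (by fun_prop) fun s hs => ?_
  have h1 := Real.exp_pos s
  have h2 : Real.exp s ≤ 1 := by simpa using hs
  constructor <;> linarith

lemma Q_eq (n : ℕ) : ∀ {s : ℝ}, s < 0 → Q n s = p (n + 1) (-Real.exp s) := by
  induction n with
  | zero =>
    intro s hs
    rw [zero_add, p_one (by rw [abs_neg, abs_of_pos (Real.exp_pos s)]; simpa using hs)]
    simp [Q]
  | succ n ih =>
    intro s hs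
    have := eq_of_deriv_zero (s := Iio 0) isOpen_Iio isPreconnected_Iio
      (f := fun s => Q (n + 1) s - p (n + 2) (-Real.exp s)) (l := 𝓝[<] 0) (c := 0)
      (fun x hx => by
        have := (Q_hasDerivAt n x).sub (pm_hasDerivAt n hx)
        rwa [ih hx, sub_self] at this)
      self_mem_nhdsWithin
      (by
        have h1 : Tendsto (Q (n + 1)) (𝓝[<] 0) (𝓝 (Q (n + 1) 0)) :=
          ((Q_continuous (n + 1)).tendsto 0).mono_left nhdsWithin_le_nhds
        have h2 := ((pm_continuousOn n) 0 (by simp)).tendsto.mono_left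
          (nhdsWithin_mono 0 Iio_subset_Iic_self)
        have h3 := h1.sub h2
        simpa [Q_zero] using h3) hs
    linarith

lemma R_atBot (n : ℕ) : Tendsto (R (n + 1)) atBot (𝓝 0) := by
  have h : ContinuousAt (p (n + 2)) 0 :=
    (p_continuousOn (Nat.le_add_left 2 n)).continuousAt (Icc_mem_nhds (by norm_num) (by norm_num))
  have h2 := h.tendsto.comp Real.tendsto_exp_atBot
  rwa [p_zero] at h2

lemma Q_atBot (n : ℕ) : Tendsto (Q (n + 1)) atBot (𝓝 0) := by
  have h : ContinuousAt (p (n + 2)) 0 :=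
    (p_continuousOn (Nat.le_add_left 2 n)).continuousAt (Icc_mem_nhds (by norm_num) (by norm_num))
  have e : Tendsto (fun s => -Real.exp s) atBot (𝓝 0) := by
    simpa using Real.tendsto_exp_atBot.neg
  have h2 := h.tendsto.comp e
  rw [p_zero] at h2
  refine h2.congr' ?_
  filter_upwards [eventually_lt_atBot 0] with s hs using (Q_eq (n + 1) hs).symm

lemma Q_inv_zero (s : ℝ) : Q 0 s - Q 0 (-s) = -s := by
  have h1 : 1 + Real.exp s = Real.exp s * (1 + Real.exp (-s)) := by
    rw [mul_add, ← Real.exp_add]; simp [add_comm]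
  have h2 : 1 + Real.exp (-s) ≠ 0 := by positivity
  simp only [Q]
  rw [h1, Real.log_mul (Real.exp_pos s).ne' h2, Real.log_exp]
  ring

/-- Functions on `ℝ` with the same derivative and the same value at `0` agree. -/
lemma eq_of_deriv {f g f' : ℝ → ℝ} (hf : ∀ x, HasDerivAt f (f' x) x)
    (hg : ∀ x, HasDerivAt g (f' x) x) (h0 : f 0 = g 0) (x : ℝ) : f x = g x := by
  have := eq_of_deriv_zero (s := univ) isOpen_univ isPreconnected_univ
    (f := fun s => f s - g s) (l := 𝓝 0) (c := 0)
    (fun x _ => ((hf x).sub (hg x)).congr_deriv (sub_self _)) univ_mem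
    (by
      have := ((hf 0).continuousAt.sub (hg 0).continuousAt).tendsto
      rwa [Pi.sub_apply, h0, sub_self] at this) (mem_univ x)
  linarith

lemma Q_neg_hasDerivAt (n : ℕ) (s : ℝ) :
    HasDerivAt (fun s => Q (n + 1) (-s)) (-Q n (-s)) s := by
  exact ((Q_hasDerivAt n (-s)).comp s (hasDerivAt_neg s)).congr_deriv (by ring)

lemma p_two_neg_one : p 2 (-1) = -Real.pi ^ 2 / 12 := by
  rw [p_neg_one le_rfl, p_two_one]; ring

lemma p_four_neg_one : p 4 (-1) = -7 * Real.pi ^ 4 / 720 := by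
  rw [p_neg_one (by norm_num), p_four_one]; ring

/-- The inversion formula for `Li₅` at a negative argument, by integrating
`Li₁(-eˢ) - Li₁(-e⁻ˢ) = -s` four times. -/
lemma Q_inv (s : ℝ) : Q 4 s - Q 4 (-s)
    = -s ^ 5 / 120 - Real.pi ^ 2 / 36 * s ^ 3 - 7 * Real.pi ^ 4 / 360 * s := by
  have h1 : ∀ s, Q 1 s + Q 1 (-s) = -s ^ 2 / 2 - Real.pi ^ 2 / 6 := by
    refine eq_of_deriv (fun s => (Q_hasDerivAt 0 s).add (Q_neg_hasDerivAt 0 s)) (fun s => ?_) ?_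
    · have := (((hasDerivAt_pow 2 s).neg.div_const 2).sub_const (Real.pi ^ 2 / 6))
      refine this.congr_deriv ?_
      have := Q_inv_zero s
      norm_num
      linarith
    · simp only [neg_zero, Q_zero, zero_add, p_two_neg_one]; ring
  have h2 : ∀ s, Q 2 s - Q 2 (-s) = -s ^ 3 / 6 - Real.pi ^ 2 / 6 * s := by
    refine eq_of_deriv (fun s => (Q_hasDerivAt 1 s).sub (Q_neg_hasDerivAt 1 s)) (fun s => ?_) ?_
    · have := (((hasDerivAt_pow 3 s).neg.div_const 6).sub
        ((hasDerivAt_id s).const_mul (Real.pi ^ 2 / 6)))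
      refine this.congr_deriv ?_
      have := h1 s
      norm_num
      linarith
    · simp
  have h3 : ∀ s, Q 3 s + Q 3 (-s)
      = -s ^ 4 / 24 - Real.pi ^ 2 / 12 * s ^ 2 - 7 * Real.pi ^ 4 / 360 := by
    refine eq_of_deriv (fun s => (Q_hasDerivAt 2 s).add (Q_neg_hasDerivAt 2 s)) (fun s => ?_) ?_
    · have := (((hasDerivAt_pow 4 s).neg.div_const 24).sub
        ((hasDerivAt_pow 2 s).const_mul (Real.pi ^ 2 / 12))).sub_const (7 * Real.pi ^ 4 / 360)
      refine this.congr_deriv ?_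
      have := h2 s
      norm_num
      linarith
    · have h := Q_zero 2
      norm_num at h
      simp only [neg_zero, h, p_four_neg_one]; ring
  refine eq_of_deriv (f := fun s => Q 4 s - Q 4 (-s))
    (g := fun s => -s ^ 5 / 120 - Real.pi ^ 2 / 36 * s ^ 3 - 7 * Real.pi ^ 4 / 360 * s)
    (fun s => (Q_hasDerivAt 3 s).sub (Q_neg_hasDerivAt 3 s)) (fun s => ?_) ?_ s
  · have := (((hasDerivAt_pow 5 s).neg.div_const 120).sub
        ((hasDerivAt_pow 3 s).const_mul (Real.pi ^ 2 / 36))).sub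
        ((hasDerivAt_id s).const_mul (7 * Real.pi ^ 4 / 360))
    refine this.congr_deriv ?_
    have := h3 s
    norm_num
    linarith
  · simp

/-! ### The twelve-term combination -/

/-- For `F n s = Liₙ₊₁(± eˢ)`, the function `aⁱ bʲ Liₙ₊₁(± xᵃ (1 - x)ᵇ)`. Differentiating it lowers
`n` and raises `i` (with factor `1/x`) or `j` (with factor `-1/(1 - x)`). -/
noncomputable def T (F : ℕ → ℝ → ℝ) (a b : ℝ) (n i j : ℕ) (x : ℝ) : ℝ :=
  a ^ i * b ^ j * F n (a * Real.log x + b * Real.log (1 - x))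

lemma T_deriv {F : ℕ → ℝ → ℝ} {a b : ℝ} {n : ℕ} (i j : ℕ) {x : ℝ} (hx0 : 0 < x) (hx1 : x < 1)
    (hF : HasDerivAt (F (n + 1)) (F n (a * Real.log x + b * Real.log (1 - x)))
      (a * Real.log x + b * Real.log (1 - x))) :
    HasDerivAt (T F a b (n + 1) i j) (T F a b n (i + 1) j x / x - T F a b n i (j + 1) x / (1 - x))
      x := by
  have h1 := (Real.hasDerivAt_log hx0.ne').const_mul a
  have h2 := (((hasDerivAt_id x).const_sub 1).log (sub_pos.2 hx1).ne').const_mul b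
  have h := (hF.comp x (h1.add h2)).const_mul (a ^ i * b ^ j)
  refine h.congr_deriv ?_
  simp only [T, id]
  ring

/-- The combination of the twelve polylogarithms of order `n + 1`, each term weighted by
`aⁱ bʲ` as in `T`. For `n = 4` and `i = j = 0` it is the left side of the functional equation for
`Li₅` that Kummer's two-variable equation gives on setting `y = x`. -/
noncomputable def G (n i j : ℕ) (x : ℝ) : ℝ :=
  T Q 3 0 n i j x + T Q 0 3 n i j x + T R 3 (-3) n i j x
  - 54 * (T R 1 0 n i j x + T R 0 1 n i j x + T Q 1 (-1) n i j x)
  - 81 * (T Q 1 0 n i j x + T Q 0 1 n i j x + T R 1 (-1) n i j x)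
  - 9 * (T R 1 1 n i j x + T Q 2 (-1) n i j x + T Q 1 (-2) n i j x)

lemma G_deriv (n i j : ℕ) {x : ℝ} (hx : x ∈ Ioo (0 : ℝ) (1 / 2)) :
    HasDerivAt (G (n + 1) i j) (G n (i + 1) j x / x - G n i (j + 1) x / (1 - x)) x := by
  obtain ⟨h0, h1⟩ := hx
  have h2 : x < 1 := by linarith
  have hX : Real.log x < 0 := Real.log_neg h0 h2
  have hY : Real.log (1 - x) < 0 := Real.log_neg (by linarith) (by linarith)
  have hXY : Real.log x < Real.log (1 - x) := Real.log_lt_log h0 (by linarith)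
  have hQ : ∀ a b : ℝ, HasDerivAt (T Q a b (n + 1) i j)
      (T Q a b n (i + 1) j x / x - T Q a b n i (j + 1) x / (1 - x)) x :=
    fun a b => T_deriv i j h0 h2 (Q_hasDerivAt n _)
  have hR : ∀ a b : ℝ, a * Real.log x + b * Real.log (1 - x) < 0 → HasDerivAt (T R a b (n + 1) i j)
      (T R a b n (i + 1) j x / x - T R a b n i (j + 1) x / (1 - x)) x :=
    fun a b h => T_deriv i j h0 h2 (R_hasDerivAt n h)
  have h := (((((hQ 3 0).add (hQ 0 3)).add (hR 3 (-3) (by linarith))).sub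
    ((((hR 1 0 (by linarith)).add (hR 0 1 (by linarith))).add (hQ 1 (-1))).const_mul 54)).sub
    ((((hQ 1 0).add (hQ 0 1)).add (hR 1 (-1) (by linarith))).const_mul 81)).sub
    ((((hR 1 1 (by linarith)).add (hQ 2 (-1))).add (hQ 1 (-2))).const_mul 9)
  refine h.congr_deriv ?_
  simp only [G]
  ring

lemma log_one_sub_tendsto : Tendsto (fun x : ℝ => Real.log (1 - x)) (𝓝[>] 0) (𝓝 0) := by
  have : ContinuousAt (fun x : ℝ => Real.log (1 - x)) 0 :=
    ContinuousAt.log (by fun_prop) (by norm_num)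
  simpa using this.tendsto.mono_left nhdsWithin_le_nhds

lemma log_mul_log_tendsto :
    Tendsto (fun x : ℝ => Real.log x * Real.log (1 - x)) (𝓝[>] 0) (𝓝 0) := by
  have h1 := tendsto_log_mul_rpow_nhdsGT_zero one_pos
  simp only [Real.rpow_one] at h1
  have h2 : HasDerivAt (fun x : ℝ => Real.log (1 - x)) (-1) 0 := by
    simpa using ((hasDerivAt_id (0 : ℝ)).const_sub 1).log (by norm_num)
  have h3 := h1.mul (h2.tendsto_slope_zero_right)
  rw [zero_mul] at h3
  refine h3.congr' ?_
  filter_upwards [self_mem_nhdsWithin] with x hx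
  have : x ≠ 0 := (mem_Ioi.1 hx).ne'
  simp
  field_simp

/-- Terms whose argument tends to `0` with `x` drop out in the limit. -/
lemma T_lim_zero {F : ℕ → ℝ → ℝ} {n : ℕ} (hF : Tendsto (F n) atBot (𝓝 0)) {a : ℝ} (ha : 0 < a)
    (b : ℝ) (i j : ℕ) : Tendsto (T F a b n i j) (𝓝[>] 0) (𝓝 0) := by
  have h1 : Tendsto (fun x => a * Real.log x + b * Real.log (1 - x)) (𝓝[>] 0) atBot :=
    tendsto_atBot_add_right_of_ge' _ (b * 0 + 1)
      (Real.tendsto_log_nhdsGT_zero.const_mul_atBot ha)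
      (by
        have := (log_one_sub_tendsto.const_mul b).eventually_lt_const
          (lt_add_one (b * 0))
        filter_upwards [this] with x hx using hx.le)
  have h2 := (hF.comp h1).const_mul (a ^ i * b ^ j)
  rwa [mul_zero] at h2

lemma T_lim_one {F : ℕ → ℝ → ℝ} {n : ℕ} (hF : ContinuousWithinAt (F n) (Iic 0) 0) {b : ℝ}
    (hb : 0 < b) (i j : ℕ) : Tendsto (T F 0 b n i j) (𝓝[>] 0) (𝓝 (0 ^ i * b ^ j * F n 0)) := by
  have h1 : Tendsto (fun x => 0 * Real.log x + b * Real.log (1 - x)) (𝓝[>] 0) (𝓝[≤] 0) := by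
    refine tendsto_nhdsWithin_iff.2 ⟨by simpa using log_one_sub_tendsto.const_mul b, ?_⟩
    filter_upwards [Ioo_mem_nhdsGT (one_pos : (0 : ℝ) < 1)] with x hx
    have := Real.log_neg (x := 1 - x) (by linarith [hx.2]) (by linarith [hx.1])
    simp only [mem_Iic]; nlinarith
  exact (hF.tendsto.comp h1).const_mul (0 ^ i * b ^ j)

/-- As `x → 0⁺`, only the terms in `-(1 - x)³`, `1 - x` and `-(1 - x)` survive. -/
lemma G_lim (n i j : ℕ) : Tendsto (G (n + 1) i j) (𝓝[>] 0)
    (𝓝 (0 ^ i * ((3 ^ j - 81) * p (n + 2) (-1) - 54 * p (n + 2) 1))) := by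
  have hQ0 : ∀ {a : ℝ} (_ : 0 < a) (b : ℝ), Tendsto (T Q a b (n + 1) i j) (𝓝[>] 0) (𝓝 0) :=
    fun ha b => T_lim_zero (Q_atBot n) ha b i j
  have hR0 : ∀ {a : ℝ} (_ : 0 < a) (b : ℝ), Tendsto (T R a b (n + 1) i j) (𝓝[>] 0) (𝓝 0) :=
    fun ha b => T_lim_zero (R_atBot n) ha b i j
  have hQ1 : ∀ {b : ℝ} (_ : 0 < b), Tendsto (T Q 0 b (n + 1) i j) (𝓝[>] 0)
      (𝓝 (0 ^ i * b ^ j * Q (n + 1) 0)) :=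
    fun hb => T_lim_one (Q_continuous _).continuousWithinAt hb i j
  have hR1 : ∀ {b : ℝ} (_ : 0 < b), Tendsto (T R 0 b (n + 1) i j) (𝓝[>] 0)
      (𝓝 (0 ^ i * b ^ j * R (n + 1) 0)) :=
    fun hb => T_lim_one (R_continuousOn n 0 self_mem_Iic) hb i j
  have h := (((((hQ0 three_pos 0).add (hQ1 three_pos)).add (hR0 three_pos (-3))).sub
    ((((hR0 one_pos 0).add (hR1 one_pos)).add (hQ0 one_pos (-1))).const_mul 54)).sub
    ((((hQ0 one_pos 0).add (hQ1 one_pos)).add (hR0 one_pos (-1))).const_mul 81)).sub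
    ((((hR0 one_pos 1).add (hQ0 two_pos (-1))).add (hQ0 one_pos (-2))).const_mul 9)
  refine h.mono_right (le_of_eq (congrArg 𝓝 ?_))
  simp only [Q_zero, R, Real.exp_zero, one_pow]
  ring

/-- One integration step. With `X = log x` and `Y = log (1 - x)`, the candidate
`a X Y^(k+1) + c₀ + ⋯ + c₅ Y⁵` for `G (n + 1) i j` is verified by comparing its partial derivatives
with the combinations one order below, and its limit at `0⁺`, which is `c₀`. -/
lemma G_step {n i j k : ℕ} (a c0 c1 c2 c3 c4 c5 : ℝ)
    (hA : ∀ x ∈ Ioo (0 : ℝ) (1 / 2), G n (i + 1) j x = a * Real.log (1 - x) ^ (k + 1))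
    (hB : ∀ x ∈ Ioo (0 : ℝ) (1 / 2), G n i (j + 1) x =
      a * ((k + 1) * (Real.log x * Real.log (1 - x) ^ k)) + c1 + 2 * c2 * Real.log (1 - x)
        + 3 * c3 * Real.log (1 - x) ^ 2 + 4 * c4 * Real.log (1 - x) ^ 3
        + 5 * c5 * Real.log (1 - x) ^ 4)
    (h0 : 0 ^ i * ((3 ^ j - 81) * p (n + 2) (-1) - 54 * p (n + 2) 1) = c0) :
    ∀ x ∈ Ioo (0 : ℝ) (1 / 2), G (n + 1) i j x = a * (Real.log x * Real.log (1 - x) ^ (k + 1))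
      + c0 + c1 * Real.log (1 - x) + c2 * Real.log (1 - x) ^ 2 + c3 * Real.log (1 - x) ^ 3
      + c4 * Real.log (1 - x) ^ 4 + c5 * Real.log (1 - x) ^ 5 := by
  intro x hx
  have hY := log_one_sub_tendsto
  have hlim : Tendsto (fun x => a * (Real.log x * Real.log (1 - x) ^ (k + 1))
      + c0 + c1 * Real.log (1 - x) + c2 * Real.log (1 - x) ^ 2 + c3 * Real.log (1 - x) ^ 3
      + c4 * Real.log (1 - x) ^ 4 + c5 * Real.log (1 - x) ^ 5) (𝓝[>] 0) (𝓝 c0) := by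
    have h1 : Tendsto (fun x => Real.log x * Real.log (1 - x) ^ (k + 1)) (𝓝[>] 0) (𝓝 0) := by
      have := log_mul_log_tendsto.mul (hY.pow k)
      rw [zero_mul] at this
      refine this.congr fun x => ?_
      ring
    have := ((((((h1.const_mul a).add_const c0).add (hY.const_mul c1)).add
      ((hY.pow 2).const_mul c2)).add ((hY.pow 3).const_mul c3)).add
      ((hY.pow 4).const_mul c4)).add ((hY.pow 5).const_mul c5)
    refine this.mono_right (le_of_eq (congrArg 𝓝 ?_))
    norm_num
  have := eq_of_deriv_zero isOpen_Ioo isPreconnected_Ioo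
    (f := fun x => G (n + 1) i j x - (a * (Real.log x * Real.log (1 - x) ^ (k + 1))
      + c0 + c1 * Real.log (1 - x) + c2 * Real.log (1 - x) ^ 2 + c3 * Real.log (1 - x) ^ 3
      + c4 * Real.log (1 - x) ^ 4 + c5 * Real.log (1 - x) ^ 5))
    (l := 𝓝[>] 0) (c := 0)
    (fun x hx => by
      have hx0 : x ≠ 0 := hx.1.ne'
      have hx1 : 1 - x ≠ 0 := by have := hx.2; intro h; linarith
      have dX := Real.hasDerivAt_log hx0
      have dY := ((hasDerivAt_id x).const_sub 1).log hx1
      have dP := ((((((((dX.mul (dY.pow (k + 1))).const_mul a).add_const c0).add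
        (dY.const_mul c1)).add ((dY.pow 2).const_mul c2)).add ((dY.pow 3).const_mul c3)).add
        ((dY.pow 4).const_mul c4)).add ((dY.pow 5).const_mul c5))
      refine ((G_deriv n i j hx).sub dP).congr_deriv ?_
      rw [hA x hx, hB x hx]
      simp only [id, Pi.pow_apply, Nat.add_sub_cancel]
      push_cast
      field_simp
      ring)
    (Ioo_mem_nhdsGT (by norm_num : (0 : ℝ) < 1 / 2))
    (by
      have := (G_lim n i j).sub hlim
      rwa [h0, sub_self] at this) hx
  linarith

/-! ### Order one -/

/-- Order one: the logarithms of `1 + x`, `2 - x`, `1 - 2x` and `1 - x + x²` all cancel. -/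
lemma G_zero {i j : ℕ} (hij : i + j = 4) : ∀ x ∈ Ioo (0 : ℝ) (1 / 2),
    G 0 i j x = (if i = 0 then 54 else 0) * Real.log x
      + (if i = 1 then 54 else if i = 0 then -189 else 0) * Real.log (1 - x) := by
  intro x hx
  obtain ⟨h0, h1⟩ := hx
  have hZ : 0 < 1 - x := by linarith
  have hw : 0 < 1 - x + x ^ 2 := by positivity
  have hX : Real.log x < 0 := Real.log_neg h0 (by linarith)
  have hY : Real.log (1 - x) < 0 := Real.log_neg hZ (by linarith)
  have hXY : Real.log x < Real.log (1 - x) := Real.log_lt_log h0 (by linarith)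
  have hQ : ∀ s t : ℝ, 1 + Real.exp s = t → Q 0 s = -Real.log t := by
    rintro s t rfl; rfl
  have hR : ∀ s t : ℝ, s < 0 → 1 - Real.exp s = t → R 0 s = -Real.log t := by
    rintro s t hs rfl
    exact p_one (by rw [abs_of_pos (Real.exp_pos s)]; simpa using hs)
  have eX : Real.exp (Real.log x) = x := Real.exp_log h0
  have eY : Real.exp (Real.log (1 - x)) = 1 - x := Real.exp_log hZ
  have e3 : ∀ s, Real.exp (3 * s) = Real.exp s ^ 3 := fun s => by
    rw [← Real.exp_nat_mul]; norm_num
  have e2 : ∀ s, Real.exp (2 * s) = Real.exp s ^ 2 := fun s => by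
    rw [← Real.exp_nat_mul]; norm_num
  have l3 : 3 * Real.log (1 - x) = Real.log ((1 - x) ^ 3) := by rw [Real.log_pow]; norm_num
  have l2 : 2 * Real.log (1 - x) = Real.log ((1 - x) ^ 2) := by rw [Real.log_pow]; norm_num
  have q1 : Q 0 (3 * Real.log x + 0 * Real.log (1 - x))
      = -(Real.log (1 + x) + Real.log (1 - x + x ^ 2)) := by
    rw [← Real.log_mul (by positivity) hw.ne']
    refine hQ _ _ ?_
    rw [zero_mul, add_zero, e3, eX]; ring
  have q2 : Q 0 (0 * Real.log x + 3 * Real.log (1 - x))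
      = -(Real.log (2 - x) + Real.log (1 - x + x ^ 2)) := by
    rw [← Real.log_mul (by linarith) hw.ne']
    refine hQ _ _ ?_
    rw [zero_mul, zero_add, e3, eY]; ring
  have q3 : R 0 (3 * Real.log x + -3 * Real.log (1 - x))
      = -(Real.log (1 - 2 * x) + Real.log (1 - x + x ^ 2) - 3 * Real.log (1 - x)) := by
    have h2x : 0 < 1 - 2 * x := by linarith
    rw [← Real.log_mul h2x.ne' hw.ne', l3, ← Real.log_div (by positivity) (by positivity)]
    refine hR _ _ (by linarith) ?_
    rw [neg_mul, ← sub_eq_add_neg, Real.exp_sub, e3, e3, eX, eY]; field_simp; ring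
  have q4 : R 0 (1 * Real.log x + 0 * Real.log (1 - x)) = -Real.log (1 - x) :=
    hR _ _ (by linarith) (by rw [zero_mul, add_zero, one_mul, eX])
  have q5 : R 0 (0 * Real.log x + 1 * Real.log (1 - x)) = -Real.log x :=
    hR _ _ (by linarith) (by rw [zero_mul, zero_add, one_mul, eY]; ring)
  have q6 : Q 0 (1 * Real.log x + -1 * Real.log (1 - x)) = Real.log (1 - x) := by
    refine (hQ _ (1 - x)⁻¹ ?_).trans (by rw [Real.log_inv, neg_neg])
    rw [one_mul, neg_one_mul, ← sub_eq_add_neg, Real.exp_sub, eX, eY]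
    field_simp; ring
  have q7 : Q 0 (1 * Real.log x + 0 * Real.log (1 - x)) = -Real.log (1 + x) :=
    hQ _ _ (by rw [zero_mul, add_zero, one_mul, eX])
  have q8 : Q 0 (0 * Real.log x + 1 * Real.log (1 - x)) = -Real.log (2 - x) :=
    hQ _ _ (by rw [zero_mul, zero_add, one_mul, eY]; ring)
  have q9 : R 0 (1 * Real.log x + -1 * Real.log (1 - x))
      = -(Real.log (1 - 2 * x) - Real.log (1 - x)) := by
    rw [← Real.log_div (by linarith) hZ.ne']
    refine hR _ _ (by linarith) ?_
    rw [one_mul, neg_one_mul, ← sub_eq_add_neg, Real.exp_sub, eX, eY]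
    field_simp; ring
  have q10 : R 0 (1 * Real.log x + 1 * Real.log (1 - x)) = -Real.log (1 - x + x ^ 2) :=
    hR _ _ (by linarith) (by rw [one_mul, one_mul, Real.exp_add, eX, eY]; ring)
  have q11 : Q 0 (2 * Real.log x + -1 * Real.log (1 - x))
      = -(Real.log (1 - x + x ^ 2) - Real.log (1 - x)) := by
    rw [← Real.log_div hw.ne' hZ.ne']
    refine hQ _ _ ?_
    rw [neg_one_mul, ← sub_eq_add_neg, Real.exp_sub, e2, eX, eY]
    field_simp
  have q12 : Q 0 (1 * Real.log x + -2 * Real.log (1 - x))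
      = -(Real.log (1 - x + x ^ 2) - 2 * Real.log (1 - x)) := by
    rw [l2, ← Real.log_div hw.ne' (by positivity)]
    refine hQ _ _ ?_
    rw [one_mul, neg_mul, ← sub_eq_add_neg, Real.exp_sub, e2, eX, eY]
    field_simp; ring
  obtain rfl : j = 4 - i := by omega
  have hi : i ≤ 4 := by omega
  simp only [G, T, q1, q2, q3, q4, q5, q6, q7, q8, q9, q10, q11, q12]
  interval_cases i <;> norm_num <;> ring

/-! ### The functional equation -/

lemma p_three_neg_one : p 3 (-1) = -3 / 4 * p 3 1 := by
  rw [p_neg_one (by norm_num)]; norm_num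

lemma p_five_neg_one : p 5 (-1) = -15 / 16 * zeta5 := by
  rw [p_neg_one (by norm_num), p_five_one]; norm_num

/-- The one-variable functional equation for `Li₅` on `(0, 1/2)`. -/
lemma G_eq : ∀ x ∈ Ioo (0 : ℝ) (1 / 2), G 4 0 0 x
    = 9 / 4 * (Real.log x * Real.log (1 - x) ^ 4) + 21 * zeta5
      + 19 * Real.pi ^ 4 / 120 * Real.log (1 - x) - 3 / 4 * Real.pi ^ 2 * Real.log (1 - x) ^ 3
      - 63 / 40 * Real.log (1 - x) ^ 5 := by
  have z40 := G_zero (i := 4) (j := 0) rfl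
  have z31 := G_zero (i := 3) (j := 1) rfl
  have z22 := G_zero (i := 2) (j := 2) rfl
  have z13 := G_zero (i := 1) (j := 3) rfl
  have z04 := G_zero (i := 0) (j := 4) rfl
  have a30 := G_step (n := 0) (i := 3) (j := 0) (k := 0) 0 0 0 0 0 0 0
    (fun x hx => by rw [z40 x hx]; simp) (fun x hx => by rw [z31 x hx]; norm_num)
    (by simp)
  have a21 := G_step (n := 0) (i := 2) (j := 1) (k := 0) 0 0 0 0 0 0 0
    (fun x hx => by rw [z31 x hx]; simp) (fun x hx => by rw [z22 x hx]; norm_num)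
    (by simp)
  have a12 := G_step (n := 0) (i := 1) (j := 2) (k := 0) 0 0 0 27 0 0 0
    (fun x hx => by rw [z22 x hx]; simp) (fun x hx => by rw [z13 x hx]; norm_num)
    (by simp)
  have a03 := G_step (n := 0) (i := 0) (j := 3) (k := 0)
    54 (-9 / 2 * Real.pi ^ 2) 0 (-189 / 2) 0 0 0
    (fun x hx => by rw [z13 x hx]; simp) (fun x hx => by rw [z04 x hx]; norm_num)
    (by simp only [p_two_one, p_two_neg_one, zero_add]; ring)
  have b20 := G_step (n := 1) (i := 2) (j := 0) (k := 0) 0 0 0 0 0 0 0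
    (fun x hx => by rw [a30 x hx]; ring) (fun x hx => by rw [a21 x hx]; norm_num)
    (by simp)
  have b11 := G_step (n := 1) (i := 1) (j := 1) (k := 0) 0 0 0 0 9 0 0
    (fun x hx => by rw [a21 x hx]; ring) (fun x hx => by rw [a12 x hx]; norm_num)
    (by simp)
  have b02 := G_step (n := 1) (i := 0) (j := 2) (k := 1)
    27 0 (-9 / 2 * Real.pi ^ 2) 0 (-63 / 2) 0 0
    (fun x hx => by rw [a12 x hx]; ring) (fun x hx => by rw [a03 x hx]; norm_num; ring)
    (by norm_num [p_three_neg_one]; ring)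
  have c10 := G_step (n := 2) (i := 1) (j := 0) (k := 0) 0 0 0 0 0 (9 / 4) 0
    (fun x hx => by rw [b20 x hx]; ring) (fun x hx => by rw [b11 x hx]; norm_num)
    (by simp)
  have c01 := G_step (n := 2) (i := 0) (j := 1) (k := 2)
    9 (19 * Real.pi ^ 4 / 120) 0 (-9 / 4 * Real.pi ^ 2) 0 (-63 / 8) 0
    (fun x hx => by rw [b11 x hx]; ring) (fun x hx => by rw [b02 x hx]; norm_num; ring)
    (by norm_num [p_four_one, p_four_neg_one]; ring)
  have d00 := G_step (n := 3) (i := 0) (j := 0) (k := 3)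
    (9 / 4) (21 * zeta5) (19 * Real.pi ^ 4 / 120) 0 (-3 / 4 * Real.pi ^ 2) 0 (-63 / 40)
    (fun x hx => by rw [c10 x hx]; ring) (fun x hx => by rw [c01 x hx]; norm_num; ring)
    (by norm_num [p_five_one, p_five_neg_one]; ring)
  intro x hx
  rw [d00 x hx]
  ring

/-! ### The value at `x = 1/2` -/

lemma T_continuousWithinAt {F : ℕ → ℝ → ℝ} {a b : ℝ} {n i j : ℕ} {D : Set ℝ}
    (hF : ContinuousOn (F n) D) (h : ∀ x ∈ Ioc (0 : ℝ) (1 / 2),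
      a * Real.log x + b * Real.log (1 - x) ∈ D) :
    ContinuousWithinAt (T F a b n i j) (Ioc (0 : ℝ) (1 / 2)) (1 / 2) := by
  have hc : ContinuousAt (fun x => a * Real.log x + b * Real.log (1 - x)) (1 / 2) := by
    refine ContinuousAt.add ?_ ?_
    · exact continuousAt_const.mul (Real.continuousAt_log (by norm_num))
    · exact continuousAt_const.mul (ContinuousAt.log (by fun_prop) (by norm_num))
  have hm : (1 / 2 : ℝ) ∈ Ioc (0 : ℝ) (1 / 2) := by norm_num
  have := ContinuousWithinAt.comp (g := F n)
    (f := fun x => a * Real.log x + b * Real.log (1 - x)) (t := D)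
    (hF _ (h _ hm)) hc.continuousWithinAt h
  exact continuousWithinAt_const.mul this

/-- The functional equation extends to `x = 1/2`, where `x / (1 - x) = 1`. -/
lemma G_half : G 4 0 0 (1 / 2)
    = -(27 / 40) * Real.log 2 ^ 5 + 21 * zeta5 - 19 * Real.pi ^ 4 / 120 * Real.log 2
      + 3 / 4 * Real.pi ^ 2 * Real.log 2 ^ 3 := by
  have hQ : ∀ a b : ℝ, ContinuousWithinAt (T Q a b 4 0 0) (Ioc (0 : ℝ) (1 / 2)) (1 / 2) :=
    fun a b => T_continuousWithinAt (Q_continuous 4).continuousOn (fun x _ => mem_univ _)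
  have hR : ∀ a b : ℝ, 0 ≤ a → 0 ≤ a + b →
      ContinuousWithinAt (T R a b 4 0 0) (Ioc (0 : ℝ) (1 / 2)) (1 / 2) := by
    refine fun a b ha hab => T_continuousWithinAt (R_continuousOn 3) (fun x hx => ?_)
    have hY : Real.log (1 - x) ≤ 0 := Real.log_nonpos (by linarith [hx.2]) (by linarith [hx.1])
    have hXY : Real.log x ≤ Real.log (1 - x) := Real.log_le_log hx.1 (by linarith [hx.2])
    simp only [mem_Iic]
    nlinarith
  have hG : ContinuousWithinAt (G 4 0 0) (Ioc (0 : ℝ) (1 / 2)) (1 / 2) :=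
    (((((hQ 3 0).add (hQ 0 3)).add (hR 3 (-3) (by norm_num) (by norm_num))).sub
    (continuousWithinAt_const.mul (((hR 1 0 (by norm_num) (by norm_num)).add
      (hR 0 1 (by norm_num) (by norm_num))).add (hQ 1 (-1))))).sub
    (continuousWithinAt_const.mul (((hQ 1 0).add (hQ 0 1)).add
      (hR 1 (-1) (by norm_num) (by norm_num))))).sub
    (continuousWithinAt_const.mul (((hR 1 1 (by norm_num) (by norm_num)).add
      (hQ 2 (-1))).add (hQ 1 (-2))))
  have hX : ContinuousAt Real.log (1 / 2) := Real.continuousAt_log (by norm_num)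
  have hY : ContinuousAt (fun x : ℝ => Real.log (1 - x)) (1 / 2) :=
    ContinuousAt.log (by fun_prop) (by norm_num)
  have hP : ContinuousAt (fun x => 9 / 4 * (Real.log x * Real.log (1 - x) ^ 4) + 21 * zeta5
      + 19 * Real.pi ^ 4 / 120 * Real.log (1 - x) - 3 / 4 * Real.pi ^ 2 * Real.log (1 - x) ^ 3
      - 63 / 40 * Real.log (1 - x) ^ 5) (1 / 2) := by fun_prop
  have hb : (𝓝[Ioo (0 : ℝ) (1 / 2)] (1 / 2)).NeBot := right_nhdsWithin_Ioo_neBot (by norm_num)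
  have h1 := hG.tendsto.mono_left (nhdsWithin_mono _ Ioo_subset_Ioc_self)
  have h2 := hP.tendsto.mono_left (nhdsWithin_le_nhds (s := Ioo (0 : ℝ) (1 / 2)))
  have h3 := tendsto_nhds_unique (h1.congr' (by
    filter_upwards [self_mem_nhdsWithin] with x hx using G_eq x hx)) h2
  rw [h3, show (1 : ℝ) - 1 / 2 = 2⁻¹ by norm_num, one_div, Real.log_inv]
  ring

lemma G_half_terms : G 4 0 0 (1 / 2) = 2 * p 5 (-1 / 8) + zeta5
    - 54 * (2 * p 5 (1 / 2) + p 5 (-1)) - 81 * (2 * p 5 (-1 / 2) + zeta5)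
    - 9 * (p 5 (1 / 4) + p 5 (-1 / 2) + Q 4 (Real.log 2)) := by
  have hl : Real.log (1 / 2) = -Real.log 2 := by rw [one_div, Real.log_inv]
  have hl' : Real.log (1 - 1 / 2) = -Real.log 2 := by rw [← hl]; norm_num
  have h0 : 0 < Real.log 2 := Real.log_pos (by norm_num)
  have e1 : Real.exp (-Real.log 2) = 1 / 2 := by rw [← hl, Real.exp_log (by norm_num)]
  have e3 : Real.exp (-(3 * Real.log 2)) = 1 / 8 := by
    rw [show -(3 * Real.log 2) = ((3 : ℕ) : ℝ) * (-Real.log 2) by push_cast; ring,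
      Real.exp_nat_mul, e1]; norm_num
  have e2 : Real.exp (-(2 * Real.log 2)) = 1 / 4 := by
    rw [show -(2 * Real.log 2) = ((2 : ℕ) : ℝ) * (-Real.log 2) by push_cast; ring,
      Real.exp_nat_mul, e1]; norm_num
  have q3 : Q 4 (-(3 * Real.log 2)) = p 5 (-1 / 8) := by
    rw [Q_eq 4 (by linarith), e3]; norm_num
  have q1 : Q 4 (-Real.log 2) = p 5 (-1 / 2) := by
    rw [Q_eq 4 (by linarith), e1]; norm_num
  have q0 : Q 4 0 = p 5 (-1) := Q_zero 3
  have r0 : R 4 0 = zeta5 := by simp only [R, Real.exp_zero]; exact p_five_one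
  have r1 : R 4 (-Real.log 2) = p 5 (1 / 2) := by simp only [R, e1]
  have r2 : R 4 (-(2 * Real.log 2)) = p 5 (1 / 4) := by simp only [R, e2]
  simp only [G, T, hl, hl', pow_zero, one_mul, zero_mul, add_zero, zero_add]
  rw [show 3 * -Real.log 2 = -(3 * Real.log 2) by ring,
    show -(3 * Real.log 2) + -3 * -Real.log 2 = 0 by ring,
    show -Real.log 2 + -1 * -Real.log 2 = 0 by ring,
    show -Real.log 2 + -Real.log 2 = -(2 * Real.log 2) by ring,
    show 2 * -Real.log 2 + -1 * -Real.log 2 = -Real.log 2 by ring,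
    show -Real.log 2 + -2 * -Real.log 2 = Real.log 2 by ring, q3, q1, q0, r0, r1, r2]
  ring

/-! ### The ladder -/

/-- The ladder in real form, with arguments `-1/8`, `-1/2` and `1/2`. -/
lemma ladder_real : p 5 (-1 / 8) - 162 * p 5 (-1 / 2) - 126 * p 5 (1 / 2)
    = 403 / 16 * zeta5 - 3 / 8 * Real.log 2 ^ 5 + Real.pi ^ 2 / 4 * Real.log 2 ^ 3
      - Real.pi ^ 4 / 6 * Real.log 2 := by
  have h1 := G_half_terms.symm.trans G_half
  have h2 := Q_inv (Real.log 2)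
  have h3 : Q 4 (-Real.log 2) = p 5 (-1 / 2) := by
    rw [Q_eq 4 (by linarith [Real.log_pos (by norm_num : (1 : ℝ) < 2)]), Real.exp_neg,
      Real.exp_log (by norm_num)]
    norm_num
  have h4 := p_dup (n := 5) (by norm_num) (u := 1 / 2) (by norm_num [abs_le])
  norm_num at h4 h1 h2 h3 ⊢
  have h5 := p_five_neg_one
  rw [h3] at h2
  linarith

lemma Li_conj (n : ℕ) (z : ℂ) :
    Li n ((starRingEnd ℂ) z) = (starRingEnd ℂ) (Li n z) := by
  simp only [Li, Complex.conj_tsum, map_div₀, map_pow, Complex.conj_natCast]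

/-- On the imaginary axis `Re Li₅(z) = Li₅(z²) / 32`. -/
lemma Li_imag_re {z : ℂ} (hz : ‖z‖ ≤ 1) (hc : (starRingEnd ℂ) z = -z) {u : ℝ}
    (hu : z ^ 2 = (u : ℂ)) : (Li 5 z).re = p 5 u / 32 := by
  have h := congrArg Complex.re (Li_dup (n := 5) (by norm_num) hz)
  rw [← hc, Li_conj, hu, Li_ofReal, Complex.add_re, Complex.conj_re,
    show (2 / 2 ^ 5 : ℂ) = ((1 / 16 : ℝ) : ℂ) by push_cast; norm_num, ← Complex.ofReal_mul,
    Complex.ofReal_re] at h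
  linarith

end Ladder

theorem li5_ladder_C :
    (16 / 81) * (Li 5 (I / (Real.sqrt 8 : ℂ))).re - 32 * (Li 5 (-I / (Real.sqrt 2 : ℂ))).re
      - (7 / 9) * (Li 5 (1 / 2)).re
      + Real.log 2 ^ 5 / 432 - Real.pi ^ 2 * Real.log 2 ^ 3 / 648
      + Real.pi ^ 4 * Real.log 2 / 972 = (403 / 2592) * zeta5 := by
  have s8 : ((Real.sqrt 8 : ℝ) : ℂ) ^ 2 = 8 := by
    rw [← Complex.ofReal_pow, Real.sq_sqrt (by norm_num)]; norm_num
  have s2 : ((Real.sqrt 2 : ℝ) : ℂ) ^ 2 = 2 := by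
    rw [← Complex.ofReal_pow, Real.sq_sqrt (by norm_num)]; norm_num
  have n8 : ‖I / (Real.sqrt 8 : ℂ)‖ ≤ 1 := by
    rw [norm_div, Complex.norm_I, Complex.norm_real, Real.norm_of_nonneg (Real.sqrt_nonneg 8)]
    exact div_le_one_of_le₀ (Real.one_le_sqrt.2 (by norm_num)) (Real.sqrt_nonneg 8)
  have n2 : ‖-I / (Real.sqrt 2 : ℂ)‖ ≤ 1 := by
    rw [norm_div, norm_neg, Complex.norm_I, Complex.norm_real,
      Real.norm_of_nonneg (Real.sqrt_nonneg 2)]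
    exact div_le_one_of_le₀ (Real.one_le_sqrt.2 (by norm_num)) (Real.sqrt_nonneg 2)
  have h8 := Ladder.Li_imag_re n8 (by simp [neg_div]) (u := -1 / 8)
    (by rw [div_pow, s8, Complex.I_sq]; push_cast; ring)
  have h2 := Ladder.Li_imag_re n2 (by simp [neg_div]) (u := -1 / 2)
    (by rw [div_pow, s2, neg_sq, Complex.I_sq]; push_cast; ring)
  have h1 : (Li 5 (1 / 2)).re = Ladder.p 5 (1 / 2) := by
    have := Ladder.Li_ofReal 5 (1 / 2)
    push_cast at this
    rw [this, Complex.ofReal_re]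
  rw [h8, h2, h1]
  linarith [Ladder.ladder_real]
end

section
/- For every real t with |t| < 1/2, the generating function of B_n := Re{2^{n−1} Li_n((1+i)/2)} admits the hypergeometric evaluation 2t·∑_{k=1}^∞ Re( ((1+i)/2)^k ) / (k − 2t) = 1 − ∑_{m=0}^∞ [ (−t/2)_m · (1/2)_m ] / [ (1−t/2)_m · (1−t)_m ], i.e. 2∑_{n≥1} B_n t^n = 1 − ₃F₂(−t/2, 1/2, 1; 1−t/2, 1−t; 1). (Both series converge absolutely for |t| < 1/2.) -/
open Complex

/-- The rising factorial (Pochhammer symbol) `(a)_m = a(a+1)⋯(a+m−1)`. -/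
noncomputable def poch (a : ℝ) (m : ℕ) : ℝ := ∏ j ∈ Finset.range m, (a + j)

/-!
After cancelling the factor `t`, the claim is `2 S(t) = T(t)`, where
`S(t) = ∑_{k ≥ 1} Re(z^k) / (k - 2t)` with `z = (1+i)/2`, and
`T(t) = ∑_{m ≥ 1} (1/2)_m / ((1-t)_m (2m - t))`; both series converge for all `t < 1/2`.

Both sides satisfy the same first-order recurrence with step two,
`X(t) = r(t) - X(t-2) / 4` with `r` an explicit rational function. For `2 S` this is `z^4 = -1/4`
(`polySum_rec`); for `T` it is a creative-telescoping identity of Zeilberger type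
(`hypTerm_telescope`, `hypSum_rec`).
The difference `D = 2 S - T` therefore satisfies `D(t) = (-1/4)^n D(t - 2n)`.
Since the terms of both series decrease in absolute value as `t` decreases, `D` is bounded on
`(-∞, t]`, and letting `n → ∞` gives `D(t) = 0`.
-/

/-! ### Rising factorials -/

lemma poch_succ (a : ℝ) (m : ℕ) : poch a (m + 1) = poch a m * (a + m) := by
  simp [poch, Finset.prod_range_succ]

lemma poch_zero (a : ℝ) : poch a 0 = 1 := by simp [poch]

lemma poch_pos {a : ℝ} (ha : 0 < a) (m : ℕ) : 0 < poch a m :=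
  Finset.prod_pos fun j _ => by positivity

lemma poch_mono {a b : ℝ} (ha : 0 < a) (hab : a ≤ b) (m : ℕ) : poch a m ≤ poch b m :=
  Finset.prod_le_prod (fun j _ => by positivity) fun j _ => by linarith

lemma poch_succ_left (a : ℝ) (m : ℕ) : poch a (m + 1) = a * poch (a + 1) m := by
  induction m with
  | zero => simp [poch]
  | succ m ih =>
    rw [poch_succ, ih, poch_succ (a + 1)]
    push_cast
    ring

/-! ### The two series -/

/-- The ratio `(1/2)_m / (1-t)_m`. -/
noncomputable def pochRatio (t : ℝ) (m : ℕ) : ℝ := poch (1 / 2) m / poch (1 - t) m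

/-- The summand of `T(t)`, indexed from `0`: `(1/2)_{m+1} / ((1-t)_{m+1} (2(m+1) - t))`. -/
noncomputable def hypTerm (t : ℝ) (m : ℕ) : ℝ := pochRatio t (m + 1) / (2 * (m + 1) - t)

/-- The summand of `S(t)`, indexed from `0`: `Re(z^(k+1)) / (k + 1 - 2t)` with `z = (1+i)/2`. -/
noncomputable def polyTerm (t : ℝ) (k : ℕ) : ℝ :=
  (((1 + I) / 2) ^ (k + 1)).re / (((k + 1 : ℕ) : ℝ) - 2 * t)

/-! ### Decay of the ratio of rising factorials -/

lemma pochRatio_pos {t : ℝ} (ht : t < 1 / 2) (m : ℕ) : 0 < pochRatio t m :=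
  div_pos (poch_pos (by norm_num) m) (poch_pos (by linarith) m)

lemma pochRatio_succ (t : ℝ) (m : ℕ) :
    pochRatio t (m + 1) = pochRatio t m * ((m + 1 / 2) / (m + 1 - t)) := by
  rw [pochRatio, pochRatio, poch_succ, poch_succ, div_mul_div_comm]
  congr 2 <;> ring

lemma pochRatio_sub_two {t : ℝ} (ht : t < 1 / 2) (m : ℕ) :
    pochRatio (t - 2) m =
      pochRatio t m * ((1 - t) * (2 - t) / ((m + 1 - t) * (m + 2 - t))) := by
  have hm : (0 : ℝ) ≤ m := m.cast_nonneg
  have h1 := poch_pos (show 0 < 1 - t by linarith) m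
  have h3 := poch_pos (show 0 < 1 - (t - 2) by linarith) m
  have a1 : 0 < (m : ℝ) + 1 - t := by linarith
  have a2 : 0 < (m : ℝ) + 2 - t := by linarith
  have e1 := poch_succ_left (1 - t) (m + 1)
  rw [poch_succ_left (1 - t + 1) m, poch_succ, poch_succ,
    show 1 - t + 1 + 1 = 1 - (t - 2) by ring] at e1
  push_cast at e1
  rw [pochRatio, pochRatio]
  field_simp
  linear_combination poch (1 / 2) m * e1

/-- Summability follows from telescoping: with `h = pochRatio t`,
`h m - h (m+1) = h m * (1/2 - t) / (m + 1 - t)` and `h ≥ 0`. -/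
lemma summable_pochRatio_div {t : ℝ} (ht : t < 1 / 2) :
    Summable fun m : ℕ => pochRatio t m / (m + 1 - t) := by
  have key : ∀ m : ℕ, pochRatio t m / (m + 1 - t) =
      (pochRatio t m - pochRatio t (m + 1)) / (1 / 2 - t) := by
    intro m
    have hm : (0 : ℝ) ≤ m := m.cast_nonneg
    have a1 : (m : ℝ) + 1 - t ≠ 0 := by linarith
    have a2 : 1 / 2 - t ≠ 0 := by linarith
    rw [pochRatio_succ, div_eq_div_iff a1 a2, mul_div_assoc']
    field_simp
    ring
  refine summable_of_sum_range_le (c := 1 / (1 / 2 - t)) (fun m => ?_) fun n => ?_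
  · have hm : (0 : ℝ) ≤ m := m.cast_nonneg
    exact div_nonneg (pochRatio_pos ht m).le (by linarith)
  · simp_rw [key]
    rw [← Finset.sum_div, Finset.sum_range_sub']
    have h0 : pochRatio t 0 = 1 := by simp [pochRatio, poch_zero]
    have := pochRatio_pos ht n
    have h2 : 0 < 1 / 2 - t := by linarith
    gcongr
    linarith

lemma pochRatio_antitone {t : ℝ} (ht : t < 1 / 2) : Antitone (pochRatio t) := by
  refine antitone_nat_of_succ_le fun m => ?_
  have hm : (0 : ℝ) ≤ m := m.cast_nonneg
  rw [pochRatio_succ]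
  refine mul_le_of_le_one_right (pochRatio_pos ht m).le ?_
  rw [div_le_one (by linarith)]
  linarith

/-- A positive limit of the decreasing sequence `pochRatio t` would make the series
`∑ 1 / (m + 1 - t)` converge by `summable_pochRatio_div`. -/
lemma tendsto_pochRatio {t : ℝ} (ht : t < 1 / 2) :
    Filter.Tendsto (pochRatio t) Filter.atTop (nhds 0) := by
  have hbdd : BddBelow (Set.range (pochRatio t)) :=
    ⟨0, by rintro _ ⟨m, rfl⟩; exact (pochRatio_pos ht m).le⟩
  have hlim := tendsto_atTop_ciInf (pochRatio_antitone ht) hbdd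
  set L := ⨅ i, pochRatio t i
  have hL : 0 ≤ L := le_ciInf fun m => (pochRatio_pos ht m).le
  rcases hL.eq_or_lt with h | h
  · rwa [← h] at hlim
  · exfalso
    obtain ⟨N, hN⟩ := exists_nat_ge (1 - t)
    have hs : Summable fun m : ℕ => 1 / (((m + N : ℕ) : ℝ)) := by
      refine Summable.of_nonneg_of_le (fun m => by positivity) (fun m => ?_)
        ((summable_pochRatio_div ht).div_const L)
      have hm : (0 : ℝ) ≤ m := m.cast_nonneg
      have hle : L ≤ pochRatio t m := ciInf_le hbdd m
      have a1 : 0 < (m : ℝ) + 1 - t := by linarith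
      push_cast
      calc 1 / ((m : ℝ) + N) ≤ 1 / (m + 1 - t) :=
            one_div_le_one_div_of_le a1 (by linarith)
        _ = L / (m + 1 - t) / L := by field_simp
        _ ≤ pochRatio t m / (m + 1 - t) / L := by gcongr
    exact Real.not_summable_one_div_natCast ((summable_nat_add_iff N).1 hs)

/-! ### Convergence and monotonicity of the hypergeometric sum -/

lemma hypTerm_nonneg {t : ℝ} (ht : t < 1 / 2) (m : ℕ) : 0 ≤ hypTerm t m := by
  have hm : (0 : ℝ) ≤ m := m.cast_nonneg
  exact div_nonneg (pochRatio_pos ht _).le (by linarith)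

lemma hypTerm_mono {s t : ℝ} (hst : s ≤ t) (ht : t < 1 / 2) (m : ℕ) :
    hypTerm s m ≤ hypTerm t m := by
  have hm : (0 : ℝ) ≤ m := m.cast_nonneg
  have h1 := poch_pos (show (0 : ℝ) < 1 / 2 by norm_num) (m + 1)
  have h2 := poch_pos (show 0 < 1 - t by linarith) (m + 1)
  have h3 := poch_mono (show 0 < 1 - t by linarith) (show 1 - t ≤ 1 - s by linarith) (m + 1)
  exact div_le_div₀ (pochRatio_pos ht _).le (div_le_div_of_nonneg_left h1.le h2 h3)
    (by linarith) (by linarith)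

lemma summable_hypTerm {t : ℝ} (ht : t < 1 / 2) : Summable (hypTerm t) := by
  refine Summable.of_nonneg_of_le (hypTerm_nonneg ht) (fun m => ?_) (summable_pochRatio_div ht)
  have hm : (0 : ℝ) ≤ m := m.cast_nonneg
  exact div_le_div₀ (pochRatio_pos ht _).le (pochRatio_antitone ht m.le_succ)
    (by linarith) (by linarith)

/-! ### Recurrence for the hypergeometric sum -/

/-- The inhomogeneous term of the common recurrence: twice the sum of the first four terms
of the series `S(t)`. -/
noncomputable def recTerm (t : ℝ) : ℝ :=
  1 / (1 - 2 * t) - 1 / (2 * (3 - 2 * t)) - 1 / (2 * (4 - 2 * t))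

/-- The rational certificate of the telescoping identity is a quadratic polynomial in `m` divided
by `(2m - t)(m + 1 - t)`. The coefficients of `m^2` and `m` come from comparing powers of `m` in
that identity; the constant one is fixed by the value at `m = 1`, which has to produce
`recTerm t`. -/
noncomputable def certPoly (t x : ℝ) : ℝ :=
  -2 / (1 - 2 * t) * (x ^ 2 - 1) + (-(8 - 5 * t) / (3 - 2 * t) - t / (1 - 2 * t)) * (x - 1)
    - 2 * (1 - t) * (2 - t) ^ 2 * recTerm t

/-- The telescoping antidifference of `hypTerm t + hypTerm (t - 2) / 4`. -/
noncomputable def cert (t : ℝ) (m : ℕ) : ℝ :=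
  pochRatio t (m + 1) * (certPoly t (m + 1) / ((2 * (m + 1) - t) * (m + 2 - t)))

lemma hypTerm_telescope {t : ℝ} (ht : t < 1 / 2) (m : ℕ) :
    hypTerm t m + 1 / 4 * hypTerm (t - 2) m = cert t (m + 1) - cert t m := by
  have hm : (0 : ℝ) ≤ m := m.cast_nonneg
  rw [hypTerm, hypTerm, cert, cert, pochRatio_succ t (m + 1), pochRatio_sub_two ht]
  simp only [certPoly, recTerm]
  push_cast
  generalize pochRatio t (m + 1) = h
  generalize (m : ℝ) = x at hm
  have a1 : 2 * (x + 1) - t ≠ 0 := by linarith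
  have a2 : 2 * (x + 1) - (t - 2) ≠ 0 := by linarith
  have a3 : 2 * (x + 1 + 1) - t ≠ 0 := by linarith
  have a4 : x + 1 + 1 - t ≠ 0 := by linarith
  have a5 : x + 1 + 2 - t ≠ 0 := by linarith
  have a6 : x + 2 - t ≠ 0 := by linarith
  have a7 : 1 - 2 * t ≠ 0 := by linarith
  have a8 : 3 - 2 * t ≠ 0 := by linarith
  have a9 : 4 - 2 * t ≠ 0 := by linarith
  have b1 : 2 * (x + 1) - (t - 2) = 2 * (x + 1 + 1) - t := by ring
  have b2 : x + 1 + 1 - t = x + 2 - t := by ring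
  have b3 : 4 - 2 * t = 2 * (2 - t) := by ring
  have a10 : 2 - t ≠ 0 := by linarith
  rw [b1, b2, b3]
  field_simp
  ring

lemma tendsto_cert {t : ℝ} (ht : t < 1 / 2) :
    Filter.Tendsto (cert t) Filter.atTop (nhds 0) := by
  have h1 := (Filter.tendsto_add_atTop_iff_nat 1).2 (tendsto_pochRatio ht)
  -- The rational factor is bounded, because `2(m+1) - t` and `m + 2 - t` both exceed `m + 1`.
  set a := -2 / (1 - 2 * t)
  set b := -(8 - 5 * t) / (3 - 2 * t) - t / (1 - 2 * t)
  set c := 2 * (1 - t) * (2 - t) ^ 2 * recTerm t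
  refine squeeze_zero_norm (a := fun m => pochRatio t (m + 1) * (|a| + |b| + |c|))
    (fun m => ?_) (by simpa using h1.mul_const (|a| + |b| + |c|))
  have hm : (0 : ℝ) ≤ m := m.cast_nonneg
  have hp : certPoly t (m + 1) = a * (((m : ℝ) + 1) ^ 2 - 1) + b * ((m + 1) - 1) - c := rfl
  have d1 : (m : ℝ) + 1 ≤ 2 * (m + 1) - t := by linarith
  have d2 : (m : ℝ) + 1 ≤ m + 2 - t := by linarith
  have hd : ((m : ℝ) + 1) ^ 2 ≤ (2 * (m + 1) - t) * (m + 2 - t) := by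
    rw [sq]; exact mul_le_mul d1 d2 (by linarith) (by linarith)
  have hq : |certPoly t (m + 1)| ≤ (|a| + |b| + |c|) * ((m : ℝ) + 1) ^ 2 := by
    rw [hp]
    calc _ ≤ |a * (((m : ℝ) + 1) ^ 2 - 1)| + |b * ((m + 1) - 1)| + |c| := by
          refine (abs_sub _ _).trans ?_
          gcongr
          exact abs_add_le _ _
      _ = |a| * (((m : ℝ) + 1) ^ 2 - 1) + |b| * m + |c| := by
          rw [abs_mul, abs_mul, abs_of_nonneg (show 0 ≤ ((m : ℝ) + 1) ^ 2 - 1 by nlinarith),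
            add_sub_cancel_right, abs_of_nonneg hm]
      _ ≤ |a| * ((m : ℝ) + 1) ^ 2 + |b| * ((m : ℝ) + 1) ^ 2 + |c| * ((m : ℝ) + 1) ^ 2 := by
          have hc : |c| ≤ |c| * ((m : ℝ) + 1) ^ 2 :=
            le_mul_of_one_le_right (abs_nonneg c) (by nlinarith)
          refine add_le_add (add_le_add ?_ ?_) hc
          · exact mul_le_mul_of_nonneg_left (by linarith) (abs_nonneg a)
          · exact mul_le_mul_of_nonneg_left (by nlinarith) (abs_nonneg b)
      _ = _ := by ring
  have hpos : 0 < (2 * ((m : ℝ) + 1) - t) * (m + 2 - t) :=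
    lt_of_lt_of_le (by positivity) hd
  rw [cert, norm_mul, Real.norm_of_nonneg (pochRatio_pos ht _).le, norm_div,
    Real.norm_eq_abs, Real.norm_of_nonneg hpos.le]
  refine mul_le_mul_of_nonneg_left ?_ (pochRatio_pos ht _).le
  rw [div_le_iff₀ hpos]
  exact hq.trans (mul_le_mul_of_nonneg_left hd (by positivity))

lemma hypSum_rec {t : ℝ} (ht : t < 1 / 2) :
    ∑' m, hypTerm t m = recTerm t - 1 / 4 * ∑' m, hypTerm (t - 2) m := by
  have hs1 := (summable_hypTerm ht).hasSum
  have hs2 := (summable_hypTerm (show t - 2 < 1 / 2 by linarith)).hasSum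
  have h := (hs1.add (hs2.mul_left (1 / 4))).tendsto_sum_nat
  simp_rw [hypTerm_telescope ht, Finset.sum_range_sub] at h
  have h' := tendsto_nhds_unique h ((tendsto_cert ht).sub_const (cert t 0))
  have h0 : cert t 0 = -recTerm t := by
    have a1 : 1 - t ≠ 0 := by linarith
    have a2 : 2 - t ≠ 0 := by linarith
    simp only [cert, certPoly, pochRatio, poch_succ, poch_zero]
    norm_num
    field_simp
  rw [h0] at h'
  linarith

/-! ### Recurrence for the polylogarithmic sum -/

lemma norm_half_one_add_I : ‖(1 + I) / 2‖ < 1 := by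
  have h1 : ‖(1 + I) / 2‖ ^ 2 = 1 / 2 := by
    rw [← Complex.normSq_eq_norm_sq]
    simp [Complex.normSq_apply]
    norm_num
  nlinarith [norm_nonneg ((1 + I) / 2)]

/-- The denominator `k + 1 - 2t` is at least `1 - 2t`. -/
lemma abs_polyTerm_le {s t : ℝ} (hst : s ≤ t) (ht : t < 1 / 2) (k : ℕ) :
    ‖polyTerm s k‖ ≤ ‖(1 + I) / 2‖ ^ (k + 1) / (1 - 2 * t) := by
  have hk : (0 : ℝ) ≤ k := k.cast_nonneg
  have hd : 0 < ((k + 1 : ℕ) : ℝ) - 2 * s := by push_cast; linarith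
  rw [polyTerm, norm_div, Real.norm_of_nonneg hd.le, ← norm_pow]
  exact div_le_div₀ (norm_nonneg _) (Complex.abs_re_le_norm _) (by linarith)
    (by push_cast; linarith)

lemma summable_polyBound (t : ℝ) :
    Summable fun k : ℕ => ‖(1 + I) / 2‖ ^ (k + 1) / (1 - 2 * t) :=
  (((summable_nat_add_iff 1).2
    (summable_geometric_of_lt_one (norm_nonneg _) norm_half_one_add_I))).div_const _

lemma summable_polyTerm {t : ℝ} (ht : t < 1 / 2) : Summable (polyTerm t) :=
  Summable.of_norm_bounded (summable_polyBound t) (abs_polyTerm_le le_rfl ht)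

lemma half_one_add_I_sq : ((1 + I) / 2) ^ 2 = I / 2 := by
  linear_combination (1 / 4 : ℂ) * I_sq

lemma polyTerm_add_four (t : ℝ) (k : ℕ) :
    polyTerm t (k + 4) = -1 / 4 * polyTerm (t - 2) k := by
  have h4 : ((1 + I) / 2) ^ 4 = ((-1 / 4 : ℝ) : ℂ) := by
    rw [show 4 = 2 * 2 by rfl, pow_mul, half_one_add_I_sq]
    push_cast
    linear_combination (1 / 4 : ℂ) * I_sq
  rw [polyTerm, polyTerm, show k + 4 + 1 = 4 + (k + 1) by ring, pow_add, h4,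
    Complex.re_ofReal_mul, mul_div_assoc]
  congr 2
  push_cast
  ring

lemma polySum_rec {t : ℝ} (ht : t < 1 / 2) :
    2 * ∑' k, polyTerm t k = recTerm t - 1 / 4 * (2 * ∑' k, polyTerm (t - 2) k) := by
  rw [← (summable_polyTerm ht).sum_add_tsum_nat_add 4]
  simp_rw [polyTerm_add_four]
  rw [tsum_mul_left]
  have h3 : ((1 + I) / 2) ^ 3 = (I - 1) / 4 := by
    rw [pow_succ, half_one_add_I_sq]
    linear_combination (1 / 4 : ℂ) * I_sq
  have h4 : ((1 + I) / 2) ^ 4 = -1 / 4 := by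
    rw [pow_succ, h3]
    linear_combination (1 / 8 : ℂ) * I_sq
  have hfirst : 2 * ∑ k ∈ Finset.range 4, polyTerm t k = recTerm t := by
    simp only [Finset.sum_range_succ, Finset.sum_range_zero, polyTerm, recTerm]
    norm_num [half_one_add_I_sq, h3, h4]
    have a7 : 1 - 2 * t ≠ 0 := by linarith
    have a8 : 3 - 2 * t ≠ 0 := by linarith
    have a9 : 4 - 2 * t ≠ 0 := by linarith
    field_simp
    ring
  linarith

/-! ### Equality of the two sums -/

lemma two_mul_polySum_eq_hypSum {t : ℝ} (ht : t < 1 / 2) :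
    2 * ∑' k, polyTerm t k = ∑' m, hypTerm t m := by
  set D : ℝ → ℝ := fun s => 2 * ∑' k, polyTerm s k - ∑' m, hypTerm s m with hD
  have hrec : ∀ s, s < 1 / 2 → D s = -1 / 4 * D (s - 2) := by
    intro s hs
    simp only [hD]
    rw [polySum_rec hs, hypSum_rec hs]
    ring
  have hiter : ∀ n : ℕ, D t = (-1 / 4) ^ n * D (t - 2 * n) := by
    intro n
    induction n with
    | zero => simp
    | succ n ih =>
      have hn : (0 : ℝ) ≤ n := n.cast_nonneg
      rw [ih, hrec (t - 2 * n) (by linarith), pow_succ, mul_assoc]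
      congr 3
      push_cast
      ring
  set C := 2 * (∑' k : ℕ, ‖(1 + I) / 2‖ ^ (k + 1) / (1 - 2 * t)) + ∑' m, hypTerm t m
  have hbound : ∀ s, s ≤ t → |D s| ≤ C := by
    intro s hst
    have hs : s < 1 / 2 := by linarith
    have h1 : |∑' k, polyTerm s k| ≤ ∑' k : ℕ, ‖(1 + I) / 2‖ ^ (k + 1) / (1 - 2 * t) :=
      tsum_of_norm_bounded (summable_polyBound t).hasSum (abs_polyTerm_le hst ht)
    have h2 : ∑' m, hypTerm s m ≤ ∑' m, hypTerm t m :=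
      (summable_hypTerm hs).tsum_le_tsum (hypTerm_mono hst ht) (summable_hypTerm ht)
    have h3 : 0 ≤ ∑' m, hypTerm s m := tsum_nonneg (hypTerm_nonneg hs)
    rw [abs_le] at h1 ⊢
    constructor <;> simp only [hD] <;> linarith [h1.1, h1.2]
  have hle : ∀ n : ℕ, ‖D t‖ ≤ (1 / 4 : ℝ) ^ n * C := by
    intro n
    have hn : (0 : ℝ) ≤ n := n.cast_nonneg
    rw [hiter n, norm_mul, norm_pow]
    norm_num
    exact hbound _ (by linarith)
  have hlim : Filter.Tendsto (fun n : ℕ => (1 / 4 : ℝ) ^ n * C) Filter.atTop (nhds 0) := by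
    simpa using (tendsto_pow_atTop_nhds_zero_of_lt_one (by norm_num : (0 : ℝ) ≤ 1 / 4)
      (by norm_num)).mul_const C
  have h0 : D t = 0 := norm_le_zero_iff.1 (ge_of_tendsto' hlim hle)
  simp only [hD] at h0
  linarith

/-- Since `(-t/2)_{m+1} / (1-t/2)_{m+1} = -t / (2(m+1) - t)`, the terms of the
hypergeometric series after the first are `-t` times those of `T(t)`. -/
lemma threeFTwo_term_succ {t : ℝ} (ht : t < 1 / 2) (m : ℕ) :
    (poch (-t / 2) (m + 1) * poch (1 / 2) (m + 1)) /
      (poch (1 - t / 2) (m + 1) * poch (1 - t) (m + 1)) = -t * hypTerm t m := by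
  have hm : (0 : ℝ) ≤ m := m.cast_nonneg
  have h1 := poch_pos (show 0 < 1 - t / 2 by linarith) m
  have h2 := poch_pos (show 0 < 1 - t by linarith) (m + 1)
  have a1 : 2 * ((m : ℝ) + 1) - t ≠ 0 := by linarith
  have a2 : 1 - t / 2 + (m : ℝ) = (2 * (m + 1) - t) / 2 := by ring
  rw [hypTerm, pochRatio, poch_succ_left (-t / 2), poch_succ (1 - t / 2),
    show -t / 2 + 1 = 1 - t / 2 by ring, a2]
  generalize poch (1 - t / 2) m = p at h1
  field_simp

theorem B_generating_function_hypergeometric (t : ℝ) (ht : |t| < 1 / 2) :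
    2 * t * ∑' k : ℕ, (((1 + I) / 2) ^ (k + 1)).re / (((k + 1 : ℕ) : ℝ) - 2 * t) =
      1 - ∑' m : ℕ,
        (poch (-t / 2) m * poch (1 / 2) m) / (poch (1 - t / 2) m * poch (1 - t) m) := by
  have ht' : t < 1 / 2 := (abs_lt.1 ht).2
  have hmain := two_mul_polySum_eq_hypSum ht'
  have hsum : Summable fun m : ℕ =>
      (poch (-t / 2) m * poch (1 / 2) m) / (poch (1 - t / 2) m * poch (1 - t) m) := by
    rw [← summable_nat_add_iff 1]
    simp_rw [threeFTwo_term_succ ht']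
    exact (summable_hypTerm ht').mul_left _
  rw [hsum.tsum_eq_zero_add]
  simp_rw [threeFTwo_term_succ ht']
  rw [tsum_mul_left]
  simp only [poch_zero]
  change 2 * t * ∑' k, polyTerm t k = _
  linear_combination t * hmain
end
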